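/- arXiv:2605.21438 — 2 statements merged into one kernel-verified Lean document; each statement's English description precedes it below -/
import Mathlib

section
/- Let d > 2 be an integer and c₀ ∈ (0,1]. There exist δ_stab ∈ (0,1/10] and C_stab > 0, depending only on (d, c₀), such that for every admissible kernel J on ℤ^d with constant c₀ and every G ∈ 𝒢 with (J,G) satisfying Assumption G, for every β < β(δ_stab) and every β' ≤ β: ∑_{x ∈ ℤ^d : |x| ≤ ξ(β')} F_β(x) ≤ C_stab·χ(β'); equivalently, P_β[|X_1| ≤ ξ(β')] ≤ C_stab·χ(β')/χ(β). -/
open scoped ENNReal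

noncomputable section

namespace Blackbox

/-- Supremum norm of a lattice point. -/
def supNorm {d : ℕ} (x : Fin d → ℤ) : ℝ :=
  ((Finset.univ.sup fun i => (x i).natAbs : ℕ) : ℝ)

/-- Squared Euclidean norm of a lattice point. -/
def sqNorm {d : ℕ} (x : Fin d → ℤ) : ℝ :=
  ∑ i, ((x i : ℝ)) ^ 2

/-- Invariance under coordinate permutations and sign flips of individual coordinates. -/
def IsSymmFun {d : ℕ} {α : Type*} (f : (Fin d → ℤ) → α) : Prop :=
  ∀ (π : Equiv.Perm (Fin d)) (e : Fin d → Bool) (x : Fin d → ℤ),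
    f (fun i => (if e i then -1 else 1) * x (π i)) = f x

/-- First coordinate (dot product with `e₁`). -/
def e1 {d : ℕ} {α : Type*} [Zero α] (y : Fin d → α) : α :=
  if h : 0 < d then y ⟨0, h⟩ else 0

/-- An admissible kernel on `ℤ^d` with constant `c₀`. -/
structure AdmissibleKernel (d : ℕ) (c₀ : ℝ) where
  J : (Fin d → ℤ) → ℝ
  nonneg : ∀ x, 0 ≤ J x
  zero_at_zero : J 0 = 0
  summable : Summable J
  norm_one : ∑' x, J x = 1
  symm : IsSymmFun J
  R : ℝ
  R_ge_one : 1 ≤ R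
  range_le : ∀ x, 0 < J x → supNorm x ≤ R
  range_attained : ∃ x, 0 < J x ∧ supNorm x = R
  summable_sq : Summable fun x => sqNorm x * J x
  sigma_lower : c₀ * R ≤ Real.sqrt (∑' x, sqNorm x * J x)
  J_upper : ∀ x, J x ≤ c₀⁻¹ / R ^ d

/-- `σ_J`, the square root of the variance of the kernel. -/
def AdmissibleKernel.sigma {d : ℕ} {c₀ : ℝ} (K : AdmissibleKernel d c₀) : ℝ :=
  Real.sqrt (∑' x, sqNorm x * K.J x)

/-- A family `G ∈ 𝒢` together with an admissible kernel `J` such that `(J,G)` satisfies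
Assumption G (with error-term family `H`). -/
structure Model (d : ℕ) (c₀ : ℝ) where
  K : AdmissibleKernel d c₀
  G : ℝ → (Fin d → ℤ) → ℝ≥0∞
  βc : ℝ≥0∞
  βc_pos : 0 < βc
  init : ∀ x, G 0 x = if x = 0 then 1 else 0
  G' : ℝ → (Fin d → ℤ) → ℝ
  mono : ∀ (x : Fin d → ℤ) ⦃β₁ β₂ : ℝ⦄, 0 ≤ β₁ → β₁ ≤ β₂ →
    ENNReal.ofReal β₂ ≤ βc → G β₁ x ≤ G β₂ x
  deriv : ∀ (x : Fin d → ℤ) ⦃β : ℝ⦄, 0 ≤ β → ENNReal.ofReal β < βc →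
    HasDerivWithinAt (fun t => (G t x).toReal) (G' β x) (Set.Ici 0) β
  symm : ∀ β, IsSymmFun (G β)
  expDecay : ∀ ⦃β : ℝ⦄, 0 ≤ β → ENNReal.ofReal β < βc →
    ∃ C > (0:ℝ), ∃ c > (0:ℝ), ∀ x, G β x ≤ ENNReal.ofReal (C * Real.exp (-c * supNorm x))
  limit : βc ≠ ⊤ → ∀ x, G βc.toReal x = ⨆ β ∈ Set.Ico (0 : ℝ) βc.toReal, G β x
  I1 : ∀ ⦃β' β : ℝ⦄, 0 ≤ β' → β' ≤ β → ENNReal.ofReal β < βc →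
    ∀ x, G β x ≤ G β' x + ENNReal.ofReal (β - β') *
      ∑' p : (Fin d → ℤ) × (Fin d → ℤ),
        G β' p.1 * ENNReal.ofReal (K.J p.2) * G β (x - p.1 - p.2)
  H : ℝ → (Fin d → ℤ) → ℝ
  H_nonneg : ∀ β x, 0 ≤ H β x
  H_zero : ∀ x, H 0 x = 0
  H_symm : ∀ β x, H β (-x) = H β x
  H_cont : ∀ x, ContinuousOn (fun β => H β x)
    {β : ℝ | 0 ≤ β ∧ ENNReal.ofReal β < βc}
  H_expDecay : ∀ ⦃β : ℝ⦄, 0 ≤ β → ENNReal.ofReal β < βc →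
    ∃ C > (0:ℝ), ∃ c > (0:ℝ), ∀ x, H β x ≤ C * Real.exp (-c * supNorm x)
  I2 : ∀ ⦃β : ℝ⦄, 0 ≤ β → ENNReal.ofReal β < βc → ∀ x,
    (∑' p : (Fin d → ℤ) × (Fin d → ℤ),
      (G β p.1).toReal * (K.J p.2 - H β p.2) * (G β (x - p.1 - p.2)).toReal)
      ≤ G' β x

namespace Model

variable {d : ℕ} {c₀ : ℝ}

def sigma (M : Model d c₀) : ℝ := M.K.sigma

/-- `F_β = J * G_β`. -/
def F (M : Model d c₀) (β : ℝ) (x : Fin d → ℤ) : ℝ≥0∞ :=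
  ∑' y, ENNReal.ofReal (M.K.J y) * M.G β (x - y)

/-- The susceptibility `χ(β)`. -/
def chi (M : Model d c₀) (β : ℝ) : ℝ≥0∞ := ∑' x, M.G β x

/-- `ξ(β)²`. -/
def xiSq (M : Model d c₀) (β : ℝ) : ℝ≥0∞ :=
  (∑' x, ENNReal.ofReal (sqNorm x) * M.F β x) / M.chi β

/-- The correlation length of order two, `ξ(β)`. -/
def xi (M : Model d c₀) (β : ℝ) : ℝ := Real.sqrt (M.xiSq β).toReal

/-- The error term `E(β)`. -/
def E (M : Model d c₀) (β : ℝ) : ℝ≥0∞ :=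
  ⨆ t ∈ Set.Icc (0 : ℝ) β,
    (ENNReal.ofReal (∑' x, M.H t x) +
      ENNReal.ofReal (∑' x, sqNorm x * M.H t x) / M.xiSq t)

/-- `β(δ)`. -/
def betaOf (M : Model d c₀) (δ : ℝ) : ℝ :=
  sSup {β : ℝ | 0 ≤ β ∧ ENNReal.ofReal β < M.βc ∧ M.E β < ENNReal.ofReal δ}

/-- One-step distribution of the effective random walk at parameter `β`. -/
def effStep (M : Model d c₀) (β : ℝ) (y : Fin d → ℤ) : ℝ≥0∞ :=
  M.F β y / M.chi β

/-- `k`-step distribution of the effective random walk at parameter `β`. -/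
def effIter (M : Model d c₀) (β : ℝ) : ℕ → (Fin d → ℤ) → ℝ≥0∞
  | 0 => fun x => if x = 0 then 1 else 0
  | n + 1 => fun x => ∑' y, M.effStep β y * M.effIter β n (x - y)

/-- Moment generating function `M_β(s)` of the first coordinate of one step of the
effective random walk. -/
def Mgf (M : Model d c₀) (β s : ℝ) : ℝ≥0∞ :=
  ∑' y : Fin d → ℤ, M.effStep β y * ENNReal.ofReal (Real.exp (s / M.xi β * ((e1 y : ℤ) : ℝ)))

end Model

end Blackbox
open Blackbox

namespace Stab
open scoped ENNReal
variable {d : ℕ}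

def op (f u : (Fin d → ℤ) → ℝ≥0∞) (x : Fin d → ℤ) : ℝ≥0∞ := ∑' y, f y * u (x + y)
def mass (f : (Fin d → ℤ) → ℝ≥0∞) : ℝ≥0∞ := ∑' y, f y
def qE (x : Fin d → ℤ) : ℝ≥0∞ := ENNReal.ofReal (sqNorm x)
def Q (f : (Fin d → ℤ) → ℝ≥0∞) : ℝ≥0∞ := ∑' y, f y * qE y
def Q2 (f : (Fin d → ℤ) → ℝ≥0∞) : ℝ≥0∞ := ∑' y, f y * qE y ^ 2
def Even' (f : (Fin d → ℤ) → ℝ≥0∞) : Prop := ∀ x, f (-x) = f x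

lemma op_mono {f g u v : (Fin d → ℤ) → ℝ≥0∞} (h : ∀ x, f x ≤ g x) (h' : ∀ x, u x ≤ v x) (x) :
    op f u x ≤ op g v x := ENNReal.tsum_le_tsum fun y => mul_le_mul' (h y) (h' _)

lemma op_comm (f g u : (Fin d → ℤ) → ℝ≥0∞) : op f (op g u) = op g (op f u) := by
  funext x
  simp only [op, ← ENNReal.tsum_mul_left]
  rw [ENNReal.tsum_comm]
  refine tsum_congr fun y => tsum_congr fun z => ?_
  rw [add_right_comm]; ring

lemma op_add (f u v : (Fin d → ℤ) → ℝ≥0∞) (x) :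
    op f (fun y => u y + v y) x = op f u x + op f v x := by
  simp only [op, mul_add, ENNReal.tsum_add]

lemma op_const (f : (Fin d → ℤ) → ℝ≥0∞) (c : ℝ≥0∞) (x) :
    op f (fun _ => c) x = mass f * c := by
  simp only [op, mass, ENNReal.tsum_mul_right]

lemma op_cmul (f u : (Fin d → ℤ) → ℝ≥0∞) (c : ℝ≥0∞) (x) :
    op f (fun y => c * u y) x = c * op f u x := by
  simp only [op, ← ENNReal.tsum_mul_left]
  exact tsum_congr fun y => by ring

lemma op_smul (f u : (Fin d → ℤ) → ℝ≥0∞) (c : ℝ≥0∞) (x) :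
    op (fun y => c * f y) u x = c * op f u x := by
  simp only [op, ← ENNReal.tsum_mul_left]
  exact tsum_congr fun y => by ring

lemma op_zero_q (f : (Fin d → ℤ) → ℝ≥0∞) : op f qE 0 = Q f := by simp [op, Q]
lemma op_zero_q2 (f : (Fin d → ℤ) → ℝ≥0∞) : op f (fun y => qE y ^ 2) 0 = Q2 f := by
  simp [op, Q2]

lemma op_symm {f : (Fin d → ℤ) → ℝ≥0∞} (hf : Even' f) (u : (Fin d → ℤ) → ℝ≥0∞) (x) :
    2 * op f u x = ∑' y, f y * (u (x + y) + u (x - y)) := by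
  have h : op f u x = ∑' y, f y * u (x - y) := by
    unfold op
    rw [← (Equiv.neg (Fin d → ℤ)).tsum_eq]
    refine tsum_congr fun y => ?_
    simp [hf y, sub_eq_add_neg]
  simp only [mul_add, ENNReal.tsum_add]
  rw [← h, two_mul]; rfl

lemma sqNorm_nonneg (x : Fin d → ℤ) : 0 ≤ sqNorm x :=
  Finset.sum_nonneg fun i _ => sq_nonneg _

lemma sqNorm_par (x y : Fin d → ℤ) :
    sqNorm (x + y) + sqNorm (x - y) = 2 * sqNorm x + 2 * sqNorm y := by
  simp only [sqNorm, ← Finset.sum_add_distrib, Finset.mul_sum]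
  refine Finset.sum_congr rfl fun i _ => ?_
  simp; ring

lemma sqNorm_add (x y : Fin d → ℤ) :
    sqNorm (x + y) = sqNorm x + 2 * (∑ i, (x i : ℝ) * y i) + sqNorm y := by
  simp only [sqNorm, ← Finset.sum_add_distrib, Finset.mul_sum]
  refine Finset.sum_congr rfl fun i _ => ?_
  simp; ring

lemma sqNorm_par2 (x y : Fin d → ℤ) :
    sqNorm (x + y) ^ 2 + sqNorm (x - y) ^ 2 ≤
      2 * sqNorm x ^ 2 + 12 * (sqNorm x * sqNorm y) + 2 * sqNorm y ^ 2 := by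
  have h1 := sqNorm_add x y
  have h2 := sqNorm_par x y
  have h3 : (∑ i, (x i : ℝ) * y i) ^ 2 ≤ sqNorm x * sqNorm y :=
    Finset.sum_mul_sq_le_sq_mul_sq _ _ _
  have h4 : sqNorm (x - y) = 2 * sqNorm x + 2 * sqNorm y - sqNorm (x + y) := by linarith
  rw [h4, h1]
  nlinarith

lemma op_q {f : (Fin d → ℤ) → ℝ≥0∞} (hf : Even' f) (x) : op f qE x = mass f * qE x + Q f := by
  have h := op_symm hf qE x
  have h2 : ∀ y, qE (x + y) + qE (x - y) = 2 * (qE x + qE y) := by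
    intro y
    unfold qE
    rw [← ENNReal.ofReal_add (sqNorm_nonneg _) (sqNorm_nonneg _), sqNorm_par, ← mul_add,
      ENNReal.ofReal_mul (by norm_num), ENNReal.ofReal_add (sqNorm_nonneg _) (sqNorm_nonneg _)]
    simp
  have h3 : ∑' y, f y * (qE (x + y) + qE (x - y)) = 2 * (mass f * qE x + Q f) := by
    simp only [h2, mass, Q, ← ENNReal.tsum_mul_right, ← ENNReal.tsum_add, ← ENNReal.tsum_mul_left]
    exact tsum_congr fun y => by ring
  rw [h3] at h
  exact (ENNReal.mul_right_inj (by norm_num) (by norm_num)).1 h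

lemma op_q2 {f : (Fin d → ℤ) → ℝ≥0∞} (hf : Even' f) (x) :
    op f (fun y => qE y ^ 2) x ≤ mass f * qE x ^ 2 + 6 * Q f * qE x + Q2 f := by
  have h := op_symm hf (fun y => qE y ^ 2) x
  have h2 : ∀ y, qE (x + y) ^ 2 + qE (x - y) ^ 2 ≤
      2 * (qE x ^ 2 + 6 * (qE x * qE y) + qE y ^ 2) := by
    intro y
    have := ENNReal.ofReal_le_ofReal (sqNorm_par2 x y)
    have a := sqNorm_nonneg x
    have b := sqNorm_nonneg y
    have e1 := sqNorm_nonneg (x + y)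
    have e2 := sqNorm_nonneg (x - y)
    rw [ENNReal.ofReal_add (by positivity) (by positivity),
      ENNReal.ofReal_add (by positivity) (by positivity),
      ENNReal.ofReal_add (by positivity) (by positivity),
      ENNReal.ofReal_mul (by norm_num), ENNReal.ofReal_mul (by norm_num),
      ENNReal.ofReal_mul a, ENNReal.ofReal_mul (by norm_num),
      ENNReal.ofReal_pow e1, ENNReal.ofReal_pow e2, ENNReal.ofReal_pow a,
      ENNReal.ofReal_pow b] at this
    refine this.trans (le_of_eq ?_)
    simp only [qE, ENNReal.ofReal_ofNat]
    ring
  have h3 : ∑' y, f y * (qE (x + y) ^ 2 + qE (x - y) ^ 2) ≤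
      2 * (mass f * qE x ^ 2 + 6 * Q f * qE x + Q2 f) := by
    refine (ENNReal.tsum_le_tsum fun y => mul_le_mul' le_rfl (h2 y)).trans (le_of_eq ?_)
    simp only [mass, Q, Q2, ← ENNReal.tsum_mul_right, ← ENNReal.tsum_add, ← ENNReal.tsum_mul_left]
    exact tsum_congr fun y => by ring
  rw [← h] at h3
  exact (ENNReal.mul_le_mul_iff_right (by norm_num) (by norm_num)).1 h3

lemma op_conv (f g u : (Fin d → ℤ) → ℝ≥0∞) (z) :
    op (fun x => ∑' y, f y * g (x - y)) u z = op f (op g u) z := by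
  simp only [op, ← ENNReal.tsum_mul_left, ← ENNReal.tsum_mul_right]
  rw [ENNReal.tsum_comm]
  refine tsum_congr fun y => ?_
  rw [← (Equiv.addRight y).tsum_eq]
  refine tsum_congr fun x => ?_
  simp only [Equiv.coe_addRight, add_sub_cancel_right, mul_assoc]
  rw [add_assoc, add_comm x y]

lemma op_triple (f g h u : (Fin d → ℤ) → ℝ≥0∞) (z) :
    op (fun x => ∑' p : (Fin d → ℤ) × (Fin d → ℤ), f p.1 * g p.2 * h (x - p.1 - p.2)) u z
      = op f (op g (op h u)) z := by
  have : (fun x => ∑' p : (Fin d → ℤ) × (Fin d → ℤ), f p.1 * g p.2 * h (x - p.1 - p.2))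
     = fun x => ∑' y, f y * (fun x' => ∑' w, g w * h (x' - w)) (x - y) := by
    funext x
    rw [ENNReal.tsum_prod']
    refine tsum_congr fun y => ?_
    rw [← ENNReal.tsum_mul_left]
    exact tsum_congr fun w => by rw [mul_assoc]
  rw [this]
  refine (op_conv f (fun x' => ∑' w, g w * h (x' - w)) u z).trans ?_
  refine congrFun (congrArg (op f) ?_) z
  funext w
  exact op_conv g h u w

lemma even_of_symm {α : Type*} {f : (Fin d → ℤ) → α} (h : IsSymmFun f) (x) : f (-x) = f x := by
  have := h 1 (fun _ => true) x
  rw [← this]; congr 1; funext i; simp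

end Stab

namespace Stab
open scoped ENNReal
variable {d : ℕ}

lemma tsum_pi_prod (e : ℤ → ℝ≥0∞) : ∀ d : ℕ,
    ∑' x : Fin d → ℤ, ∏ i, e (x i) = (∑' n, e n) ^ d := by
  intro d
  induction d with
  | zero => simp [tsum_fintype]
  | succ n ih =>
    rw [← (Fin.consEquiv (fun _ : Fin (n+1) => ℤ)).tsum_eq, ENNReal.tsum_prod']
    simp only [Fin.consEquiv, Equiv.coe_fn_mk, Fin.prod_univ_succ, Fin.cons_zero, Fin.cons_succ]
    simp only [ENNReal.tsum_mul_left, ih, ENNReal.tsum_mul_right]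
    rw [pow_succ']

lemma abs_le_supNorm (x : Fin d → ℤ) (i : Fin d) : |(x i : ℝ)| ≤ supNorm x := by
  have h : (x i).natAbs ≤ Finset.univ.sup fun i => (x i).natAbs :=
    Finset.le_sup (f := fun i => (x i).natAbs) (Finset.mem_univ i)
  have : |(x i : ℝ)| = ((x i).natAbs : ℝ) := by
    rw [Nat.cast_natAbs]; simp
  rw [this]; unfold supNorm; exact_mod_cast h

lemma supNorm_nonneg (x : Fin d → ℤ) : 0 ≤ supNorm x := by unfold supNorm; positivity

lemma sqNorm_le (x : Fin d → ℤ) : sqNorm x ≤ d * supNorm x ^ 2 := by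
  unfold sqNorm
  calc _ ≤ ∑ _i : Fin d, supNorm x ^ 2 := Finset.sum_le_sum fun i _ => by
        rw [← sq_abs]; exact pow_le_pow_left₀ (abs_nonneg _) (abs_le_supNorm x i) 2
    _ = _ := by simp

lemma tsum_exp_lt_top {c : ℝ} (hc : 0 < c) :
    ∑' n : ℤ, ENNReal.ofReal (Real.exp (-c * |(n : ℝ)|)) < ∞ := by
  have h : Summable fun n : ℤ => Real.exp (-c * |(n : ℝ)|) := by
    have h0 : Summable fun n : ℕ => Real.exp (-c * n) := by
      have := Real.summable_exp_nat_mul_iff (a := -c)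
      simp only [mul_comm] at this ⊢
      exact this.2 (by linarith)
    refine Summable.of_nat_of_neg ?_ ?_
    · simpa using h0
    · simpa using h0
  rw [← ENNReal.ofReal_tsum_of_nonneg (fun _ => (Real.exp_pos _).le) h]
  exact ENNReal.ofReal_lt_top

lemma tsum_exp_sup_lt_top {c : ℝ} (hc : 0 < c) :
    ∑' x : Fin d → ℤ, ENNReal.ofReal (Real.exp (-c * supNorm x)) < ∞ := by
  rcases Nat.eq_zero_or_pos d with rfl | hd
  · simp [tsum_fintype]
  have hd' : (0:ℝ) < d := by exact_mod_cast hd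
  have h := tsum_pi_prod (fun n => ENNReal.ofReal (Real.exp (-(c/d) * |(n : ℝ)|))) d
  refine lt_of_le_of_lt (ENNReal.tsum_le_tsum fun x => ?_) (h.trans_lt
    (ENNReal.pow_lt_top (tsum_exp_lt_top (by positivity))))
  rw [← ENNReal.ofReal_prod_of_nonneg (fun _ _ => (Real.exp_pos _).le), ← Real.exp_sum]
  refine ENNReal.ofReal_le_ofReal (Real.exp_le_exp.2 ?_)
  rw [← Finset.mul_sum]
  have : ∑ i, |(x i : ℝ)| ≤ d * supNorm x := by
    calc _ ≤ ∑ _i : Fin d, supNorm x := Finset.sum_le_sum fun i _ => abs_le_supNorm x i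
      _ = _ := by simp
  have h2 : c / d * ∑ i, |(x i : ℝ)| ≤ c / d * (d * supNorm x) :=
    mul_le_mul_of_nonneg_left this (by positivity)
  have h3 : c / d * (d * supNorm x) = c * supNorm x := by field_simp
  linarith

lemma exp_decay_moments {f : (Fin d → ℤ) → ℝ≥0∞} {C c : ℝ} (hC : 0 < C) (hc : 0 < c)
    (h : ∀ x, f x ≤ ENNReal.ofReal (C * Real.exp (-c * supNorm x))) :
    ∑' x, f x * (1 + qE x + qE x ^ 2) < ∞ := by
  set A : ℝ := 1 + d * (2 / (c/2)^2) + d ^ 2 * (24 / (c/2)^4) with hA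
  have key : ∀ x : Fin d → ℤ, f x * (1 + qE x + qE x ^ 2) ≤
      ENNReal.ofReal (C * A) * ENNReal.ofReal (Real.exp (-(c/2) * supNorm x)) := by
    intro x
    have s0 := supNorm_nonneg x
    have q0 := sqNorm_nonneg x
    have ql := sqNorm_le x
    have : 1 + qE x + qE x ^ 2 = ENNReal.ofReal (1 + sqNorm x + sqNorm x ^ 2) := by
      rw [ENNReal.ofReal_add (by positivity) (by positivity),
        ENNReal.ofReal_add (by positivity) (by positivity), ENNReal.ofReal_pow q0]
      simp [qE]
    rw [this]
    refine (mul_le_mul' (h x) le_rfl).trans ?_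
    rw [← ENNReal.ofReal_mul (by positivity), ← ENNReal.ofReal_mul (by positivity)]
    refine ENNReal.ofReal_le_ofReal ?_
    set s := supNorm x
    have e1 : 1 ≤ Real.exp (c/2 * s) := Real.one_le_exp (by positivity)
    have e2 := Real.pow_div_factorial_le_exp (c/2*s) (by positivity) 2
    have e4 := Real.pow_div_factorial_le_exp (c/2*s) (by positivity) 4
    norm_num [Nat.factorial] at e2 e4
    have e2' : s ^ 2 ≤ 2 / (c/2)^2 * Real.exp (c/2*s) := by
      rw [div_mul_eq_mul_div, le_div_iff₀ (by positivity)]; nlinarith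
    have e4' : s ^ 4 ≤ 24 / (c/2)^4 * Real.exp (c/2*s) := by
      rw [div_mul_eq_mul_div, le_div_iff₀ (by positivity)]; nlinarith
    have e5 : 1 + sqNorm x + sqNorm x ^ 2 ≤ A * Real.exp (c/2*s) := by
      have : sqNorm x ^ 2 ≤ (d * s^2)^2 := pow_le_pow_left₀ q0 ql 2
      have h1 : (d:ℝ) * s^2 ≤ d * (2 / (c/2)^2 * Real.exp (c/2*s)) :=
        mul_le_mul_of_nonneg_left e2' (by positivity)
      have h2 : (d:ℝ)^2 * s^4 ≤ d^2 * (24 / (c/2)^4 * Real.exp (c/2*s)) :=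
        mul_le_mul_of_nonneg_left e4' (by positivity)
      rw [hA]; nlinarith
    have e6 : Real.exp (-c * s) * Real.exp (c/2*s) = Real.exp (-(c/2) * s) := by
      rw [← Real.exp_add]; congr 1; ring
    calc C * Real.exp (-c * s) * (1 + sqNorm x + sqNorm x ^ 2)
        ≤ C * Real.exp (-c * s) * (A * Real.exp (c/2*s)) :=
          mul_le_mul_of_nonneg_left e5 (by positivity)
      _ = C * A * (Real.exp (-c * s) * Real.exp (c/2*s)) := by ring
      _ = _ := by rw [e6]
  refine lt_of_le_of_lt (ENNReal.tsum_le_tsum key) ?_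
  rw [ENNReal.tsum_mul_left]
  exact ENNReal.mul_lt_top ENNReal.ofReal_lt_top (tsum_exp_sup_lt_top (by positivity))

lemma moments_fin {f : (Fin d → ℤ) → ℝ≥0∞} (h : ∑' x, f x * (1 + qE x + qE x ^ 2) < ∞) :
    mass f < ∞ ∧ Q f < ∞ ∧ Q2 f < ∞ := by
  refine ⟨lt_of_le_of_lt (ENNReal.tsum_le_tsum fun x => ?_) h,
    lt_of_le_of_lt (ENNReal.tsum_le_tsum fun x => ?_) h,
    lt_of_le_of_lt (ENNReal.tsum_le_tsum fun x => ?_) h⟩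
  · conv_lhs => rw [← mul_one (f x)]
    gcongr; rw [add_assoc]; exact le_self_add
  · gcongr; rw [add_right_comm]; exact le_add_self
  · gcongr; exact le_add_self

end Stab

namespace Stab
open scoped ENNReal
variable {d : ℕ} {c₀ : ℝ}

def JE (M : Model d c₀) (x : Fin d → ℤ) : ℝ≥0∞ := ENNReal.ofReal (M.K.J x)
def HE (M : Model d c₀) (t : ℝ) (x : Fin d → ℤ) : ℝ≥0∞ := ENNReal.ofReal (M.H t x)
def s2 (M : Model d c₀) : ℝ := ∑' x, sqNorm x * M.K.J x

lemma JE_even (M : Model d c₀) : Even' (JE M) := fun x => by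
  unfold JE; rw [even_of_symm M.K.symm]
lemma G_even (M : Model d c₀) (t : ℝ) : Even' (M.G t) := fun x => even_of_symm (M.symm t) x
lemma HE_even (M : Model d c₀) (t : ℝ) : Even' (HE M t) := fun x => by
  unfold HE; rw [M.H_symm]

/-- signed permutation as an equivalence -/
def sp (π : Equiv.Perm (Fin d)) (e : Fin d → Bool) : (Fin d → ℤ) ≃ (Fin d → ℤ) where
  toFun x := fun i => (if e i then -1 else 1) * x (π i)
  invFun x := fun i => (if e (π.symm i) then -1 else 1) * x (π.symm i)
  left_inv x := by funext i; simp only [Equiv.apply_symm_apply]; split <;> simp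
  right_inv x := by funext i; simp only [Equiv.symm_apply_apply]; split <;> simp

lemma F_symm (M : Model d c₀) (t : ℝ) : IsSymmFun (M.F t) := by
  intro π e x
  unfold Model.F
  rw [← (sp π e).tsum_eq]
  refine tsum_congr fun y => ?_
  congr 1
  · congr 1; exact M.K.symm π e y
  · rw [← M.symm t π e (x - y)]
    congr 1; funext i
    simp [sp, mul_sub]

lemma F_even (M : Model d c₀) (t : ℝ) : Even' (M.F t) := fun x => even_of_symm (F_symm M t) x

lemma mass_JE (M : Model d c₀) : mass (JE M) = 1 := by
  unfold mass JE
  rw [← ENNReal.ofReal_tsum_of_nonneg M.K.nonneg M.K.summable, M.K.norm_one]; simp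

lemma Q_JE (M : Model d c₀) : Q (JE M) = ENNReal.ofReal (s2 M) := by
  unfold Q s2
  rw [ENNReal.ofReal_tsum_of_nonneg (fun x => mul_nonneg (sqNorm_nonneg x) (M.K.nonneg x))
    M.K.summable_sq]
  refine tsum_congr fun x => ?_
  rw [ENNReal.ofReal_mul (sqNorm_nonneg x), mul_comm]; rfl

lemma s2_lower (M : Model d c₀) (hc : 0 < c₀) : (c₀ * M.K.R) ^ 2 ≤ s2 M := by
  have h := M.K.sigma_lower
  have h1 := M.K.R_ge_one
  exact (Real.le_sqrt' (by positivity)).1 h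

lemma s2_pos (M : Model d c₀) (hc : 0 < c₀) : 0 < s2 M :=
  lt_of_lt_of_le (by have := M.K.R_ge_one; positivity) (s2_lower M hc)

lemma Q2_JE (M : Model d c₀) : Q2 (JE M) ≤ ENNReal.ofReal ((d * M.K.R ^ 2) ^ 2) := by
  have : ∀ x, JE M x * qE x ^ 2 ≤ JE M x * ENNReal.ofReal ((d * M.K.R ^ 2) ^ 2) := by
    intro x
    rcases (M.K.nonneg x).eq_or_lt with h | h
    · simp [JE, ← h]
    · gcongr
      unfold qE
      rw [← ENNReal.ofReal_pow (sqNorm_nonneg x)]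
      refine ENNReal.ofReal_le_ofReal (pow_le_pow_left₀ (sqNorm_nonneg x) ?_ 2)
      refine (sqNorm_le x).trans ?_
      gcongr
      · exact supNorm_nonneg x
      · exact M.K.range_le x h
  refine (ENNReal.tsum_le_tsum this).trans ?_
  rw [ENNReal.tsum_mul_right, show ∑' x, JE M x = 1 from mass_JE M, one_mul]

lemma op_F (M : Model d c₀) (t : ℝ) (u) : op (M.F t) u = op (JE M) (op (M.G t) u) := by
  funext z; exact op_conv (JE M) (M.G t) u z

lemma op_mass_zero (f : (Fin d → ℤ) → ℝ≥0∞) : op f (fun _ => 1) 0 = mass f := by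
  rw [op_const, mul_one]

lemma mass_F (M : Model d c₀) (t : ℝ) : mass (M.F t) = M.chi t := by
  rw [← op_mass_zero, op_F]
  have : op (M.G t) (fun _ => 1) = fun _ => M.chi t := by
    funext x; rw [op_const, mul_one]; rfl
  rw [this, op_const, mass_JE, one_mul]

lemma op_affine {f : (Fin d → ℤ) → ℝ≥0∞} (hf : Even' f) (a b : ℝ≥0∞) :
    op f (fun y => a * qE y + b) = fun x => (a * mass f) * qE x + (a * Q f + mass f * b) := by
  funext x
  rw [op_add, op_cmul, op_q hf, op_const]; ring

lemma Q_F (M : Model d c₀) (t : ℝ) :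
    Q (M.F t) = Q (M.G t) + M.chi t * ENNReal.ofReal (s2 M) := by
  rw [← op_zero_q, op_F]
  have : op (M.G t) qE = fun x => M.chi t * qE x + Q (M.G t) := by
    funext x; rw [op_q (G_even M t)]; rfl
  rw [this, op_affine (JE_even M)]
  simp [qE, sqNorm, mass_JE, Q_JE, add_comm]

lemma Q2_F_le (M : Model d c₀) (t : ℝ) :
    Q2 (M.F t) ≤ M.chi t * Q2 (JE M) + (6 * Q (M.G t) * Q (JE M) + Q2 (M.G t)) := by
  rw [← op_zero_q2, op_F]
  refine (op_mono (fun _ => le_rfl) (fun x => op_q2 (G_even M t) x) 0).trans ?_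
  have : (fun x : Fin d → ℤ => mass (M.G t) * qE x ^ 2 + 6 * Q (M.G t) * qE x + Q2 (M.G t)) =
    fun x => (M.chi t * qE x ^ 2) + (6 * Q (M.G t) * qE x + Q2 (M.G t)) := by
    funext x; rw [add_assoc]; rfl
  rw [this, op_add, op_cmul, op_zero_q2, op_affine (JE_even M)]
  simp [qE, sqNorm, mass_JE]

lemma G_moments (M : Model d c₀) {t : ℝ} (h0 : 0 ≤ t) (h : ENNReal.ofReal t < M.βc) :
    M.chi t < ∞ ∧ Q (M.G t) < ∞ ∧ Q2 (M.G t) < ∞ := by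
  obtain ⟨C, hC, c, hc, H⟩ := M.expDecay h0 h
  exact moments_fin (exp_decay_moments hC hc H)

lemma H_moments (M : Model d c₀) {t : ℝ} (h0 : 0 ≤ t) (h : ENNReal.ofReal t < M.βc) :
    mass (HE M t) < ∞ ∧ Q (HE M t) < ∞ := by
  obtain ⟨C, hC, c, hc, H⟩ := M.H_expDecay h0 h
  have := moments_fin (exp_decay_moments (f := HE M t) hC hc
    (fun x => ENNReal.ofReal_le_ofReal (H x)))
  exact ⟨this.1, this.2.1⟩

lemma Q_F_lt (M : Model d c₀) {t : ℝ} (h0 : 0 ≤ t) (h : ENNReal.ofReal t < M.βc) :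
    Q (M.F t) < ∞ := by
  obtain ⟨a, b, c⟩ := G_moments M h0 h
  rw [Q_F]
  exact ENNReal.add_lt_top.2 ⟨b, ENNReal.mul_lt_top a ENNReal.ofReal_lt_top⟩

lemma Q2_F_lt (M : Model d c₀) {t : ℝ} (h0 : 0 ≤ t) (h : ENNReal.ofReal t < M.βc) :
    Q2 (M.F t) < ∞ := by
  obtain ⟨a, b, c⟩ := G_moments M h0 h
  refine lt_of_le_of_lt (Q2_F_le M t) ?_
  rw [Q_JE]
  refine ENNReal.add_lt_top.2 ⟨ENNReal.mul_lt_top a ((Q2_JE M).trans_lt ENNReal.ofReal_lt_top),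
    ENNReal.add_lt_top.2 ⟨ENNReal.mul_lt_top (ENNReal.mul_lt_top (by norm_num) b)
      ENNReal.ofReal_lt_top, c⟩⟩

lemma ofReal_lt_of_le (M : Model d c₀) {s t : ℝ} (h : s ≤ t) (ht : ENNReal.ofReal t < M.βc) :
    ENNReal.ofReal s < M.βc := (ENNReal.ofReal_le_ofReal h).trans_lt ht

lemma G_mono (M : Model d c₀) {s t : ℝ} (h0 : 0 ≤ s) (h : s ≤ t)
    (ht : ENNReal.ofReal t < M.βc) (x) : M.G s x ≤ M.G t x := M.mono x h0 h ht.le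

lemma F_mono (M : Model d c₀) {s t : ℝ} (h0 : 0 ≤ s) (h : s ≤ t)
    (ht : ENNReal.ofReal t < M.βc) (x) : M.F s x ≤ M.F t x :=
  ENNReal.tsum_le_tsum fun _ => mul_le_mul' le_rfl (G_mono M h0 h ht _)

lemma chi_zero (M : Model d c₀) : M.chi 0 = 1 := by
  unfold Model.chi; simp only [M.init]; simp

lemma one_le_chi (M : Model d c₀) {t : ℝ} (h0 : 0 ≤ t) (h : ENNReal.ofReal t < M.βc) :
    1 ≤ M.chi t := by
  rw [← chi_zero M]
  exact ENNReal.tsum_le_tsum fun x => G_mono M le_rfl h0 h x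

lemma F_zero (M : Model d c₀) : M.F 0 = JE M := by
  funext x
  unfold Model.F
  simp only [M.init]
  rw [tsum_eq_single x]
  · simp [JE]
  · intro y hy; rw [if_neg (by rw [sub_eq_zero]; exact hy.symm), mul_zero]

lemma qE_le_sq (x : Fin d → ℤ) : qE x ≤ qE x ^ 2 := by
  unfold qE
  rw [← ENNReal.ofReal_pow (sqNorm_nonneg x)]
  apply ENNReal.ofReal_le_ofReal
  have : sqNorm x = ((∑ i, (x i) ^ 2 : ℤ) : ℝ) := by simp [sqNorm]
  rw [this]
  have h0 : 0 ≤ ∑ i, (x i) ^ 2 := Finset.sum_nonneg fun i _ => sq_nonneg _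
  have : (∑ i, (x i) ^ 2) ≤ (∑ i, (x i) ^ 2) ^ 2 := by nlinarith [Int.le_self_sq (∑ i, (x i) ^ 2)]
  exact_mod_cast this

lemma Q_le_Q2 (f : (Fin d → ℤ) → ℝ≥0∞) : Q f ≤ Q2 f :=
  ENNReal.tsum_le_tsum fun _ => mul_le_mul' le_rfl (qE_le_sq _)

lemma upper_G (M : Model d c₀) {s t : ℝ} (h0 : 0 ≤ s) (h : s ≤ t)
    (ht : ENNReal.ofReal t < M.βc) (u) (z) :
    op (M.G t) u z ≤ op (M.G s) u z +
      ENNReal.ofReal (t - s) * op (M.G s) (op (JE M) (op (M.G t) u)) z := by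
  have := op_mono (u := u) (fun x => M.I1 h0 h ht x) (fun _ => le_rfl) z
  refine this.trans (le_of_eq ?_)
  have e : ∀ f g : (Fin d → ℤ) → ℝ≥0∞, op (fun x => f x + g x) u z = op f u z + op g u z := by
    intro f g; simp only [op, add_mul, ENNReal.tsum_add]
  rw [e, op_smul, ← op_triple]; rfl

lemma upper_F (M : Model d c₀) {s t : ℝ} (h0 : 0 ≤ s) (h : s ≤ t)
    (ht : ENNReal.ofReal t < M.βc) (u) (z) :
    op (M.F t) u z ≤ op (M.F s) u z +
      ENNReal.ofReal (t - s) * op (M.F s) (op (M.F t) u) z := by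
  have := upper_G M h0 h ht (op (JE M) u) z
  simp only [op_F]
  rw [op_comm (JE M) (M.G t) u, op_comm (JE M) (M.G s) u]
  refine this.trans (le_of_eq ?_)
  rw [op_comm (JE M) (M.G s)]

end Stab

namespace Stab
open scoped ENNReal Topology
open Filter
variable {d : ℕ} {c₀ : ℝ}

/-- right lower Dini derivative at least `c` -/
def LD (f : ℝ → ℝ) (t c : ℝ) : Prop := ∀ r < c, ∀ᶠ s in 𝓝[>] t, r * (s - t) ≤ f s - f t
/-- right upper Dini derivative at most `c` -/
def UD (f : ℝ → ℝ) (t c : ℝ) : Prop := ∀ r > c, ∀ᶠ s in 𝓝[>] t, f s - f t ≤ r * (s - t)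

lemma lower_dini (M : Model d c₀) {t b : ℝ} (h0 : 0 ≤ t) (htb : t < b)
    (hb : ENNReal.ofReal b < M.βc) (a : (Fin d → ℤ) → ℝ≥0∞) (ha0 : ∀ x, a x ≠ 0)
    (hat : ∀ x, a x ≠ ∞)
    (hW : ∀ s, 0 ≤ s → s ≤ b → op (M.G s) a 0 < ∞)
    (hA : op (M.G t) (op (JE M) (op (M.G t) a)) 0 < ∞)
    (hB : op (M.G t) (op (HE M t) (op (M.G t) a)) 0 < ∞) :
    LD (fun s => (op (M.G s) a 0).toReal) t
      ((op (M.G t) (op (JE M) (op (M.G t) a)) 0).toReal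
        - (op (M.G t) (op (HE M t) (op (M.G t) a)) 0).toReal) := by
  have ht : ENNReal.ofReal t < M.βc := ofReal_lt_of_le M htb.le hb
  have hG : ∀ s, 0 ≤ s → s ≤ b → ∀ x, M.G s x ≠ ∞ := by
    intro s hs hsb x
    obtain ⟨C, _, c, _, H⟩ := M.expDecay hs (ofReal_lt_of_le M hsb hb)
    exact ((H x).trans_lt ENNReal.ofReal_lt_top).ne
  have conv : ∀ (k : (Fin d → ℤ) → ℝ≥0∞), (∀ x, k x ≠ ∞) →
      op (M.G t) (op k (op (M.G t) a)) 0 < ∞ →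
      (∀ x, Summable fun p : (Fin d → ℤ) × (Fin d → ℤ) =>
        (M.G t p.1).toReal * (k p.2).toReal * (M.G t (x - p.1 - p.2)).toReal) ∧
      HasSum (fun x => (a x).toReal * ∑' p : (Fin d → ℤ) × (Fin d → ℤ),
        (M.G t p.1).toReal * (k p.2).toReal * (M.G t (x - p.1 - p.2)).toReal)
        (op (M.G t) (op k (op (M.G t) a)) 0).toReal := by
    intro k hk hfin
    rw [← op_triple] at hfin ⊢
    unfold op at hfin ⊢
    simp only [zero_add] at hfin ⊢
    have hx : ∀ x, (∑' p : (Fin d → ℤ) × (Fin d → ℤ),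
        M.G t p.1 * k p.2 * M.G t (x - p.1 - p.2)) ≠ ∞ := by
      intro x hx
      have := ENNReal.ne_top_of_tsum_ne_top hfin.ne x
      rw [hx, ENNReal.top_mul (ha0 x)] at this
      exact this rfl
    constructor
    · intro x
      have := ENNReal.summable_toReal (hx x)
      simpa only [ENNReal.toReal_mul] using this
    · have e : (fun x => (a x).toReal * ∑' p : (Fin d → ℤ) × (Fin d → ℤ),
          (M.G t p.1).toReal * (k p.2).toReal * (M.G t (x - p.1 - p.2)).toReal) =
          fun x => ((∑' p : (Fin d → ℤ) × (Fin d → ℤ),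
        M.G t p.1 * k p.2 * M.G t (x - p.1 - p.2)) * a x).toReal := by
        funext x
        rw [ENNReal.toReal_mul, ENNReal.tsum_toReal_eq, mul_comm]
        · simp only [ENNReal.toReal_mul]
        · intro p; exact ENNReal.ne_top_of_tsum_ne_top (hx x) p
      rw [e, ENNReal.tsum_toReal_eq (fun x => ENNReal.ne_top_of_tsum_ne_top hfin.ne x)]
      exact (ENNReal.summable_toReal hfin.ne).hasSum
  obtain ⟨sJ, hJ⟩ := conv (JE M) (fun _ => ENNReal.ofReal_ne_top) hA
  obtain ⟨sH, hH⟩ := conv (HE M t) (fun _ => ENNReal.ofReal_ne_top) hB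
  have hJr : ∀ y, (JE M y).toReal = M.K.J y := fun y => ENNReal.toReal_ofReal (M.K.nonneg y)
  have hHr : ∀ y, (HE M t y).toReal = M.H t y := fun y => ENNReal.toReal_ofReal (M.H_nonneg t y)
  have hD := hJ.sub hH
  intro r hr
  obtain ⟨S, hS⟩ := (hD.eventually (lt_mem_nhds hr)).exists
  have hle : ∀ x, (a x).toReal * (∑' p : (Fin d → ℤ) × (Fin d → ℤ),
        (M.G t p.1).toReal * (JE M p.2).toReal * (M.G t (x - p.1 - p.2)).toReal) -
      (a x).toReal * (∑' p : (Fin d → ℤ) × (Fin d → ℤ),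
        (M.G t p.1).toReal * (HE M t p.2).toReal * (M.G t (x - p.1 - p.2)).toReal)
      ≤ (a x).toReal * M.G' t x := by
    intro x
    rw [← mul_sub, ← (sJ x).tsum_sub (sH x)]
    refine mul_le_mul_of_nonneg_left ?_ ENNReal.toReal_nonneg
    refine le_trans (le_of_eq ?_) (M.I2 h0 ht x)
    refine tsum_congr fun p => ?_
    rw [hJr, hHr]; ring
  have hS' : r < ∑ x ∈ S, (a x).toReal * M.G' t x := hS.trans_le (Finset.sum_le_sum fun x _ => hle x)
  have hder : HasDerivWithinAt (fun s => ∑ x ∈ S, (a x).toReal * (M.G s x).toReal)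
      (∑ x ∈ S, (a x).toReal * M.G' t x) (Set.Ioi t) t := by
    refine HasDerivWithinAt.fun_sum fun x _ => ?_
    exact ((M.deriv x h0 ht).mono (fun y hy => h0.trans (le_of_lt hy))).const_mul _
  rw [hasDerivWithinAt_iff_tendsto_slope' (by simp)] at hder
  have hev := hder.eventually (lt_mem_nhds hS')
  filter_upwards [hev, Ioo_mem_nhdsGT htb] with s hs hsI
  have hst : 0 < s - t := sub_pos.2 hsI.1
  rw [slope_def_field, lt_div_iff₀ hst, ← Finset.sum_sub_distrib] at hs
  refine hs.le.trans ?_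
  have e : ∀ s, 0 ≤ s → s ≤ b → HasSum (fun x => (a x).toReal * (M.G s x).toReal)
      (op (M.G s) a 0).toReal := by
    intro s hs hsb
    have hfin := hW s hs hsb
    unfold op at hfin ⊢
    simp only [zero_add] at hfin ⊢
    rw [ENNReal.tsum_toReal_eq (fun x => ENNReal.ne_top_of_tsum_ne_top hfin.ne x)]
    have := (ENNReal.summable_toReal hfin.ne).hasSum
    simpa only [ENNReal.toReal_mul, mul_comm] using this
  have hsum := (e s (h0.trans hsI.1.le) hsI.2.le).sub (e t h0 htb.le)
  refine sum_le_hasSum S (fun x _ => ?_) hsum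
  rw [← mul_sub]
  refine mul_nonneg ENNReal.toReal_nonneg (sub_nonneg.2 ?_)
  exact ENNReal.toReal_mono (hG s (h0.trans hsI.1.le) hsI.2.le x)
    (G_mono M h0 hsI.1.le (ofReal_lt_of_le M hsI.2.le hb) x)

def rchi (M : Model d c₀) (t : ℝ) : ℝ := (M.chi t).toReal
def rV (M : Model d c₀) (t : ℝ) : ℝ := (Q (M.F t)).toReal
def rU (M : Model d c₀) (t : ℝ) : ℝ := (Q2 (M.F t)).toReal

lemma LD_mono {f : ℝ → ℝ} {t c c' : ℝ} (h : LD f t c) (hc : c' ≤ c) : LD f t c' :=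
  fun r hr => h r (hr.trans_le hc)

lemma op_G_one (M : Model d c₀) (t : ℝ) :
    op (M.G t) (fun _ => 1) = fun _ => M.chi t := by
  funext x; rw [op_const, mul_one]; rfl

/-- consequences of `E < δ` at time `t` -/
lemma err_bounds (M : Model d c₀) (hc : 0 < c₀) {t b δ : ℝ} (hδ : 0 < δ) (h0 : 0 ≤ t) (htb : t ≤ b)
    (hb : ENNReal.ofReal b < M.βc) (hE : M.E b < ENNReal.ofReal δ) :
    (mass (HE M t)).toReal + (Q (HE M t)).toReal * rchi M t / rV M t ≤ δ := by
  have ht := ofReal_lt_of_le M htb hb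
  obtain ⟨C, hC, c, hc', hH⟩ := M.H_expDecay h0 ht
  obtain ⟨f1, f2⟩ := H_moments M h0 ht
  have hr : ∀ y, (HE M t y).toReal = M.H t y := fun y => ENNReal.toReal_ofReal (M.H_nonneg t y)
  have e1 : ENNReal.ofReal (∑' x, M.H t x) = mass (HE M t) := by
    rw [← ENNReal.ofReal_toReal f1.ne]
    unfold mass
    rw [ENNReal.tsum_toReal_eq (fun x => ENNReal.ne_top_of_tsum_ne_top f1.ne x)]
    simp only [hr]
  have e2 : ENNReal.ofReal (∑' x, sqNorm x * M.H t x) = Q (HE M t) := by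
    rw [← ENNReal.ofReal_toReal f2.ne]
    unfold Q
    rw [ENNReal.tsum_toReal_eq (fun x => ENNReal.ne_top_of_tsum_ne_top f2.ne x)]
    simp only [ENNReal.toReal_mul, hr, qE, ENNReal.toReal_ofReal (sqNorm_nonneg _), mul_comm]
  have h1 : ENNReal.ofReal (∑' x, M.H t x) +
      ENNReal.ofReal (∑' x, sqNorm x * M.H t x) / M.xiSq t ≤ ENNReal.ofReal δ := by
    refine le_trans ?_ hE.le
    unfold Model.E
    exact le_iSup₂ (f := fun t (_ : t ∈ Set.Icc (0:ℝ) b) => ENNReal.ofReal (∑' x, M.H t x) +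
      ENNReal.ofReal (∑' x, sqNorm x * M.H t x) / M.xiSq t) t ⟨h0, htb⟩
  rw [e1, e2] at h1
  have h2 := ENNReal.toReal_mono ENNReal.ofReal_ne_top h1
  have h3 : Q (HE M t) / M.xiSq t ≠ ∞ := fun h => by
    rw [h] at h1; simp at h1
  rw [ENNReal.toReal_add f1.ne h3, ENNReal.toReal_ofReal hδ.le, ENNReal.toReal_div] at h2
  have e3 : (M.xiSq t).toReal = rV M t / rchi M t := by
    unfold Model.xiSq rV rchi
    rw [ENNReal.toReal_div]
    congr 2
    exact tsum_congr fun x => mul_comm _ _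
  rw [e3, div_div_eq_mul_div] at h2
  exact h2

lemma rchi_one_le (M : Model d c₀) {t : ℝ} (h0 : 0 ≤ t) (h : ENNReal.ofReal t < M.βc) :
    1 ≤ rchi M t := by
  have := ENNReal.toReal_mono (G_moments M h0 h).1.ne (one_le_chi M h0 h)
  rw [ENNReal.toReal_one] at this
  exact this

lemma rV_eq (M : Model d c₀) (hc : 0 < c₀) {t : ℝ} (h0 : 0 ≤ t) (h : ENNReal.ofReal t < M.βc) :
    rV M t = (Q (M.G t)).toReal + rchi M t * s2 M := by
  obtain ⟨a, b, _⟩ := G_moments M h0 h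
  unfold rV rchi
  rw [Q_F, ENNReal.toReal_add b.ne (ENNReal.mul_lt_top a ENNReal.ofReal_lt_top).ne,
    ENNReal.toReal_mul, ENNReal.toReal_ofReal (s2_pos M hc).le]

lemma rV_pos (M : Model d c₀) (hc : 0 < c₀) {t : ℝ} (h0 : 0 ≤ t) (h : ENNReal.ofReal t < M.βc) :
    0 < rV M t := by
  rw [rV_eq M hc h0 h]
  have := rchi_one_le M h0 h
  have := s2_pos M hc
  have : 0 ≤ (Q (M.G t)).toReal := ENNReal.toReal_nonneg
  positivity

lemma LD_chi (M : Model d c₀) (hc : 0 < c₀) {t b δ : ℝ} (hδ : 0 < δ) (h0 : 0 ≤ t) (htb : t < b)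
    (hb : ENNReal.ofReal b < M.βc) (hE : M.E b < ENNReal.ofReal δ) :
    LD (rchi M) t ((1 - δ) * rchi M t ^ 2) := by
  have ht := ofReal_lt_of_le M htb.le hb
  have hf := (G_moments M h0 ht).1
  obtain ⟨f1, f2⟩ := H_moments M h0 ht
  have eA : ∀ k : (Fin d → ℤ) → ℝ≥0∞, op (M.G t) (op k (op (M.G t) (fun _ => 1))) 0
      = M.chi t * (mass k * M.chi t) := by
    intro k
    have : op k (fun _ => M.chi t) = fun _ => mass k * M.chi t := by
      funext x; rw [op_const]
    rw [op_G_one, this, op_const]; rfl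
  have := lower_dini M h0 htb hb (fun _ => 1) (by simp) (by simp)
    (fun s hs hsb => by
      rw [op_G_one]; exact (G_moments M hs (ofReal_lt_of_le M hsb hb)).1)
    (by rw [eA, mass_JE, one_mul]; exact ENNReal.mul_lt_top hf hf)
    (by rw [eA]; exact ENNReal.mul_lt_top hf (ENNReal.mul_lt_top f1 hf))
  simp only [op_G_one, eA] at this
  rw [← op_G_one, eA, eA, mass_JE, one_mul] at this
  refine LD_mono this ?_
  simp only [ENNReal.toReal_mul]
  have hb1 := err_bounds M hc hδ h0 htb.le hb hE
  have : 0 ≤ (Q (HE M t)).toReal * rchi M t / rV M t :=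
    div_nonneg (mul_nonneg ENNReal.toReal_nonneg ENNReal.toReal_nonneg) ENNReal.toReal_nonneg
  change (1 - δ) * rchi M t ^ 2 ≤ rchi M t * rchi M t - rchi M t * (_ * rchi M t)
  nlinarith [sq_nonneg (rchi M t)]

lemma LD_V (M : Model d c₀) (hc : 0 < c₀) {t b δ : ℝ} (hδ : 0 < δ) (h0 : 0 ≤ t) (htb : t < b)
    (hb : ENNReal.ofReal b < M.βc) (hE : M.E b < ENNReal.ofReal δ) :
    LD (rV M) t ((2 - 2 * δ) * (rchi M t * rV M t)) := by
  have ht := ofReal_lt_of_le M htb.le hb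
  obtain ⟨g0, g1, _⟩ := G_moments M h0 ht
  obtain ⟨f1, f2⟩ := H_moments M h0 ht
  have hs := s2_pos M hc
  set σ : ℝ≥0∞ := ENNReal.ofReal (s2 M) with hσ
  have hσt : σ < ∞ := ENNReal.ofReal_lt_top
  have eW : ∀ s, op (M.G s) (fun y => 1 * qE y + σ) = fun x => M.chi s * qE x + Q (M.F s) := by
    intro s
    rw [op_affine (G_even M s), Q_F]; simp only [one_mul]; rfl
  have eW0 : ∀ s, op (M.G s) (fun y => 1 * qE y + σ) 0 = Q (M.F s) := by
    intro s; rw [eW]; simp [qE, sqNorm]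
  have eA : ∀ k : (Fin d → ℤ) → ℝ≥0∞, Even' k →
      op (M.G t) (op k (op (M.G t) (fun y => 1 * qE y + σ))) 0
      = M.chi t * mass k * Q (M.G t) + M.chi t * (M.chi t * Q k + mass k * Q (M.F t)) := by
    intro k hk
    rw [eW, op_affine hk, op_affine (G_even M t)]
    simp only [qE, sqNorm]
    simp
    rfl
  have hQF := Q_F_lt M h0 ht
  have fin : ∀ k : (Fin d → ℤ) → ℝ≥0∞, Even' k → mass k < ∞ → Q k < ∞ →
      M.chi t * mass k * Q (M.G t) < ∞ ∧ M.chi t * (M.chi t * Q k + mass k * Q (M.F t)) < ∞ ∧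
      M.chi t * Q k < ∞ ∧ mass k * Q (M.F t) < ∞ := by
    intro k hk a1 a2
    have b1 := ENNReal.mul_lt_top g0 a2
    have b2 := ENNReal.mul_lt_top a1 hQF
    exact ⟨ENNReal.mul_lt_top (ENNReal.mul_lt_top g0 a1) g1,
      ENNReal.mul_lt_top g0 (ENNReal.add_lt_top.2 ⟨b1, b2⟩), b1, b2⟩
  have real : ∀ k : (Fin d → ℤ) → ℝ≥0∞, Even' k → mass k < ∞ → Q k < ∞ →
      (M.chi t * mass k * Q (M.G t) + M.chi t * (M.chi t * Q k + mass k * Q (M.F t))).toReal =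
      rchi M t * (mass k).toReal * (Q (M.G t)).toReal + rchi M t * (rchi M t * (Q k).toReal +
        (mass k).toReal * rV M t) := by
    intro k hk a1 a2
    obtain ⟨b1, b2, b3, b4⟩ := fin k hk a1 a2
    rw [ENNReal.toReal_add b1.ne b2.ne]
    simp only [ENNReal.toReal_mul]
    rw [ENNReal.toReal_add b3.ne b4.ne]
    simp only [ENNReal.toReal_mul]
    rfl
  have mJ : mass (JE M) < ∞ := by rw [mass_JE]; simp
  have qJ : Q (JE M) < ∞ := by rw [Q_JE]; exact hσt
  have := lower_dini M h0 htb hb (fun y => 1 * qE y + σ)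
    (fun x => by simp only [ne_eq, add_eq_zero, not_and]; intro _; simp [hσ, hs])
    (fun x => by simp [qE, hσ])
    (fun s hs hsb => by
      rw [eW0]; exact Q_F_lt M hs (ofReal_lt_of_le M hsb hb))
    (by rw [eA _ (JE_even M)]
        have := fin _ (JE_even M) mJ qJ
        exact ENNReal.add_lt_top.2 ⟨this.1, this.2.1⟩)
    (by rw [eA _ (HE_even M t)]
        have := fin _ (HE_even M t) f1 f2
        exact ENNReal.add_lt_top.2 ⟨this.1, this.2.1⟩)
  rw [eA _ (JE_even M), eA _ (HE_even M t), real _ (JE_even M) mJ qJ,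
    real _ (HE_even M t) f1 f2] at this
  simp only [eW0] at this
  refine LD_mono this ?_
  rw [mass_JE, Q_JE, ENNReal.toReal_ofReal hs.le, ENNReal.toReal_one]
  have hb1 := err_bounds M hc hδ h0 htb.le hb hE
  have hV := rV_eq M hc h0 ht
  have hVp := rV_pos M hc h0 ht
  have hchi := rchi_one_le M h0 ht
  set m := (mass (HE M t)).toReal
  set qh := (Q (HE M t)).toReal
  set g := (Q (M.G t)).toReal
  set v := rV M t
  set c := rchi M t
  have hm : 0 ≤ m := ENNReal.toReal_nonneg
  have hg : g ≤ v := by rw [hV]; nlinarith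
  have h1 : m * v + qh * c ≤ δ * v := by
    have := mul_le_mul_of_nonneg_right hb1 hVp.le
    rwa [add_mul, div_mul_cancel₀ _ hVp.ne'] at this
  have h2 : m * v ≤ δ * v := by
    have : 0 ≤ qh * c := mul_nonneg ENNReal.toReal_nonneg (by linarith)
    linarith
  have h3 : m * g ≤ m * v := mul_le_mul_of_nonneg_left hg hm
  have h4 : g = v - c * s2 M := by linarith
  have h5 : c * (m * g + (c * qh + m * v)) ≤ c * (2 * δ * v) :=
    mul_le_mul_of_nonneg_left (by nlinarith) (by linarith)
  have h6 : c * g = c * v - c * (c * s2 M) := by rw [h4]; ring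
  nlinarith

end Stab

namespace Stab
open scoped ENNReal Topology
open Filter

lemma UD_add {f g : ℝ → ℝ} {t a b : ℝ} (hf : UD f t a) (hg : UD g t b) :
    UD (fun s => f s + g s) t (a + b) := by
  intro r hr
  have h1 := hf (a + (r - (a + b)) / 2) (by linarith)
  have h2 := hg (b + (r - (a + b)) / 2) (by linarith)
  filter_upwards [h1, h2] with s h1 h2
  nlinarith

lemma LD_neg {f : ℝ → ℝ} {t a : ℝ} (hf : LD f t a) : UD (fun s => - f s) t (-a) := by
  intro r hr
  filter_upwards [hf (-r) (by linarith)] with s h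
  linarith

lemma UD_cmul {f : ℝ → ℝ} {t a c : ℝ} (hc : 0 < c) (hf : UD f t a) :
    UD (fun s => c * f s) t (c * a) := by
  intro r hr
  have := hf (r / c) (by rwa [gt_iff_lt, lt_div_iff₀ hc, mul_comm])
  filter_upwards [this] with s h
  have := mul_le_mul_of_nonneg_left h hc.le
  rw [← mul_assoc, mul_div_cancel₀ _ hc.ne'] at this
  linarith

lemma UD_of_tendsto {f K : ℝ → ℝ} {t c : ℝ} (h : ∀ᶠ s in 𝓝[>] t, f s - f t ≤ (s - t) * K s)
    (hK : Tendsto K (𝓝[>] t) (𝓝 c)) : UD f t c := by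
  intro r hr
  filter_upwards [h, hK.eventually (gt_mem_nhds hr), self_mem_nhdsWithin] with s h1 h2 h3
  have : 0 < s - t := sub_pos.2 h3
  nlinarith

lemma UD_log {f : ℝ → ℝ} {t c : ℝ} (hp : 0 < f t) (hps : ∀ᶠ s in 𝓝[>] t, 0 < f s)
    (h : UD f t c) : UD (fun s => Real.log (f s)) t (c / f t) := by
  intro r hr
  have := h (r * f t) (by rwa [gt_iff_lt, div_lt_iff₀ hp] at hr)
  filter_upwards [this, hps] with s h1 h2
  rw [← Real.log_div h2.ne' hp.ne']
  refine (Real.log_le_sub_one_of_pos (div_pos h2 hp)).trans ?_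
  rw [div_sub_one hp.ne', div_le_iff₀ hp]
  linarith

lemma LD_log {f : ℝ → ℝ} {t c : ℝ} (hp : 0 < f t) (hc : 0 < c)
    (hcont : Tendsto f (𝓝[>] t) (𝓝 (f t)))
    (h : LD f t c) : LD (fun s => Real.log (f s)) t (c / f t) := by
  intro r hr
  rw [lt_div_iff₀ hp] at hr
  obtain ⟨c', hc1, hc2⟩ := exists_between (max_lt hr hc)
  have hc0 : 0 < c' := (le_max_right _ _).trans_lt hc1
  have hrc : r * f t < c' := (le_max_left _ _).trans_lt hc1
  have h3 : ∀ᶠ s in 𝓝[>] t, r * f s < c' :=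
    (hcont.const_mul r).eventually (gt_mem_nhds hrc)
  filter_upwards [h c' hc2, hcont.eventually (lt_mem_nhds hp), h3, self_mem_nhdsWithin]
    with s h1 h2 h3 h4
  have h4' : 0 < s - t := sub_pos.2 h4
  have := Real.log_le_sub_one_of_pos (div_pos hp h2)
  rw [Real.log_div hp.ne' h2.ne', div_sub_one h2.ne', le_div_iff₀ h2] at this
  have : r * (s - t) * f s ≤ (Real.log (f s) - Real.log (f t)) * f s := by nlinarith
  exact le_of_mul_le_mul_right this h2

lemma UD_inv {f : ℝ → ℝ} {t c : ℝ} (hp : 0 < f t)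
    (hcont : Tendsto f (𝓝[>] t) (𝓝 (f t)))
    (h : LD f t (c * f t ^ 2)) (hc : 0 < c) : UD (fun s => (f s)⁻¹) t (-c) := by
  intro r hr
  obtain ⟨c', h1, h2⟩ := exists_between (max_lt (show -r < c by linarith) hc)
  have hc0 : 0 < c' := (le_max_right _ _).trans_lt h1
  have hrc : -r < c' := (le_max_left _ _).trans_lt h1
  have h3 : ∀ᶠ s in 𝓝[>] t, -r * (f s * f t) < c' * f t ^ 2 := by
    have : Tendsto (fun s => -r * (f s * f t)) (𝓝[>] t) (𝓝 (-r * (f t * f t))) :=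
      (hcont.mul_const _).const_mul _
    exact this.eventually (gt_mem_nhds (by nlinarith [mul_pos hp hp]))
  have h5 : c' * f t ^ 2 < c * f t ^ 2 := by
    have : 0 < f t ^ 2 := by positivity
    nlinarith
  filter_upwards [h _ h5, hcont.eventually (lt_mem_nhds hp), h3, self_mem_nhdsWithin]
    with s g1 g2 g3 g4
  have g4' : 0 < s - t := sub_pos.2 g4
  have : (f s)⁻¹ - (f t)⁻¹ = -(f s - f t) / (f s * f t) := by field_simp; ring
  rw [this, div_le_iff₀ (by positivity)]
  nlinarith

lemma antitone_of_UD {f : ℝ → ℝ} {a b : ℝ} (hab : a ≤ b) (hf : ContinuousOn f (Set.Icc a b))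
    (h : ∀ t ∈ Set.Ico a b, UD f t 0) : f b ≤ f a := by
  refine image_le_of_liminf_slope_right_le_deriv_boundary (B := fun _ => f a) (B' := fun _ => 0)
    hf le_rfl continuousOn_const (fun x _ => hasDerivWithinAt_const _ _ _) ?_ (Set.right_mem_Icc.2 hab)
  intro x hx r hr
  apply Eventually.frequently
  filter_upwards [h x hx (r / 2) (by simpa using hr), self_mem_nhdsWithin] with s h1 h2
  have : 0 < s - x := sub_pos.2 h2
  rw [slope_def_field, div_lt_iff₀ this]
  nlinarith

lemma barrier_of_UD {f f' : ℝ → ℝ} {a b C : ℝ} (hab : a ≤ b) (hf : ContinuousOn f (Set.Icc a b))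
    (ha : f a ≤ C) (h : ∀ t ∈ Set.Ico a b, UD f t (f' t))
    (hC : ∀ t ∈ Set.Ico a b, f t = C → f' t < 0) : f b ≤ C := by
  refine image_le_of_liminf_slope_right_lt_deriv_boundary' (f' := f') (B := fun _ => C)
    (B' := fun _ => 0)
    hf ?_ ha continuousOn_const (fun x _ => hasDerivWithinAt_const _ _ _) hC
      (Set.right_mem_Icc.2 hab)
  intro x hx r hr
  apply Eventually.frequently
  filter_upwards [h x hx ((f' x + r) / 2) (by linarith), self_mem_nhdsWithin] with s h1 h2
  have : 0 < s - x := sub_pos.2 h2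
  rw [slope_def_field, div_lt_iff₀ this]
  nlinarith

structure Sys (χ V U : ℝ → ℝ) (b δ : ℝ) : Prop where
  b0 : 0 ≤ b
  d0 : 0 < δ
  d1 : δ ≤ 1 / 10
  one : ∀ t ∈ Set.Icc 0 b, 1 ≤ χ t
  vp : ∀ t ∈ Set.Icc 0 b, 0 < V t
  up : ∀ t ∈ Set.Icc 0 b, 0 < U t
  mχ : MonotoneOn χ (Set.Icc 0 b)
  mV : MonotoneOn V (Set.Icc 0 b)
  mU : MonotoneOn U (Set.Icc 0 b)
  iχ : ∀ s t, 0 ≤ s → s ≤ t → t ≤ b → χ t ≤ χ s + (t - s) * (χ s * χ t)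
  iV : ∀ s t, 0 ≤ s → s ≤ t → t ≤ b → V t ≤ V s + (t - s) * (χ s * V t + χ t * V s)
  iU : ∀ s t, 0 ≤ s → s ≤ t → t ≤ b →
    U t ≤ U s + (t - s) * (χ s * U t + 6 * (V s * V t) + χ t * U s)
  lχ : ∀ t ∈ Set.Ico 0 b, LD χ t ((1 - δ) * χ t ^ 2)
  lV : ∀ t ∈ Set.Ico 0 b, LD V t ((2 - 2 * δ) * (χ t * V t))

lemma cont_of_lip {f : ℝ → ℝ} {b C : ℝ} (hm : MonotoneOn f (Set.Icc 0 b))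
    (h : ∀ s t, 0 ≤ s → s ≤ t → t ≤ b → f t ≤ f s + (t - s) * C) :
    ContinuousOn f (Set.Icc 0 b) := by
  have key : ∀ s ∈ Set.Icc 0 b, ∀ t ∈ Set.Icc 0 b, s ≤ t → |f s - f t| ≤ |C| * |s - t| := by
    intro s hs t ht hst
    have h1 := h s t hs.1 hst ht.2
    have h2 := hm hs ht hst
    rw [abs_sub_comm (f s), abs_of_nonneg (show 0 ≤ f t - f s by linarith), abs_sub_comm s t,
      abs_of_nonneg (show 0 ≤ t - s by linarith)]
    nlinarith [le_abs_self C]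
  have : LipschitzOnWith (Real.toNNReal |C|) f (Set.Icc 0 b) := by
    apply LipschitzOnWith.of_dist_le_mul
    intro s hs t ht
    rw [Real.coe_toNNReal _ (abs_nonneg C), Real.dist_eq, Real.dist_eq]
    rcases le_total s t with hst | hst
    · exact key s hs t ht hst
    · rw [abs_sub_comm, abs_sub_comm s t]; exact key t ht s hs hst
  exact this.continuousOn

namespace Sys
variable {χ V U : ℝ → ℝ} {b δ : ℝ}

lemma cχ (S : Sys χ V U b δ) : ContinuousOn χ (Set.Icc 0 b) := by
  refine cont_of_lip (C := χ b * χ b) S.mχ fun s t hs hst ht => (S.iχ s t hs hst ht).trans ?_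
  have is : s ∈ Set.Icc 0 b := ⟨hs, hst.trans ht⟩
  have it : t ∈ Set.Icc 0 b := ⟨hs.trans hst, ht⟩
  have ib : b ∈ Set.Icc 0 b := ⟨S.b0, le_rfl⟩
  have h1 := S.mχ is ib is.2
  have h2 := S.mχ it ib it.2
  have := S.one s is
  have := S.one t it
  have : 0 ≤ t - s := by linarith
  gcongr <;> linarith

lemma cV (S : Sys χ V U b δ) : ContinuousOn V (Set.Icc 0 b) := by
  refine cont_of_lip (C := χ b * V b + χ b * V b) S.mV
    fun s t hs hst ht => (S.iV s t hs hst ht).trans ?_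
  have is : s ∈ Set.Icc 0 b := ⟨hs, hst.trans ht⟩
  have it : t ∈ Set.Icc 0 b := ⟨hs.trans hst, ht⟩
  have ib : b ∈ Set.Icc 0 b := ⟨S.b0, le_rfl⟩
  have h1 := S.mχ is ib is.2
  have h2 := S.mχ it ib it.2
  have h3 := S.mV is ib is.2
  have h4 := S.mV it ib it.2
  have := S.one s is
  have := S.one t it
  have := S.vp s is
  have := S.vp t it
  have : 0 ≤ t - s := by linarith
  gcongr <;> linarith

lemma cU (S : Sys χ V U b δ) : ContinuousOn U (Set.Icc 0 b) := by
  refine cont_of_lip (C := χ b * U b + 6 * (V b * V b) + χ b * U b) S.mU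
    fun s t hs hst ht => (S.iU s t hs hst ht).trans ?_
  have is : s ∈ Set.Icc 0 b := ⟨hs, hst.trans ht⟩
  have it : t ∈ Set.Icc 0 b := ⟨hs.trans hst, ht⟩
  have ib : b ∈ Set.Icc 0 b := ⟨S.b0, le_rfl⟩
  have h1 := S.mχ is ib is.2
  have h2 := S.mχ it ib it.2
  have h3 := S.mV is ib is.2
  have h4 := S.mV it ib it.2
  have h5 := S.mU is ib is.2
  have h6 := S.mU it ib it.2
  have := S.one s is
  have := S.one t it
  have := S.vp s is
  have := S.vp t it
  have := S.up s is
  have := S.up t it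
  have : 0 ≤ t - s := by linarith
  gcongr <;> linarith

lemma rlim {f : ℝ → ℝ} {t : ℝ} (hf : ContinuousOn f (Set.Icc 0 b)) (ht : t ∈ Set.Ico 0 b) :
    Tendsto f (𝓝[>] t) (𝓝 (f t)) := by
  have h1 := hf t ⟨ht.1, ht.2.le⟩
  refine h1.tendsto.mono_left ?_
  refine nhdsWithin_le_of_mem ?_
  filter_upwards [Ioo_mem_nhdsGT ht.2] with s hs
  exact ⟨ht.1.trans hs.1.le, hs.2.le⟩

lemma uχ (S : Sys χ V U b δ) {t : ℝ} (ht : t ∈ Set.Ico 0 b) : UD χ t (χ t * χ t) := by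
  refine UD_of_tendsto (K := fun s => χ t * χ s) ?_ ((rlim S.cχ ht).const_mul _)
  filter_upwards [Ioo_mem_nhdsGT ht.2] with s hs
  have := S.iχ t s ht.1 hs.1.le hs.2.le
  linarith

lemma uU (S : Sys χ V U b δ) {t : ℝ} (ht : t ∈ Set.Ico 0 b) :
    UD U t (χ t * U t + 6 * (V t * V t) + χ t * U t) := by
  refine UD_of_tendsto (K := fun s => χ t * U s + 6 * (V t * V s) + χ s * U t) ?_
    ((((rlim S.cU ht).const_mul _).add (((rlim S.cV ht).const_mul _).const_mul _)).add
      ((rlim S.cχ ht).mul_const _))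
  filter_upwards [Ioo_mem_nhdsGT ht.2] with s hs
  have := S.iU t s ht.1 hs.1.le hs.2.le
  linarith

lemma Z_le (S : Sys χ V U b δ) {s t : ℝ} (hs : 0 ≤ s) (hst : s ≤ t) (ht : t ≤ b) :
    (1 - δ) * ((t - s) * χ s) ≤ 1 := by
  have is : s ∈ Set.Icc 0 b := ⟨hs, hst.trans ht⟩
  have it : t ∈ Set.Icc 0 b := ⟨hs.trans hst, ht⟩
  have sub : Set.Icc s t ⊆ Set.Icc 0 b := Set.Icc_subset_Icc hs ht
  have hd := S.d1
  have h := antitone_of_UD (f := fun r => (χ r)⁻¹ + (1 - δ) * r) hst ?_ ?_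
  · have h1 := S.one s is
    have h2 : 0 < (χ t)⁻¹ := inv_pos.2 (by linarith [S.one t it])
    have h3 : (1 - δ) * (t - s) ≤ (χ s)⁻¹ := by linarith
    have h4 := mul_le_mul_of_nonneg_right h3 (show 0 ≤ χ s by linarith)
    rw [inv_mul_cancel₀ (by linarith)] at h4
    linarith
  · refine ContinuousOn.add (ContinuousOn.inv₀ (S.cχ.mono sub) fun x hx => ?_) (by fun_prop)
    have := S.one x (sub hx)
    linarith
  · intro r hr
    have hr' : r ∈ Set.Ico 0 b := ⟨hs.trans hr.1, hr.2.trans_le ht⟩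
    have h1 := S.one r ⟨hr'.1, hr'.2.le⟩
    have u1 := UD_inv (by linarith) (rlim S.cχ hr') (S.lχ r hr') (by linarith)
    have u2 : UD (fun r => (1 - δ) * r) r (1 - δ) := by
      intro x hx
      filter_upwards [self_mem_nhdsWithin] with y hy
      have : 0 < y - r := sub_pos.2 hy
      nlinarith
    simpa using UD_add u1 u2

lemma growth (S : Sys χ V U b δ) {s t : ℝ} (hs : 0 ≤ s) (hst : s ≤ t) (ht : t ≤ b) :
    (2 - 2 * δ) * (Real.log (χ t) - Real.log (χ s)) ≤ Real.log (V t) - Real.log (V s) := by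
  have sub : Set.Icc s t ⊆ Set.Icc 0 b := Set.Icc_subset_Icc hs ht
  have hd := S.d1
  have h := antitone_of_UD
    (f := fun r => (2 - 2 * δ) * Real.log (χ r) + -Real.log (V r)) hst ?_ ?_
  · linarith
  · refine ContinuousOn.add (ContinuousOn.mul continuousOn_const
      (ContinuousOn.log (S.cχ.mono sub) fun x hx => ?_))
      (ContinuousOn.neg (ContinuousOn.log (S.cV.mono sub) fun x hx => (S.vp x (sub hx)).ne'))
    have := S.one x (sub hx)
    linarith
  · intro r hr
    have hr' : r ∈ Set.Ico 0 b := ⟨hs.trans hr.1, hr.2.trans_le ht⟩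
    have h1 := S.one r ⟨hr'.1, hr'.2.le⟩
    have h2 := S.vp r ⟨hr'.1, hr'.2.le⟩
    have p1 : 0 < χ r := by linarith
    have u1 := UD_cmul (c := 2 - 2 * δ) (by linarith) (UD_log p1
      ((rlim S.cχ hr').eventually (lt_mem_nhds p1)) (S.uχ hr'))
    have u2 := LD_neg (LD_log h2 (mul_pos (by linarith) (mul_pos p1 h2)) (rlim S.cV hr')
      (S.lV r hr'))
    have := UD_add u1 u2
    convert this using 1
    field_simp
    ring

lemma fourth (S : Sys χ V U b δ) {B : ℝ} (hB : 10 < B) (h0 : U 0 * χ 0 ≤ B * V 0 ^ 2)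
    {t : ℝ} (ht0 : 0 ≤ t) (ht : t ≤ b) : U t * χ t ≤ B * V t ^ 2 := by
  have sub : Set.Icc 0 t ⊆ Set.Icc 0 b := Set.Icc_subset_Icc le_rfl ht
  have hd := S.d1
  have logeq : ∀ r ∈ Set.Icc 0 b, (Real.log (U r) + Real.log (χ r)) + 2 * (-Real.log (V r)) =
      Real.log (U r * χ r / V r ^ 2) := by
    intro r hr
    have h1 := S.one r hr
    have h2 := S.vp r hr
    have h3 := S.up r hr
    have p1 : 0 < χ r := by linarith
    rw [Real.log_div (by positivity) (by positivity), Real.log_mul (by positivity) (by positivity),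
      Real.log_pow]
    push_cast; ring
  have iff : ∀ r ∈ Set.Icc 0 b, ((Real.log (U r) + Real.log (χ r)) + 2 * (-Real.log (V r)) ≤
      Real.log B ↔ U r * χ r ≤ B * V r ^ 2) := by
    intro r hr
    have h1 := S.one r hr
    have h2 := S.vp r hr
    have h3 := S.up r hr
    have p1 : 0 < χ r := by linarith
    rw [logeq r hr, Real.log_le_log_iff (by positivity) (by linarith), div_le_iff₀ (by positivity)]
  rw [← iff t ⟨ht0, ht⟩]
  refine barrier_of_UD (f := fun r => (Real.log (U r) + Real.log (χ r)) + 2 * (-Real.log (V r)))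
    (f' := fun r => ((χ r * U r + 6 * (V r * V r) + χ r * U r) / U r + (χ r * χ r) / χ r)
      + 2 * (-((2 - 2 * δ) * (χ r * V r) / V r))) ht0 ?_ ?_ ?_ ?_
  · refine ContinuousOn.add (ContinuousOn.add
      (ContinuousOn.log (S.cU.mono sub) fun x hx => (S.up x (sub hx)).ne')
      (ContinuousOn.log (S.cχ.mono sub) fun x hx => ?_))
      (ContinuousOn.mul continuousOn_const
      (ContinuousOn.neg (ContinuousOn.log (S.cV.mono sub) fun x hx => (S.vp x (sub hx)).ne')))
    have := S.one x (sub hx)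
    linarith
  · exact (iff 0 ⟨le_rfl, S.b0⟩).2 h0
  · intro r hr
    have hr' : r ∈ Set.Ico 0 b := ⟨hr.1, hr.2.trans_le ht⟩
    have h1 := S.one r ⟨hr'.1, hr'.2.le⟩
    have h2 := S.vp r ⟨hr'.1, hr'.2.le⟩
    have h3 := S.up r ⟨hr'.1, hr'.2.le⟩
    have p1 : 0 < χ r := by linarith
    have u1 := UD_log p1 ((rlim S.cχ hr').eventually (lt_mem_nhds p1)) (S.uχ hr')
    have u3 := UD_log h3 ((rlim S.cU hr').eventually (lt_mem_nhds h3)) (S.uU hr')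
    have u2 := LD_neg (LD_log h2 (mul_pos (by linarith) (mul_pos p1 h2)) (rlim S.cV hr')
      (S.lV r hr'))
    exact UD_add (UD_add u3 u1) (UD_cmul (by norm_num) u2)
  · intro r hr hrC
    have hr' : r ∈ Set.Icc 0 b := ⟨hr.1, (hr.2.trans_le ht).le⟩
    have h1 := S.one r hr'
    have h2 := S.vp r hr'
    have h3 := S.up r hr'
    have p1 : 0 < χ r := by linarith
    rw [logeq r hr'] at hrC
    have hE : U r * χ r / V r ^ 2 = B :=
      Real.log_injOn_pos (Set.mem_Ioi.2 (by positivity)) (Set.mem_Ioi.2 (by linarith)) hrC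
    rw [div_eq_iff (by positivity)] at hE
    have e : ((χ r * U r + 6 * (V r * V r) + χ r * U r) / U r + (χ r * χ r) / χ r)
      + 2 * (-((2 - 2 * δ) * (χ r * V r) / V r)) = (6 * V r ^ 2 - (1 - 4 * δ) * (U r * χ r)) / U r := by
      field_simp; ring
    rw [e, hE]
    refine div_neg_of_neg_of_pos ?_ h3
    have : 0 < V r ^ 2 := by positivity
    have h10 : 6 < (1 - 4 * δ) * B := by nlinarith
    nlinarith

end Sys
end Stab

namespace Stab
open scoped ENNReal Topology
open Filter
variable {d : ℕ} {c₀ : ℝ}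

lemma toReal_ineq {A B C : ℝ≥0∞} {r : ℝ} (hr : 0 ≤ r) (hB : B ≠ ∞) (hC : C ≠ ∞)
    (h : A ≤ B + ENNReal.ofReal r * C) : A.toReal ≤ B.toReal + r * C.toReal := by
  have := ENNReal.toReal_mono (ENNReal.add_ne_top.2 ⟨hB, ENNReal.mul_ne_top ENNReal.ofReal_ne_top hC⟩) h
  rwa [ENNReal.toReal_add hB (ENNReal.mul_ne_top ENNReal.ofReal_ne_top hC), ENNReal.toReal_mul,
    ENNReal.toReal_ofReal hr] at this

lemma chi_ne (M : Model d c₀) {t : ℝ} (h0 : 0 ≤ t) (h : ENNReal.ofReal t < M.βc) :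
    M.chi t ≠ ∞ := (G_moments M h0 h).1.ne

lemma model_iχ (M : Model d c₀) {s t : ℝ} (h0 : 0 ≤ s) (h : s ≤ t) (ht : ENNReal.ofReal t < M.βc) :
    rchi M t ≤ rchi M s + (t - s) * (rchi M s * rchi M t) := by
  have hs := ofReal_lt_of_le M h ht
  have a := chi_ne M h0 hs
  have b := chi_ne M (h0.trans h) ht
  have u := upper_F M h0 h ht (fun _ => 1) 0
  have e : op (M.F t) (fun _ => 1) = fun _ => M.chi t := by
    funext x; rw [op_const, mul_one, mass_F]
  rw [e, op_const, op_const, mass_F, mul_one] at u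
  have := toReal_ineq (sub_nonneg.2 h) a (ENNReal.mul_ne_top a b) u
  rwa [ENNReal.toReal_mul] at this

lemma model_iV (M : Model d c₀) {s t : ℝ} (h0 : 0 ≤ s) (h : s ≤ t) (ht : ENNReal.ofReal t < M.βc) :
    rV M t ≤ rV M s + (t - s) * (rchi M s * rV M t + rchi M t * rV M s) := by
  have hs := ofReal_lt_of_le M h ht
  have a := chi_ne M h0 hs
  have b := chi_ne M (h0.trans h) ht
  have qa := (Q_F_lt M h0 hs).ne
  have qb := (Q_F_lt M (h0.trans h) ht).ne
  have u := upper_F M h0 h ht qE 0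
  have e : op (M.F t) qE = fun x => M.chi t * qE x + Q (M.F t) := by
    funext x; rw [op_q (F_even M t), mass_F]
  have e2 : op (M.F s) (fun x => M.chi t * qE x + Q (M.F t)) 0
      = M.chi s * Q (M.F t) + M.chi t * Q (M.F s) := by
    rw [op_add, op_cmul, op_zero_q, op_const, mass_F, add_comm]
  rw [op_zero_q, op_zero_q, e, e2] at u
  have t1 := ENNReal.mul_ne_top a qb
  have t2 := ENNReal.mul_ne_top b qa
  have := toReal_ineq (sub_nonneg.2 h) qa (ENNReal.add_ne_top.2 ⟨t1, t2⟩) u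
  rwa [ENNReal.toReal_add t1 t2, ENNReal.toReal_mul, ENNReal.toReal_mul] at this

lemma model_iU (M : Model d c₀) {s t : ℝ} (h0 : 0 ≤ s) (h : s ≤ t) (ht : ENNReal.ofReal t < M.βc) :
    rU M t ≤ rU M s + (t - s) * (rchi M s * rU M t + 6 * (rV M s * rV M t) + rchi M t * rU M s) := by
  have hs := ofReal_lt_of_le M h ht
  have a := chi_ne M h0 hs
  have b := chi_ne M (h0.trans h) ht
  have qa := (Q_F_lt M h0 hs).ne
  have qb := (Q_F_lt M (h0.trans h) ht).ne
  have ua := (Q2_F_lt M h0 hs).ne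
  have ub := (Q2_F_lt M (h0.trans h) ht).ne
  have u := upper_F M h0 h ht (fun y => qE y ^ 2) 0
  have e2 : op (M.F s) (fun x => M.chi t * qE x ^ 2 + (6 * Q (M.F t) * qE x + Q2 (M.F t))) 0
      = M.chi s * Q2 (M.F t) + 6 * (Q (M.F s) * Q (M.F t)) + M.chi t * Q2 (M.F s) := by
    rw [op_add, op_add, op_cmul, op_cmul, op_zero_q, op_zero_q2, op_const, mass_F]; ring
  have e3 : op (M.F s) (op (M.F t) fun y => qE y ^ 2) 0 ≤
      M.chi s * Q2 (M.F t) + 6 * (Q (M.F s) * Q (M.F t)) + M.chi t * Q2 (M.F s) := by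
    rw [← e2]
    refine op_mono (fun _ => le_rfl) (fun x => ?_) 0
    refine (op_q2 (F_even M t) x).trans ?_
    rw [mass_F, add_assoc]
  rw [op_zero_q2, op_zero_q2] at u
  have u' := u.trans (add_le_add le_rfl (mul_le_mul' le_rfl e3))
  have t1 := ENNReal.mul_ne_top a ub
  have t2 := ENNReal.mul_ne_top b ua
  have t3 : 6 * (Q (M.F s) * Q (M.F t)) ≠ ∞ := ENNReal.mul_ne_top (by simp) (ENNReal.mul_ne_top qa qb)
  have t4 := ENNReal.add_ne_top.2 ⟨t1, t3⟩
  have := toReal_ineq (sub_nonneg.2 h) ua (ENNReal.add_ne_top.2 ⟨t4, t2⟩) u'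
  rw [ENNReal.toReal_add t4 t2, ENNReal.toReal_add t1 t3, ENNReal.toReal_mul, ENNReal.toReal_mul,
    ENNReal.toReal_mul, ENNReal.toReal_mul] at this
  simpa [rU, rV, rchi] using this

lemma rU_pos (M : Model d c₀) (hc : 0 < c₀) {t : ℝ} (h0 : 0 ≤ t) (h : ENNReal.ofReal t < M.βc) :
    0 < rU M t := by
  have := rV_pos M hc h0 h
  unfold rV at this
  have h2 := ENNReal.toReal_mono (Q2_F_lt M h0 h).ne (Q_le_Q2 (M.F t))
  unfold rU
  linarith

lemma model_sys (M : Model d c₀) (hc : 0 < c₀) {b δ : ℝ} (hδ : 0 < δ) (hδ1 : δ ≤ 1 / 10)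
    (h0 : 0 ≤ b) (hb : ENNReal.ofReal b < M.βc) (hE : M.E b < ENNReal.ofReal δ) :
    Sys (rchi M) (rV M) (rU M) b δ where
  b0 := h0
  d0 := hδ
  d1 := hδ1
  one t ht := rchi_one_le M ht.1 (ofReal_lt_of_le M ht.2 hb)
  vp t ht := rV_pos M hc ht.1 (ofReal_lt_of_le M ht.2 hb)
  up t ht := rU_pos M hc ht.1 (ofReal_lt_of_le M ht.2 hb)
  mχ := fun s hs t ht h => ENNReal.toReal_mono (chi_ne M ht.1 (ofReal_lt_of_le M ht.2 hb))
    (ENNReal.tsum_le_tsum fun x => G_mono M hs.1 h (ofReal_lt_of_le M ht.2 hb) x)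
  mV := fun s hs t ht h => ENNReal.toReal_mono (Q_F_lt M ht.1 (ofReal_lt_of_le M ht.2 hb)).ne
    (ENNReal.tsum_le_tsum fun x =>
      mul_le_mul' (F_mono M hs.1 h (ofReal_lt_of_le M ht.2 hb) x) le_rfl)
  mU := fun s hs t ht h => ENNReal.toReal_mono (Q2_F_lt M ht.1 (ofReal_lt_of_le M ht.2 hb)).ne
    (ENNReal.tsum_le_tsum fun x =>
      mul_le_mul' (F_mono M hs.1 h (ofReal_lt_of_le M ht.2 hb) x) le_rfl)
  iχ s t hs h ht := model_iχ M hs h (ofReal_lt_of_le M ht hb)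
  iV s t hs h ht := model_iV M hs h (ofReal_lt_of_le M ht hb)
  iU s t hs h ht := model_iU M hs h (ofReal_lt_of_le M ht hb)
  lχ t ht := LD_chi M hc hδ ht.1 ht.2 hb hE
  lV t ht := LD_V M hc hδ ht.1 ht.2 hb hE

/-- constant controlling the fourth moment -/
def BB (d : ℕ) (c₀ : ℝ) : ℝ := 11 + d ^ 2 / c₀ ^ 4

lemma BB_gt (hc : 0 < c₀) : 10 < BB d c₀ := by
  unfold BB
  have : 0 ≤ (d : ℝ) ^ 2 / c₀ ^ 4 := by positivity
  linarith

lemma init4 (M : Model d c₀) (hc : 0 < c₀) : rU M 0 * rchi M 0 ≤ BB d c₀ * rV M 0 ^ 2 := by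
  have h1 : rchi M 0 = 1 := by unfold rchi; rw [chi_zero]; simp
  have h2 : rV M 0 = s2 M := by
    unfold rV; rw [F_zero, Q_JE, ENNReal.toReal_ofReal (s2_pos M hc).le]
  have h3 : rU M 0 ≤ (d * M.K.R ^ 2) ^ 2 := by
    unfold rU; rw [F_zero]
    refine (ENNReal.toReal_mono ENNReal.ofReal_ne_top (Q2_JE M)).trans ?_
    rw [ENNReal.toReal_ofReal (by positivity)]
  have h4 := s2_lower M hc
  have h5 : ((c₀ * M.K.R) ^ 2) ^ 2 ≤ s2 M ^ 2 := pow_le_pow_left₀ (by positivity) h4 2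
  rw [h1, h2, mul_one]
  refine h3.trans ?_
  have h6 : (d ^ 2 / c₀ ^ 4) * ((c₀ * M.K.R) ^ 2) ^ 2 = (d * M.K.R ^ 2) ^ 2 := by
    field_simp
  rw [← h6]
  unfold BB
  have : 0 ≤ (d : ℝ) ^ 2 / c₀ ^ 4 := by positivity
  nlinarith [sq_nonneg (s2 M), mul_le_mul_of_nonneg_left h5 this]

lemma xiSq_toReal (M : Model d c₀) (t : ℝ) : (M.xiSq t).toReal = rV M t / rchi M t := by
  unfold Model.xiSq rV rchi Q
  rw [ENNReal.toReal_div]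
  congr 2
  exact tsum_congr fun x => mul_comm _ _

end Stab

namespace Stab
open scoped ENNReal Topology
open Filter
variable {d : ℕ}

/-- step law hypotheses -/
structure Law (p : (Fin d → ℤ) → ℝ≥0∞) (X B : ℝ) : Prop where
  symm : IsSymmFun p
  mass1 : mass p = 1
  X0 : 0 < X
  B0 : 10 < B
  q1 : Q p = ENNReal.ofReal X
  q2 : Q2 p ≤ ENNReal.ofReal (B * X ^ 2)

lemma hasSum_cong {α : Type*} {f g : α → ℝ} {a b : ℝ} (h : HasSum f a) (h1 : ∀ y, g y = f y)
    (h2 : b = a) : HasSum g b := by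
  have : g = f := funext h1
  rw [this, h2]; exact h

namespace Law
variable {p : (Fin d → ℤ) → ℝ≥0∞} {X B : ℝ}

lemma even (L : Law p X B) : Even' p := fun x => even_of_symm L.symm x

lemma ne_top (L : Law p X B) (y) : p y ≠ ∞ :=
  ENNReal.ne_top_of_tsum_ne_top (by have := L.mass1; unfold mass at this; simp [this]) y

lemma summ (L : Law p X B) : Summable fun y => (p y).toReal :=
  ENNReal.summable_toReal (by have := L.mass1; unfold mass at this; simp [this])

lemma tsum_one (L : Law p X B) : ∑' y, (p y).toReal = 1 := by
  rw [← ENNReal.tsum_toReal_eq L.ne_top]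
  have := L.mass1; unfold mass at this; simp [this]

lemma qE_ne (y : Fin d → ℤ) : qE y ≠ ∞ := ENNReal.ofReal_ne_top
lemma qE_toReal (y : Fin d → ℤ) : (qE y).toReal = sqNorm y := ENNReal.toReal_ofReal (sqNorm_nonneg y)

lemma summ_q (L : Law p X B) : Summable fun y => (p y).toReal * sqNorm y := by
  have := ENNReal.summable_toReal (f := fun y => p y * qE y)
    (by have := L.q1; unfold Q at this; simp [this])
  simpa [ENNReal.toReal_mul, qE_toReal] using this

lemma tsum_q (L : Law p X B) : ∑' y, (p y).toReal * sqNorm y = X := by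
  have e : ∀ y, (p y).toReal * sqNorm y = (p y * qE y).toReal := fun y => by
    rw [ENNReal.toReal_mul, qE_toReal]
  simp only [e]
  rw [← ENNReal.tsum_toReal_eq (fun y => ENNReal.mul_ne_top (L.ne_top y) (qE_ne y))]
  have := L.q1; unfold Q at this; rw [this, ENNReal.toReal_ofReal L.X0.le]

lemma q2_ne (L : Law p X B) : Q2 p ≠ ∞ := (L.q2.trans_lt ENNReal.ofReal_lt_top).ne

lemma summ_q2 (L : Law p X B) : Summable fun y => (p y).toReal * sqNorm y ^ 2 := by
  have := ENNReal.summable_toReal (f := fun y => p y * qE y ^ 2) L.q2_ne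
  simpa [ENNReal.toReal_mul, qE_toReal] using this

lemma tsum_q2 (L : Law p X B) : ∑' y, (p y).toReal * sqNorm y ^ 2 ≤ B * X ^ 2 := by
  have e : ∀ y, (p y).toReal * sqNorm y ^ 2 = (p y * qE y ^ 2).toReal := fun y => by
    rw [ENNReal.toReal_mul, ENNReal.toReal_pow, qE_toReal]
  simp only [e]
  rw [← ENNReal.tsum_toReal_eq (fun y => ENNReal.mul_ne_top (L.ne_top y) (by simp [qE_ne]))]
  have := ENNReal.toReal_mono ENNReal.ofReal_ne_top L.q2
  rwa [ENNReal.toReal_ofReal (by have := L.X0; have := L.B0; positivity)] at this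

lemma abs_mul_le (i j : Fin d) (y : Fin d → ℤ) : |(y i : ℝ) * y j| ≤ sqNorm y := by
  have hi : (y i : ℝ) ^ 2 ≤ sqNorm y :=
    Finset.single_le_sum (f := fun i => (y i : ℝ) ^ 2) (fun i _ => sq_nonneg _) (Finset.mem_univ i)
  have hj : (y j : ℝ) ^ 2 ≤ sqNorm y :=
    Finset.single_le_sum (f := fun i => (y i : ℝ) ^ 2) (fun i _ => sq_nonneg _) (Finset.mem_univ j)
  rw [abs_le]
  constructor <;> nlinarith [sq_nonneg ((y i : ℝ) + y j), sq_nonneg ((y i : ℝ) - y j)]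

lemma summ_ij (L : Law p X B) (i j : Fin d) : Summable fun y => (p y).toReal * ((y i : ℝ) * y j) := by
  refine Summable.of_norm_bounded L.summ_q (fun y => ?_)
  rw [Real.norm_eq_abs, abs_mul, abs_of_nonneg ENNReal.toReal_nonneg]
  exact mul_le_mul_of_nonneg_left (abs_mul_le i j y) ENNReal.toReal_nonneg

lemma sp_inv (L : Law p X B) (π e) (y) : p (sp π e y) = p y := L.symm π e y

lemma cross (L : Law p X B) {i j : Fin d} (h : i ≠ j) :
    ∑' y, (p y).toReal * ((y i : ℝ) * y j) = 0 := by
  have := (sp (1 : Equiv.Perm (Fin d)) (fun k => decide (k = i))).tsum_eq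
    (fun y => (p y).toReal * ((y i : ℝ) * y j))
  simp only [L.sp_inv] at this
  have e : ∀ y : Fin d → ℤ, (p y).toReal * (((sp (1 : Equiv.Perm (Fin d)) (fun k => decide (k = i)) y i : ℤ) : ℝ) *
      (sp (1 : Equiv.Perm (Fin d)) (fun k => decide (k = i)) y j : ℤ)) = -((p y).toReal * ((y i : ℝ) * y j)) := by
    intro y
    simp [sp, h.symm]
  simp only [e, tsum_neg] at this
  linarith

lemma diag_eq (L : Law p X B) (i j : Fin d) :
    ∑' y, (p y).toReal * ((y i : ℝ) * y i) = ∑' y, (p y).toReal * ((y j : ℝ) * y j) := by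
  have := (sp (Equiv.swap i j) (fun _ => false)).tsum_eq
    (fun y => (p y).toReal * ((y i : ℝ) * y i))
  simp only [L.sp_inv] at this
  rw [← this]
  simp [sp]

lemma diag (L : Law p X B) (i : Fin d) :
    ∑' y, (p y).toReal * ((y i : ℝ) * y i) = X / d := by
  have h : ∑ j : Fin d, ∑' y, (p y).toReal * ((y j : ℝ) * y j) = X := by
    rw [← Summable.tsum_finsetSum (fun j _ => L.summ_ij j j), ← L.tsum_q]
    refine tsum_congr fun y => ?_
    rw [← Finset.mul_sum]; unfold sqNorm; simp only [sq]
  have h2 : ∀ j, ∑' y, (p y).toReal * ((y j : ℝ) * y j) = ∑' y, (p y).toReal * ((y i : ℝ) * y i) :=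
    fun j => L.diag_eq j i
  simp only [h2, Finset.sum_const, Finset.card_univ, Fintype.card_fin, nsmul_eq_mul] at h
  have : (0 : ℝ) < d := by exact_mod_cast i.pos
  rw [eq_div_iff this.ne', mul_comm]; exact h

end Law

/-- three dimensional phase -/
def dot3 (hd : 3 ≤ d) (θ : Fin 3 → ℝ) (x : Fin d → ℤ) : ℝ := ∑ a, θ a * (x (Fin.castLE hd a) : ℝ)

def n3 (θ : Fin 3 → ℝ) : ℝ := ∑ a, θ a ^ 2

lemma dot3_add (hd : 3 ≤ d) (θ) (x y : Fin d → ℤ) : dot3 hd θ (x + y) = dot3 hd θ x + dot3 hd θ y := by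
  simp only [dot3, ← Finset.sum_add_distrib]
  refine Finset.sum_congr rfl fun a _ => ?_
  simp; ring

lemma dot3_neg (hd : 3 ≤ d) (θ) (x : Fin d → ℤ) : dot3 hd θ (-x) = - dot3 hd θ x := by
  simp [dot3]

lemma sub3 (hd : 3 ≤ d) (x : Fin d → ℤ) : ∑ a : Fin 3, (x (Fin.castLE hd a) : ℝ) ^ 2 ≤ sqNorm x := by
  unfold sqNorm
  have := Finset.sum_map Finset.univ (Fin.castLEEmb hd) (fun i => (x i : ℝ) ^ 2)
  simp only [Fin.castLEEmb_apply] at this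
  rw [← this]
  exact Finset.sum_le_sum_of_subset_of_nonneg (Finset.subset_univ _) (fun i _ _ => sq_nonneg _)

lemma dot3_sq (hd : 3 ≤ d) (θ) (x : Fin d → ℤ) : dot3 hd θ x ^ 2 ≤ n3 θ * sqNorm x := by
  unfold dot3 n3
  refine (Finset.sum_mul_sq_le_sq_mul_sq _ _ _).trans ?_
  exact mul_le_mul_of_nonneg_left (sub3 hd x) (Finset.sum_nonneg fun _ _ => sq_nonneg _)

lemma n3_nonneg (θ) : 0 ≤ n3 θ := Finset.sum_nonneg fun _ _ => sq_nonneg _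

lemma cos_up (u : ℝ) : Real.cos u ≤ 1 - u ^ 2 / 2 + u ^ 4 / 2 := by
  by_cases h : |u| ≤ 1
  · have := abs_le.1 (Real.cos_bound h)
    have e : |u| ^ 4 = u ^ 4 := by rw [show 4 = 2 * 2 from rfl, pow_mul, sq_abs, ← pow_mul]
    rw [e] at this
    have : 0 ≤ u ^ 4 := by positivity
    linarith
  · have h1 : 1 < u ^ 2 := by rw [← sq_abs]; nlinarith [not_le.1 h]
    have := Real.cos_le_one u
    nlinarith

namespace Law
variable {p : (Fin d → ℤ) → ℝ≥0∞} {X B : ℝ}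

lemma m2 (L : Law p X B) (hd : 3 ≤ d) (θ) :
    HasSum (fun y => (p y).toReal * dot3 hd θ y ^ 2) (n3 θ * (X / d)) := by
  have e : ∀ y : Fin d → ℤ, (p y).toReal * dot3 hd θ y ^ 2 = ∑ a, ∑ b, (θ a * θ b) *
      ((p y).toReal * ((y (Fin.castLE hd a) : ℝ) * y (Fin.castLE hd b))) := by
    intro y
    rw [dot3, sq, Finset.sum_mul_sum, Finset.mul_sum]
    refine Finset.sum_congr rfl fun a _ => ?_
    rw [Finset.mul_sum]
    refine Finset.sum_congr rfl fun b _ => ?_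
    ring
  simp only [e]
  have h : ∀ a b : Fin 3, HasSum (fun y : Fin d → ℤ => (θ a * θ b) *
      ((p y).toReal * ((y (Fin.castLE hd a) : ℝ) * y (Fin.castLE hd b))))
      (if a = b then θ a ^ 2 * (X / d) else 0) := by
    intro a b
    have s := (L.summ_ij (Fin.castLE hd a) (Fin.castLE hd b)).hasSum.mul_left (θ a * θ b)
    split_ifs with hab
    · subst hab
      rw [L.diag] at s
      exact hasSum_cong s (fun _ => rfl) (by ring)
    · rwa [L.cross (fun h => hab (Fin.castLE_injective hd h)), mul_zero] at s
  have := hasSum_sum (s := Finset.univ) (fun a _ => hasSum_sum (s := Finset.univ) (fun b _ => h a b))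
  simpa [n3, Finset.sum_mul] using this

lemma summ_bdd (L : Law p X B) {u : (Fin d → ℤ) → ℝ} {C : ℝ} (h : ∀ y, |u y| ≤ C) :
    Summable fun y => (p y).toReal * u y := by
  refine Summable.of_norm_bounded (L.summ.mul_right C) (fun y => ?_)
  rw [Real.norm_eq_abs, abs_mul, abs_of_nonneg ENNReal.toReal_nonneg]
  exact mul_le_mul_of_nonneg_left (h y) ENNReal.toReal_nonneg

lemma summ4 (L : Law p X B) (hd : 3 ≤ d) (θ) : Summable fun y => (p y).toReal * dot3 hd θ y ^ 4 := by
  refine Summable.of_nonneg_of_le (fun y => by positivity) (fun y => ?_) (L.summ_q2.mul_left (n3 θ ^ 2))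
  have := pow_le_pow_left₀ (sq_nonneg _) (dot3_sq hd θ y) 2
  calc (p y).toReal * dot3 hd θ y ^ 4 = (p y).toReal * (dot3 hd θ y ^ 2) ^ 2 := by ring
    _ ≤ (p y).toReal * (n3 θ * sqNorm y) ^ 2 := by gcongr
    _ = _ := by ring

lemma m4 (L : Law p X B) (hd : 3 ≤ d) (θ) :
    ∑' y, (p y).toReal * dot3 hd θ y ^ 4 ≤ n3 θ ^ 2 * (B * X ^ 2) := by
  refine le_trans ?_ (mul_le_mul_of_nonneg_left L.tsum_q2 (sq_nonneg _))
  rw [← tsum_mul_left]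
  refine (L.summ4 hd θ).tsum_le_tsum (fun y => ?_) (L.summ_q2.mul_left (n3 θ ^ 2))
  have := pow_le_pow_left₀ (sq_nonneg _) (dot3_sq hd θ y) 2
  calc (p y).toReal * dot3 hd θ y ^ 4 = (p y).toReal * (dot3 hd θ y ^ 2) ^ 2 := by ring
    _ ≤ (p y).toReal * (n3 θ * sqNorm y) ^ 2 := by gcongr
    _ = _ := by ring
end Law

/-- characteristic function -/
def cf (p : (Fin d → ℤ) → ℝ≥0∞) (hd : 3 ≤ d) (θ : Fin 3 → ℝ) : ℝ :=
  ∑' y, (p y).toReal * Real.cos (dot3 hd θ y)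

namespace Law
variable {p : (Fin d → ℤ) → ℝ≥0∞} {X B : ℝ}

lemma cf_lower (L : Law p X B) (hd : 3 ≤ d) (θ) : 1 - n3 θ * (X / d) / 2 ≤ cf p hd θ := by
  have h := (L.m2 hd θ)
  have e : 1 - n3 θ * (X / d) / 2 = ∑' y, ((p y).toReal - (p y).toReal * dot3 hd θ y ^ 2 * (1 / 2)) := by
    rw [L.summ.tsum_sub (h.summable.mul_right (1 / 2)), L.tsum_one, tsum_mul_right, h.tsum_eq]; ring
  rw [e]
  refine (L.summ.sub (h.summable.mul_right (1 / 2))).tsum_le_tsum (fun y => ?_)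
    (L.summ_bdd (fun y => Real.abs_cos_le_one _))
  have := Real.one_sub_sq_div_two_le_cos (x := dot3 hd θ y)
  nlinarith [ENNReal.toReal_nonneg (a := p y)]

lemma cf_upper (L : Law p X B) (hd : 3 ≤ d) (θ) :
    cf p hd θ ≤ 1 - n3 θ * (X / d) / 2 + n3 θ ^ 2 * (B * X ^ 2) / 2 := by
  have h := (L.m2 hd θ)
  have h4 := L.m4 hd θ
  have s1 := (L.summ.sub (h.summable.mul_right (1 / 2)))
  have s2 := ((L.summ4 hd θ).mul_right (1 / 2))
  have e : ∑' y, (((p y).toReal - (p y).toReal * dot3 hd θ y ^ 2 * (1 / 2))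
     + (p y).toReal * dot3 hd θ y ^ 4 * (1 / 2)) ≤
      1 - n3 θ * (X / d) / 2 + n3 θ ^ 2 * (B * X ^ 2) / 2 := by
    rw [s1.tsum_add s2, L.summ.tsum_sub (h.summable.mul_right (1 / 2)), L.tsum_one, tsum_mul_right,
      tsum_mul_right, h.tsum_eq]; linarith
  refine le_trans ?_ e
  refine (L.summ_bdd (fun y => Real.abs_cos_le_one _)).tsum_le_tsum (fun y => ?_) (s1.add s2)
  have := cos_up (dot3 hd θ y)
  nlinarith [ENNReal.toReal_nonneg (a := p y)]

lemma cf_nonneg (L : Law p X B) (hd : 3 ≤ d) (θ) (h : n3 θ * X ≤ 1 / (2 * d * B)) :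
    0 ≤ cf p hd θ := by
  refine le_trans ?_ (L.cf_lower hd θ)
  have hd' : (3 : ℝ) ≤ d := by exact_mod_cast hd
  have hB := L.B0
  have h1 : 1 / (2 * d * B) ≤ 1 := by
    rw [div_le_one (by positivity)]; nlinarith
  have h2 : n3 θ * (X / d) ≤ n3 θ * X := by
    rw [← mul_div_assoc]
    exact div_le_self (mul_nonneg (n3_nonneg θ) L.X0.le) (by linarith)
  linarith

lemma cf_le_exp (L : Law p X B) (hd : 3 ≤ d) (θ) (h : n3 θ * X ≤ 1 / (2 * d * B)) :
    cf p hd θ ≤ Real.exp (-(n3 θ * X / (4 * d))) := by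
  refine (L.cf_upper hd θ).trans ?_
  have hd' : (3 : ℝ) ≤ d := by exact_mod_cast hd
  have hB := L.B0
  have hn : 0 ≤ n3 θ * X := mul_nonneg (n3_nonneg θ) L.X0.le
  have h1 := mul_le_mul_of_nonneg_left h hn
  have h2 : n3 θ ^ 2 * (B * X ^ 2) ≤ n3 θ * X / (2 * d) := by
    have : n3 θ ^ 2 * (B * X ^ 2) = B * (n3 θ * X * (n3 θ * X)) := by ring
    rw [this]
    refine (mul_le_mul_of_nonneg_left h1 (by linarith)).trans (le_of_eq ?_)
    field_simp
  have h3 := Real.add_one_le_exp (-(n3 θ * X / (4 * d)))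
  refine le_trans ?_ h3
  have e1 : n3 θ * (X / d) = 4 * (n3 θ * X / (4 * d)) := by field_simp
  have e2 : n3 θ * X / (2 * d) = 2 * (n3 θ * X / (4 * d)) := by field_simp; norm_num
  rw [e1]; rw [e2] at h2; linarith

lemma eig (L : Law p X B) (hd : 3 ≤ d) (θ) (x) :
    HasSum (fun y => (p y).toReal * Real.cos (dot3 hd θ (x + y))) (cf p hd θ * Real.cos (dot3 hd θ x)) := by
  have hs : ∑' y, (p y).toReal * Real.sin (dot3 hd θ y) = 0 := by
    have := (Equiv.neg (Fin d → ℤ)).tsum_eq (fun y => (p y).toReal * Real.sin (dot3 hd θ y))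
    simp only [Equiv.neg_apply, L.even _, dot3_neg, Real.sin_neg, mul_neg, tsum_neg] at this
    linarith
  have a := (L.summ_bdd (fun y => Real.abs_cos_le_one (dot3 hd θ y))).hasSum.mul_left (Real.cos (dot3 hd θ x))
  have b := (L.summ_bdd (fun y => Real.abs_sin_le_one (dot3 hd θ y))).hasSum.mul_left (Real.sin (dot3 hd θ x))
  rw [hs] at b
  refine hasSum_cong (a.sub b) (fun y => ?_) ?_
  · rw [dot3_add, Real.cos_add]; ring
  · unfold cf; ring

lemma trig_step (L : Law p X B) (hd : 3 ≤ d) {ι : Type} [Fintype ι] (c : ι → ℝ) (θ : ι → Fin 3 → ℝ)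
    (h : ∀ x, 0 ≤ ∑ j, c j * Real.cos (dot3 hd (θ j) x)) (x) :
    0 ≤ ∑ j, (c j * cf p hd (θ j)) * Real.cos (dot3 hd (θ j) x) ∧
    op p (fun x => ENNReal.ofReal (∑ j, c j * Real.cos (dot3 hd (θ j) x))) x =
      ENNReal.ofReal (∑ j, (c j * cf p hd (θ j)) * Real.cos (dot3 hd (θ j) x)) := by
  have hs : HasSum (fun y => (p y).toReal * ∑ j, c j * Real.cos (dot3 hd (θ j) (x + y)))
      (∑ j, (c j * cf p hd (θ j)) * Real.cos (dot3 hd (θ j) x)) := by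
    have := hasSum_sum (s := Finset.univ) (fun j _ => (L.eig hd (θ j) x).mul_left (c j))
    refine hasSum_cong this (fun y => ?_) ?_
    · rw [Finset.mul_sum]; exact Finset.sum_congr rfl fun j _ => by ring
    · exact Finset.sum_congr rfl fun j _ => by ring
  have hn : ∀ y, 0 ≤ (p y).toReal * ∑ j, c j * Real.cos (dot3 hd (θ j) (x + y)) :=
    fun y => mul_nonneg ENNReal.toReal_nonneg (h _)
  refine ⟨hs.nonneg hn, ?_⟩
  rw [← hs.tsum_eq, ENNReal.ofReal_tsum_of_nonneg hn hs.summable]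
  refine tsum_congr fun y => ?_
  rw [ENNReal.ofReal_mul ENNReal.toReal_nonneg, ENNReal.ofReal_toReal (L.ne_top y)]

lemma trig_iter (L : Law p X B) (hd : 3 ≤ d) {ι : Type} [Fintype ι] (θ : ι → Fin 3 → ℝ)
    (h : ∀ x, 0 ≤ ∑ j, Real.cos (dot3 hd (θ j) x)) (k : ℕ) :
    (∀ x, 0 ≤ ∑ j, cf p hd (θ j) ^ k * Real.cos (dot3 hd (θ j) x)) ∧ ∀ x,
    (op p)^[k] (fun x => ENNReal.ofReal (∑ j, Real.cos (dot3 hd (θ j) x))) x =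
      ENNReal.ofReal (∑ j, cf p hd (θ j) ^ k * Real.cos (dot3 hd (θ j) x)) := by
  induction k with
  | zero => simpa using h
  | succ k ih =>
    have := fun x => L.trig_step hd (fun j => cf p hd (θ j) ^ k) θ ih.1 x
    refine ⟨fun x => by simpa only [pow_succ] using (this x).1, fun x => ?_⟩
    rw [Function.iterate_succ_apply', funext ih.2, (this x).2]
    simp only [pow_succ]

end Law
end Stab

namespace Stab
open scoped ENNReal Topology
open Filter
variable {d : ℕ}

abbrev Ix (N : ℕ) := (Fin 3 → Fin N) × (Fin 3 → Fin N)

def th {N : ℕ} (h : ℝ) (j : Ix N) : Fin 3 → ℝ := fun a => h * (((j.1 a : ℕ) : ℝ) - ((j.2 a : ℕ) : ℝ))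
def ph {N : ℕ} (h : ℝ) (j : Fin 3 → Fin N) : Fin 3 → ℝ := fun a => h * ((j a : ℕ) : ℝ)

def DN (N : ℕ) (hd : 3 ≤ d) (h : ℝ) (x : Fin d → ℤ) : ℝ := ∑ j : Ix N, Real.cos (dot3 hd (th h j) x)

lemma DN_eq (N : ℕ) (hd : 3 ≤ d) (h : ℝ) (x : Fin d → ℤ) :
    DN N hd h x = (∑ j : Fin 3 → Fin N, Real.cos (dot3 hd (ph h j) x)) ^ 2 +
      (∑ j : Fin 3 → Fin N, Real.sin (dot3 hd (ph h j) x)) ^ 2 := by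
  rw [sq, sq, Finset.sum_mul_sum, Finset.sum_mul_sum, ← Finset.sum_add_distrib, DN, Fintype.sum_prod_type]
  refine Finset.sum_congr rfl fun j _ => ?_
  rw [← Finset.sum_add_distrib]
  refine Finset.sum_congr rfl fun j' _ => ?_
  rw [← Real.cos_sub]
  congr 1
  simp only [dot3, ← Finset.sum_sub_distrib, th, ph]
  exact Finset.sum_congr rfl fun a _ => by ring

lemma DN_nonneg (N : ℕ) (hd : 3 ≤ d) (h : ℝ) (x : Fin d → ℤ) : 0 ≤ DN N hd h x := by
  rw [DN_eq]; positivity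

lemma DN_lower (N : ℕ) (hd : 3 ≤ d) (h : ℝ) (x : Fin d → ℤ) (hx : 3 * h ^ 2 * N ^ 2 * sqNorm x ≤ 1) :
    (N : ℝ) ^ 6 / 4 ≤ DN N hd h x := by
  have h1 : ∀ j : Fin 3 → Fin N, 1 / 2 ≤ Real.cos (dot3 hd (ph h j) x) := by
    intro j
    have a := dot3_sq hd (ph h j) x
    have b : n3 (ph h j) ≤ 3 * h ^ 2 * N ^ 2 := by
      unfold n3 ph
      have : ∀ a ∈ Finset.univ, (h * ((j a : ℕ) : ℝ)) ^ 2 ≤ h ^ 2 * N ^ 2 := by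
        intro a _
        rw [mul_pow]
        have : ((j a : ℕ) : ℝ) ≤ N := by exact_mod_cast (j a).2.le
        gcongr
      refine (Finset.sum_le_sum this).trans ?_
      simp; linarith
    have c := mul_le_mul_of_nonneg_right b (sqNorm_nonneg x)
    have := Real.one_sub_sq_div_two_le_cos (x := dot3 hd (ph h j) x)
    linarith
  have h2 : (N : ℝ) ^ 3 / 2 ≤ ∑ j : Fin 3 → Fin N, Real.cos (dot3 hd (ph h j) x) := by
    refine le_trans (le_of_eq ?_) (Finset.sum_le_sum fun j _ => h1 j)
    simp; ring
  rw [DN_eq]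
  have h3 := pow_le_pow_left₀ (by positivity) h2 2
  nlinarith [sq_nonneg (∑ j : Fin 3 → Fin N, Real.sin (dot3 hd (ph h j) x))]

/-- gaussian sum -/
def CG (d : ℕ) : ℝ := ∑' z : ℤ, Real.exp (-((z : ℝ) ^ 2 / (4 * d)))

lemma CG_summ (hd : 3 ≤ d) : Summable fun z : ℤ => Real.exp (-((z : ℝ) ^ 2 / (4 * d))) := by
  have hd' : (3 : ℝ) ≤ d := by exact_mod_cast hd
  have key : Summable fun n : ℕ => Real.exp (-((n : ℝ) ^ 2 / (4 * d))) := by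
    have g : Summable fun n : ℕ => Real.exp ((n : ℝ) * (-(1 / (4 * d)))) :=
      Real.summable_exp_nat_mul_iff.2 (by
        have : (0:ℝ) < 1 / (4 * d) := by positivity
        linarith)
    refine Summable.of_nonneg_of_le (fun n => (Real.exp_pos _).le) (fun n => ?_) g
    apply Real.exp_le_exp.2
    have : (n : ℝ) ≤ (n : ℝ) ^ 2 := by exact_mod_cast Nat.le_self_pow (by norm_num) n
    rw [mul_neg, neg_le_neg_iff, mul_one_div]
    gcongr
  refine Summable.of_nat_of_neg ?_ ?_
  · simpa using key
  · simpa using key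

lemma CG_pos : 0 ≤ CG d := tsum_nonneg fun _ => (Real.exp_pos _).le

lemma fin_sum_le (hd : 3 ≤ d) (N : ℕ) (c : ℤ) :
    ∑ m : Fin N, Real.exp (-(((c : ℝ) - ((m : ℕ) : ℝ)) ^ 2 / (4 * d))) ≤ CG d := by
  let e : Fin N ↪ ℤ := ⟨fun m => c - ((m : ℕ) : ℤ), fun a b h => by
    ext; simp at h; exact_mod_cast h⟩
  have := Finset.sum_map Finset.univ e (fun z : ℤ => Real.exp (-((z : ℝ) ^ 2 / (4 * d))))
  have h2 := (CG_summ hd).sum_le_tsum (Finset.univ.map e) (fun _ _ => (Real.exp_pos _).le)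
  have e' : ∀ m, ((e m : ℤ) : ℝ) = (c : ℝ) - ((m : ℕ) : ℝ) := by
    intro m
    change ((c - ((m : ℕ) : ℤ) : ℤ) : ℝ) = _
    push_cast; rfl
  rw [this] at h2
  simp only [e'] at h2
  exact h2

lemma exp_sum_le (hd : 3 ≤ d) (N : ℕ) :
    ∑ j : Ix N, Real.exp (-(n3 (th 1 j) / (4 * d))) ≤ N ^ 3 * CG d ^ 3 := by
  have key : ∀ j : Fin 3 → Fin N, ∑ j' : Fin 3 → Fin N, Real.exp (-(n3 (th 1 (j, j')) / (4 * d))) ≤ CG d ^ 3 := by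
    intro j
    have e : ∀ j' : Fin 3 → Fin N, Real.exp (-(n3 (th 1 (j, j')) / (4 * d))) =
        ∏ a, Real.exp (-(((((j a : ℕ) : ℤ) : ℝ) - ((j' a : ℕ) : ℝ)) ^ 2 / (4 * d))) := by
      intro j'
      rw [← Real.exp_sum]
      congr 1
      simp only [n3, th, Finset.sum_neg_distrib, ← Finset.sum_div, one_mul, Int.cast_natCast]
    simp only [e]
    have := Finset.prod_univ_sum (fun _ : Fin 3 => (Finset.univ : Finset (Fin N)))
      (fun a m => Real.exp (-(((((j a : ℕ) : ℤ) : ℝ) - ((m : ℕ) : ℝ)) ^ 2 / (4 * d))))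
    rw [Fintype.piFinset_univ] at this
    rw [← this]
    refine (Finset.prod_le_prod (fun a _ => Finset.sum_nonneg fun _ _ => (Real.exp_pos _).le)
      (fun a _ => fin_sum_le hd N _)).trans (le_of_eq ?_)
    simp
  rw [Fintype.sum_prod_type]
  refine (Finset.sum_le_sum fun j _ => key j).trans ?_
  simp

lemma n3_th {N : ℕ} (h : ℝ) (j : Ix N) : n3 (th h j) = h ^ 2 * n3 (th 1 j) := by
  simp only [n3, th, Finset.mul_sum]
  exact Finset.sum_congr rfl fun a _ => by ring

lemma n3_th_le {N : ℕ} (j : Ix N) : n3 (th 1 j) ≤ 3 * N ^ 2 := by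
  have : ∀ a ∈ Finset.univ, (1 * (((j.1 a : ℕ) : ℝ) - ((j.2 a : ℕ) : ℝ))) ^ 2 ≤ (N : ℝ) ^ 2 := by
    intro a _
    have h1 : ((j.1 a : ℕ) : ℝ) ≤ N := by exact_mod_cast (j.1 a).2.le
    have h2 : ((j.2 a : ℕ) : ℝ) ≤ N := by exact_mod_cast (j.2 a).2.le
    have h3 : (0 : ℝ) ≤ ((j.1 a : ℕ) : ℝ) := by positivity
    have h4 : (0 : ℝ) ≤ ((j.2 a : ℕ) : ℝ) := by positivity
    rw [one_mul]
    apply sq_le_sq'  <;> linarith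
  refine (Finset.sum_le_sum this).trans ?_
  simp

lemma DN_upper {p : (Fin d → ℤ) → ℝ≥0∞} {X B : ℝ} (L : Law p X B) (hd : 3 ≤ d) (N k : ℕ) {h : ℝ}
    (hk : 0 < k) (hh : h ^ 2 = 1 / (k * X)) (hN : 3 * (N : ℝ) ^ 2 / k ≤ 1 / (2 * d * B)) (x) :
    (op p)^[k] (fun x => ENNReal.ofReal (DN N hd h x)) x ≤ ENNReal.ofReal (N ^ 3 * CG d ^ 3) := by
  have hX := L.X0
  have hk' : (0 : ℝ) < k := by exact_mod_cast hk
  unfold DN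
  rw [(L.trig_iter hd (th h) (DN_nonneg N hd h) k).2 x]
  refine ENNReal.ofReal_le_ofReal (le_trans (Finset.sum_le_sum fun j _ => ?_) (exp_sum_le hd N))
  have e : n3 (th h j) * X = n3 (th 1 j) / k := by
    rw [n3_th, hh]; field_simp
  have hc : n3 (th h j) * X ≤ 1 / (2 * d * B) := by
    rw [e]; refine le_trans ?_ hN
    have := n3_th_le j
    gcongr
  have c0 := L.cf_nonneg hd _ hc
  have c1 := L.cf_le_exp hd _ hc
  refine (mul_le_of_le_one_right (pow_nonneg c0 k) (Real.cos_le_one _)).trans ?_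
  refine (pow_le_pow_left₀ c0 c1 k).trans (le_of_eq ?_)
  rw [← Real.exp_nat_mul, e]
  congr 1
  field_simp

end Stab

namespace Stab
open scoped ENNReal Topology
open Filter
variable {d : ℕ}

lemma iter_mono {p u v : (Fin d → ℤ) → ℝ≥0∞} (h : ∀ x, u x ≤ v x) (k : ℕ) :
    ∀ x, (op p)^[k] u x ≤ (op p)^[k] v x := by
  induction k with
  | zero => simpa using h
  | succ k ih =>
    intro x
    rw [Function.iterate_succ_apply', Function.iterate_succ_apply']
    exact op_mono (fun _ => le_rfl) ih x

lemma iter_kernel (p : (Fin d → ℤ) → ℝ≥0∞) (k : ℕ) :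
    ∃ pk : (Fin d → ℤ) → ℝ≥0∞, ∀ u, (op p)^[k] u = op pk u := by
  induction k with
  | zero =>
    refine ⟨fun y => if y = 0 then 1 else 0, fun u => ?_⟩
    funext x
    simp only [Function.iterate_zero, id]
    unfold op
    rw [tsum_eq_single 0]
    · simp
    · intro y hy; simp [hy]
  | succ k ih =>
    obtain ⟨pk, h⟩ := ih
    refine ⟨fun x => ∑' y, p y * pk (x - y), fun u => ?_⟩
    funext x
    rw [Function.iterate_succ_apply', h, op_conv]

/-- weight -/
def wR (X : ℝ) (x : Fin d → ℤ) : ℝ := X ^ 2 / (X ^ 2 + sqNorm x ^ 2)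
def wE (X : ℝ) (x : Fin d → ℤ) : ℝ≥0∞ := ENNReal.ofReal (wR X x)

lemma wR_nonneg (X : ℝ) (x : Fin d → ℤ) : 0 ≤ wR X x := by unfold wR; positivity

lemma wR_le_one (X : ℝ) (x : Fin d → ℤ) : wR X x ≤ 1 := by
  unfold wR
  exact div_le_one_of_le₀ (by nlinarith [sq_nonneg (sqNorm x)]) (by positivity)

lemma wE_le_one (X : ℝ) (x : Fin d → ℤ) : wE X x ≤ 1 := by
  unfold wE; rw [← ENNReal.ofReal_one]; exact ENNReal.ofReal_le_ofReal (wR_le_one X x)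

lemma wR_mono {X Y : ℝ} (hX : 0 < X) (h : X ≤ Y) (x : Fin d → ℤ) : wR X x ≤ wR Y x := by
  unfold wR
  have h2 : X ^ 2 ≤ Y ^ 2 := by gcongr
  have : 0 < Y := hX.trans_le h
  rw [div_le_div_iff₀ (by positivity) (by positivity)]
  nlinarith [sq_nonneg (sqNorm x)]

lemma wR_tail {X : ℝ} (hX : 0 < X) {c : ℝ} (hc : 0 < c) {x : Fin d → ℤ} (h : c * X ≤ sqNorm x) :
    wR X x ≤ 1 / c ^ 2 := by
  unfold wR
  have h2 : (c * X) ^ 2 ≤ sqNorm x ^ 2 := by gcongr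
  rw [div_le_div_iff₀ (by positivity) (by positivity)]
  nlinarith [sq_nonneg X]

lemma w_bound (hd : 3 ≤ d) {n : ℕ} (hn : 0 < n) {X h : ℝ} (hX : 0 < X)
    (hh : h ^ 2 = 1 / (((n ^ 20 : ℕ) : ℝ) * X)) (x : Fin d → ℤ) :
    wR X x ≤ 4 / n ^ 42 * DN (n ^ 7) hd h x + (36 / n ^ 36 * DN (n ^ 4) hd h x + 9 / n ^ 24) := by
  have hn' : (0 : ℝ) < n := by exact_mod_cast hn
  have d1 := DN_nonneg (n ^ 7) hd h x
  have d2 := DN_nonneg (n ^ 4) hd h x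
  have t1 : 0 ≤ 4 / (n : ℝ) ^ 42 * DN (n ^ 7) hd h x := by positivity
  have t2 : 0 ≤ 36 / (n : ℝ) ^ 36 * DN (n ^ 4) hd h x := by positivity
  have t3 : 0 ≤ 9 / (n : ℝ) ^ 24 := by positivity
  push_cast at hh
  by_cases c1 : sqNorm x ≤ n ^ 6 / 3 * X
  · have := DN_lower (n ^ 7) hd h x (by
      rw [hh]; push_cast
      calc 3 * (1 / ((n : ℝ) ^ 20 * X)) * ((n : ℝ) ^ 7) ^ 2 * sqNorm x
          ≤ 3 * (1 / ((n : ℝ) ^ 20 * X)) * ((n : ℝ) ^ 7) ^ 2 * (n ^ 6 / 3 * X) := by gcongr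
        _ = 1 := by field_simp)
    push_cast at this
    have h1 : 1 ≤ 4 / (n : ℝ) ^ 42 * DN (n ^ 7) hd h x := by
      calc 1 = 4 / (n : ℝ) ^ 42 * ((n ^ 7) ^ 6 / 4) := by field_simp
        _ ≤ _ := by gcongr
    have := wR_le_one X x
    linarith
  · by_cases c2 : sqNorm x ≤ n ^ 12 / 3 * X
    · have := DN_lower (n ^ 4) hd h x (by
        rw [hh]; push_cast
        calc 3 * (1 / ((n : ℝ) ^ 20 * X)) * ((n : ℝ) ^ 4) ^ 2 * sqNorm x
            ≤ 3 * (1 / ((n : ℝ) ^ 20 * X)) * ((n : ℝ) ^ 4) ^ 2 * (n ^ 12 / 3 * X) := by gcongr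
          _ = 1 := by field_simp)
      push_cast at this
      have h1 : 9 / (n : ℝ) ^ 12 ≤ 36 / (n : ℝ) ^ 36 * DN (n ^ 4) hd h x := by
        calc 9 / (n : ℝ) ^ 12 = 36 / (n : ℝ) ^ 36 * ((n ^ 4) ^ 6 / 4) := by field_simp; norm_num
          _ ≤ _ := by gcongr
      have h2 := wR_tail hX (by positivity) (not_le.1 c1).le
      have h3 : 1 / ((n : ℝ) ^ 6 / 3) ^ 2 = 9 / (n : ℝ) ^ 12 := by field_simp; norm_num
      linarith
    · have h2 := wR_tail hX (by positivity) (not_le.1 c2).le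
      have h3 : 1 / ((n : ℝ) ^ 12 / 3) ^ 2 = 9 / (n : ℝ) ^ 24 := by field_simp; norm_num
      linarith

namespace Law
variable {p : (Fin d → ℤ) → ℝ≥0∞} {X B : ℝ}

lemma kmass (L : Law p X B) {k : ℕ} {pk : (Fin d → ℤ) → ℝ≥0∞} (h : ∀ u, (op p)^[k] u = op pk u) :
    mass pk = 1 := by
  rw [← op_mass_zero, ← h]
  have : (op p)^[k] (fun _ => 1) = fun _ => 1 := by
    apply Function.iterate_fixed
    funext x; rw [op_const, L.mass1, one_mul]
  rw [this]

lemma S_bound (L : Law p X B) (hd : 3 ≤ d) {n : ℕ} (hn : 0 < n) (hnB : 6 * d * B ≤ n) (x) :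
    (op p)^[n ^ 20] (wE X) x ≤ ENNReal.ofReal ((40 * CG d ^ 3 + 9) / n ^ 21) := by
  have hX := L.X0
  have hB := L.B0
  have hn' : (1 : ℝ) ≤ n := by exact_mod_cast hn
  have hd' : (3 : ℝ) ≤ d := by exact_mod_cast hd
  have C0 : 0 ≤ CG d := CG_pos
  set h : ℝ := Real.sqrt (1 / (((n ^ 20 : ℕ) : ℝ) * X)) with hdef
  have hh : h ^ 2 = 1 / (((n ^ 20 : ℕ) : ℝ) * X) := Real.sq_sqrt (by positivity)
  obtain ⟨pk, hk⟩ := iter_kernel p (n ^ 20)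
  have cond : 3 * (((n ^ 7 : ℕ) : ℝ)) ^ 2 / ((n ^ 20 : ℕ) : ℝ) ≤ 1 / (2 * d * B) := by
    push_cast
    rw [div_le_div_iff₀ (by positivity) (by positivity)]
    have h6 : (n : ℝ) ≤ (n : ℝ) ^ 6 := le_self_pow₀ hn' (by norm_num)
    have : 3 * ((n : ℝ) ^ 7) ^ 2 * (2 * d * B) = (6 * d * B) * (n : ℝ) ^ 14 := by ring
    rw [this]
    calc (6 * d * B) * (n : ℝ) ^ 14 ≤ (n : ℝ) ^ 6 * (n : ℝ) ^ 14 := by gcongr; linarith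
      _ = 1 * (n : ℝ) ^ 20 := by ring
  have cond2 : 3 * (((n ^ 4 : ℕ) : ℝ)) ^ 2 / ((n ^ 20 : ℕ) : ℝ) ≤ 1 / (2 * d * B) := by
    refine le_trans ?_ cond
    have : ((n ^ 4 : ℕ) : ℝ) ≤ ((n ^ 7 : ℕ) : ℝ) := by
      exact_mod_cast Nat.pow_le_pow_right hn (by norm_num)
    gcongr
  have D1 := DN_upper L hd (n ^ 7) (n ^ 20) (pow_pos hn 20) hh cond x
  have D2 := DN_upper L hd (n ^ 4) (n ^ 20) (pow_pos hn 20) hh cond2 x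
  rw [hk] at D1 D2 ⊢
  have wb : ∀ y, wE X y ≤ ENNReal.ofReal (4 / n ^ 42) * ENNReal.ofReal (DN (n ^ 7) hd h y) +
      (ENNReal.ofReal (36 / n ^ 36) * ENNReal.ofReal (DN (n ^ 4) hd h y) + ENNReal.ofReal (9 / n ^ 24)) := by
    intro y
    have d1 := DN_nonneg (n ^ 7) hd h y
    have d2 := DN_nonneg (n ^ 4) hd h y
    rw [← ENNReal.ofReal_mul (by positivity), ← ENNReal.ofReal_mul (by positivity),
      ← ENNReal.ofReal_add (by positivity) (by positivity),
      ← ENNReal.ofReal_add (by positivity) (by positivity)]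
    exact ENNReal.ofReal_le_ofReal (w_bound hd hn hX hh y)
  refine (op_mono (fun _ => le_rfl) wb x).trans ?_
  rw [op_add, op_add, op_cmul, op_cmul, op_const, L.kmass hk, one_mul]
  refine (add_le_add (mul_le_mul' le_rfl D1) (add_le_add (mul_le_mul' le_rfl D2) le_rfl)).trans ?_
  rw [← ENNReal.ofReal_mul (by positivity), ← ENNReal.ofReal_mul (by positivity),
      ← ENNReal.ofReal_add (by positivity) (by positivity),
      ← ENNReal.ofReal_add (by positivity) (by positivity)]
  apply ENNReal.ofReal_le_ofReal
  push_cast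
  have e1 : 4 / (n : ℝ) ^ 42 * (((n : ℝ) ^ 7) ^ 3 * CG d ^ 3) = 4 * CG d ^ 3 / n ^ 21 := by
    field_simp
  have e2 : 36 / (n : ℝ) ^ 36 * (((n : ℝ) ^ 4) ^ 3 * CG d ^ 3) = 36 * CG d ^ 3 / n ^ 24 := by
    field_simp
  have le : (n : ℝ) ^ 21 ≤ (n : ℝ) ^ 24 := pow_le_pow_right₀ hn' (by norm_num)
  have a1 : 36 * CG d ^ 3 / (n : ℝ) ^ 24 ≤ 36 * CG d ^ 3 / (n : ℝ) ^ 21 := by gcongr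
  have a2 : 9 / (n : ℝ) ^ 24 ≤ 9 / (n : ℝ) ^ 21 := by gcongr
  rw [e1, e2, show (40 * CG d ^ 3 + 9) / (n : ℝ) ^ 21 = 4 * CG d ^ 3 / n ^ 21 + (36 * CG d ^ 3 / (n : ℝ) ^ 21 + 9 / (n : ℝ) ^ 21) by ring]
  linarith

lemma iter_q2 (L : Law p X B) (k : ℕ) (x) :
    (op p)^[k] (fun y => qE y ^ 2) x ≤ qE x ^ 2 + (6 * (k * Q p) * qE x + (k * Q2 p + 3 * k ^ 2 * Q p ^ 2)) := by
  induction k generalizing x with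
  | zero => simp
  | succ k ih =>
    rw [Function.iterate_succ_apply']
    refine (op_mono (fun _ => le_rfl) ih x).trans ?_
    rw [op_add, op_add, op_cmul, op_const, op_q L.even, L.mass1]
    have := op_q2 L.even x
    rw [L.mass1] at this
    refine (add_le_add this le_rfl).trans ?_
    push_cast
    have e : 1 * qE x ^ 2 + 6 * Q p * qE x + Q2 p + (6 * (↑k * Q p) * (1 * qE x + Q p) +
        1 * (↑k * Q2 p + 3 * ↑k ^ 2 * Q p ^ 2)) + 3 * Q p ^ 2 =
        qE x ^ 2 + (6 * ((↑k + 1) * Q p) * qE x + ((↑k + 1) * Q2 p + 3 * (↑k + 1) ^ 2 * Q p ^ 2)) := by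
      ring
    rw [← e]
    exact le_self_add

lemma kQ2 (L : Law p X B) {k : ℕ} (hk1 : 1 ≤ k) {pk : (Fin d → ℤ) → ℝ≥0∞} (h : ∀ u, (op p)^[k] u = op pk u) :
    Q2 pk ≤ ENNReal.ofReal ((B + 3) * k ^ 2 * X ^ 2) := by
  have hX := L.X0
  have hB := L.B0
  have hk' : (1 : ℝ) ≤ k := by exact_mod_cast hk1
  rw [← op_zero_q2, ← h]
  refine (L.iter_q2 k 0).trans ?_
  have z : qE (0 : Fin d → ℤ) = 0 := by simp [qE, sqNorm]
  rw [z, L.q1]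
  refine le_trans (b := (k : ℝ≥0∞) * ENNReal.ofReal (B * X ^ 2) + 3 * k ^ 2 * ENNReal.ofReal X ^ 2) ?_ ?_
  · have := L.q2
    simp only [ne_eq, OfNat.ofNat_ne_zero, not_false_eq_true, zero_pow, mul_zero, zero_add]
    gcongr
  · have e : (k : ℝ≥0∞) * ENNReal.ofReal (B * X ^ 2) + 3 * k ^ 2 * ENNReal.ofReal X ^ 2 =
        ENNReal.ofReal (k * (B * X ^ 2) + 3 * k ^ 2 * X ^ 2) := by
      rw [ENNReal.ofReal_add (by positivity) (by positivity), ENNReal.ofReal_mul (by positivity : (0 : ℝ) ≤ k),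
        ENNReal.ofReal_mul (by positivity : (0 : ℝ) ≤ 3 * k ^ 2),
        ENNReal.ofReal_mul (by norm_num : (0 : ℝ) ≤ 3),
        ENNReal.ofReal_pow (by positivity : (0 : ℝ) ≤ k), ENNReal.ofReal_pow hX.le]
      simp
    rw [e]
    apply ENNReal.ofReal_le_ofReal
    have : (k : ℝ) ≤ k ^ 2 := le_self_pow₀ hk' (by norm_num)
    have := mul_le_mul_of_nonneg_right this (by positivity : 0 ≤ B * X ^ 2)
    nlinarith

end Law

lemma sq_ineq (u a b : ℝ) : (u + a + b) ^ 2 ≤ 3 * (u ^ 2 + a ^ 2 + b ^ 2) := by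
  nlinarith [sq_nonneg (u - a), sq_nonneg (u - b), sq_nonneg (a - b)]

lemma sqNorm_tri (x a b : Fin d → ℤ) :
    sqNorm x ^ 2 ≤ 27 * (sqNorm (x + a + b) ^ 2 + sqNorm a ^ 2 + sqNorm b ^ 2) := by
  have h1 : sqNorm x ≤ 3 * (sqNorm (x + a + b) + sqNorm a + sqNorm b) := by
    simp only [sqNorm, ← Finset.sum_add_distrib, Finset.mul_sum]
    refine Finset.sum_le_sum fun i _ => ?_
    have := sq_ineq ((x i : ℝ) + a i + b i) (-a i) (-b i)
    simp only [Pi.add_apply, Int.cast_add]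
    nlinarith
  have h2 := pow_le_pow_left₀ (sqNorm_nonneg x) h1 2
  have h3 := sq_ineq (sqNorm (x + a + b)) (sqNorm a) (sqNorm b)
  nlinarith

lemma q2w {X : ℝ} (hX : 0 < X) (x : Fin d → ℤ) : sqNorm x ^ 2 * wR X x ≤ X ^ 2 := by
  unfold wR
  rw [← mul_div_assoc, div_le_iff₀ (by positivity)]
  nlinarith [sq_nonneg (X ^ 2)]

lemma qw_pt {X : ℝ} (hX : 0 < X) (x a b : Fin d → ℤ) :
    qE x ^ 2 * wE X (x + a + b) ≤ 27 * (ENNReal.ofReal (X ^ 2) + qE a ^ 2 * wE X (x + a + b)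
      + qE b ^ 2 * wE X (x + a + b)) := by
  have w0 := wR_nonneg X (x + a + b)
  have qa := sqNorm_nonneg a
  have qb := sqNorm_nonneg b
  have qx := sqNorm_nonneg x
  unfold qE wE
  rw [← ENNReal.ofReal_pow qx, ← ENNReal.ofReal_pow qa, ← ENNReal.ofReal_pow qb,
    ← ENNReal.ofReal_mul (by positivity), ← ENNReal.ofReal_mul (by positivity),
    ← ENNReal.ofReal_mul (by positivity), ← ENNReal.ofReal_add (by positivity) (by positivity),
    ← ENNReal.ofReal_add (by positivity) (by positivity),
    show (27 : ℝ≥0∞) = ENNReal.ofReal 27 by simp, ← ENNReal.ofReal_mul (by norm_num)]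
  apply ENNReal.ofReal_le_ofReal
  have h1 := mul_le_mul_of_nonneg_right (sqNorm_tri x a b) w0
  have h2 := q2w hX (x + a + b)
  nlinarith

lemma scale_abs {pk : (Fin d → ℤ) → ℝ≥0∞} {X : ℝ} (hX : 0 < X) (hm : mass pk = 1) {S : ℝ≥0∞}
    (hS : ∀ x, op pk (wE X) x ≤ S) (x) :
    qE x ^ 2 * op pk (op pk (wE X)) x ≤ 27 * (ENNReal.ofReal (X ^ 2) + Q2 pk * S + Q2 pk * S) := by
  have e : qE x ^ 2 * op pk (op pk (wE X)) x =
      ∑' a, ∑' b, pk a * pk b * (qE x ^ 2 * wE X (x + a + b)) := by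
    simp only [op, ← ENNReal.tsum_mul_left]
    exact tsum_congr fun a => tsum_congr fun b => by ring
  rw [e]
  have h1 : ∑' a, ∑' b, pk a * pk b * (qE x ^ 2 * wE X (x + a + b)) ≤
      27 * (∑' a, ∑' b, pk a * pk b * ENNReal.ofReal (X ^ 2)
       + ∑' a, ∑' b, pk a * pk b * (qE a ^ 2 * wE X (x + a + b))
       + ∑' a, ∑' b, pk a * pk b * (qE b ^ 2 * wE X (x + a + b))) := by
    simp only [← ENNReal.tsum_add, ← ENNReal.tsum_mul_left]
    refine ENNReal.tsum_le_tsum fun a => ENNReal.tsum_le_tsum fun b => ?_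
    refine (mul_le_mul' le_rfl (qw_pt hX x a b)).trans (le_of_eq ?_)
    ring
  refine h1.trans (mul_le_mul' le_rfl (add_le_add (add_le_add ?_ ?_) ?_))
  · have : ∀ a, ∑' b, pk a * pk b * ENNReal.ofReal (X ^ 2) = pk a * ENNReal.ofReal (X ^ 2) := by
      intro a
      rw [ENNReal.tsum_mul_right, ENNReal.tsum_mul_left]
      have : ∑' b, pk b = 1 := hm
      rw [this, mul_one]
    simp only [this]
    rw [ENNReal.tsum_mul_right]
    have : ∑' b, pk b = 1 := hm
    rw [this, one_mul]
  · unfold Q2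
    rw [← ENNReal.tsum_mul_right]
    refine ENNReal.tsum_le_tsum fun a => ?_
    refine le_trans (le_of_eq ?_) (mul_le_mul' le_rfl (hS (x + a)))
    simp only [op, ← ENNReal.tsum_mul_left]
    exact tsum_congr fun b => by ring
  · rw [ENNReal.tsum_comm]
    unfold Q2
    rw [← ENNReal.tsum_mul_right]
    refine ENNReal.tsum_le_tsum fun b => ?_
    refine le_trans (le_of_eq ?_) (mul_le_mul' le_rfl (hS (x + b)))
    simp only [op, ← ENNReal.tsum_mul_left]
    exact tsum_congr fun a => by rw [add_right_comm x b a]; ring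

lemma contraction (hd : 3 ≤ d) {B : ℝ} (hB : 10 < B) :
    ∃ T : ℕ, 1 ≤ T ∧ ∃ η : ℝ, 0 ≤ η ∧ η * T ≤ 1 / 8 ∧
      ∀ (p : (Fin d → ℤ) → ℝ≥0∞) (X : ℝ), Law p X B →
        ∀ x, (op p)^[T] (wE X) x ≤ ENNReal.ofReal η * wE (T * X) x := by
  have C0 : 0 ≤ CG d := CG_pos
  obtain ⟨n, hn⟩ := exists_nat_ge (1 + 6 * d * B + 8 * (2 * (14 * B + 42) * (40 * CG d ^ 3 + 9) + 14))
  have g1 : 0 ≤ 6 * d * B := by positivity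
  have g2 : 0 ≤ 8 * (2 * (14 * B + 42) * (40 * CG d ^ 3 + 9) + 14) := by positivity
  have n1 : (1 : ℝ) ≤ n := by linarith
  have n0 : 0 < n := by
    have : (0 : ℝ) < n := by linarith
    exact_mod_cast this
  have nB : 6 * d * B ≤ n := by linarith
  set S : ℝ := (40 * CG d ^ 3 + 9) / n ^ 21 with hS
  have S0 : 0 ≤ S := by positivity
  have k1 : 1 ≤ n ^ 20 := Nat.one_le_pow _ _ n0
  have kr : (1 : ℝ) ≤ (n : ℝ) ^ 20 := one_le_pow₀ n1
  refine ⟨n ^ 20 + n ^ 20, by omega, (14 * B + 42) * S + 27 / (2 * (n : ℝ) ^ 20) ^ 2, by positivity, ?_, ?_⟩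
  · push_cast
    have e : ((14 * B + 42) * S + 27 / (2 * (n : ℝ) ^ 20) ^ 2) * ((n : ℝ) ^ 20 + (n : ℝ) ^ 20) =
        2 * (14 * B + 42) * (40 * CG d ^ 3 + 9) / n + (27 / 2) / (n : ℝ) ^ 20 := by
      rw [hS]; field_simp; ring
    rw [e]
    have h1 : (27 / 2) / (n : ℝ) ^ 20 ≤ 14 / n := by
      have : (n : ℝ) ≤ (n : ℝ) ^ 20 := le_self_pow₀ n1 (by norm_num)
      gcongr; norm_num
    have h2 : (2 * (14 * B + 42) * (40 * CG d ^ 3 + 9) + 14) / n ≤ 1 / 8 := by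
      rw [div_le_div_iff₀ (by linarith) (by norm_num)]; linarith
    rw [add_div] at h2
    linarith
  · intro p X L x
    have hX := L.X0
    obtain ⟨pk, hk⟩ := iter_kernel p (n ^ 20)
    have hm := L.kmass hk
    have Sb := L.S_bound hd n0 nB
    rw [hk] at Sb
    have h1 : op pk (op pk (wE X)) x ≤ ENNReal.ofReal S := by
      refine (op_mono (fun _ => le_rfl) Sb x).trans ?_
      rw [op_const, hm, one_mul]
    have h2 := scale_abs hX hm Sb x
    have h3 := L.kQ2 k1 hk
    rw [Function.iterate_add_apply, hk, hk]
    set R := op pk (op pk (wE X)) x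
    have Rf : R ≠ ∞ := (h1.trans_lt ENNReal.ofReal_lt_top).ne
    have h1' : R.toReal ≤ S := by
      have := ENNReal.toReal_mono ENNReal.ofReal_ne_top h1
      rwa [ENNReal.toReal_ofReal S0] at this
    have h4 : qE x ^ 2 * R ≤ ENNReal.ofReal (27 * (X ^ 2 + 2 * ((B + 3) * (n : ℝ) ^ 40 * X ^ 2 * S))) := by
      refine h2.trans ?_
      refine (mul_le_mul' le_rfl (add_le_add (add_le_add le_rfl (mul_le_mul' h3 le_rfl)) (mul_le_mul' h3 le_rfl))).trans
        (le_of_eq ?_)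
      rw [← ENNReal.ofReal_mul (by positivity), ← ENNReal.ofReal_add (by positivity) (by positivity),
        ← ENNReal.ofReal_add (by positivity) (by positivity),
        show (27 : ℝ≥0∞) = ENNReal.ofReal 27 by simp, ← ENNReal.ofReal_mul (by norm_num)]
      congr 1
      push_cast; ring
    have h4' : sqNorm x ^ 2 * R.toReal ≤ 27 * (X ^ 2 + 2 * ((B + 3) * (n : ℝ) ^ 40 * X ^ 2 * S)) := by
      have := ENNReal.toReal_mono ENNReal.ofReal_ne_top h4
      rwa [ENNReal.toReal_ofReal (by positivity), ENNReal.toReal_mul, ENNReal.toReal_pow, Law.qE_toReal] at this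
    rw [wE, ← ENNReal.ofReal_mul (by positivity), ← ENNReal.ofReal_toReal Rf]
    apply ENNReal.ofReal_le_ofReal
    unfold wR
    push_cast
    rw [← mul_div_assoc, le_div_iff₀ (by positivity)]
    have e1 : ((14 * B + 42) * S + 27 / (2 * (n : ℝ) ^ 20) ^ 2) * (((n : ℝ) ^ 20 + (n : ℝ) ^ 20) * X) ^ 2
       = (14 * B + 42) * S * (4 * (n : ℝ) ^ 40 * X ^ 2) + 27 * X ^ 2 := by
      field_simp; ring
    rw [e1]
    have e2 : ((((n : ℝ) ^ 20 + (n : ℝ) ^ 20) * X) ^ 2) = 4 * (n : ℝ) ^ 40 * X ^ 2 := by ring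
    rw [e2]
    set Y := (n : ℝ) ^ 40 * X ^ 2
    have Y0 : 0 ≤ Y := by positivity
    have p1 := mul_le_mul_of_nonneg_right h1' Y0
    have p2 : 0 ≤ S * Y := by positivity
    have p3 : 0 ≤ B * (S * Y) := by positivity
    have e3 : 4 * (n : ℝ) ^ 40 * X ^ 2 = 4 * Y := by ring
    have e4 : (B + 3) * (n : ℝ) ^ 40 * X ^ 2 * S = (B + 3) * (S * Y) := by ring
    rw [e4] at h4'
    rw [e3]
    nlinarith

end Stab

namespace Stab
open scoped ENNReal Topology
open Filter
variable {d : ℕ} {c₀ : ℝ}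

def rX (M : Model d c₀) (t : ℝ) : ℝ := rV M t / rchi M t

lemma effStep_eq (M : Model d c₀) (s : ℝ) : M.effStep s = fun y => (M.chi s)⁻¹ * M.F s y := by
  funext y; unfold Model.effStep; rw [div_eq_mul_inv, mul_comm]

lemma model_law (M : Model d c₀) (hc : 0 < c₀) {b δ : ℝ} (hb : ENNReal.ofReal b < M.βc)
    (S : Sys (rchi M) (rV M) (rU M) b δ) {s : ℝ} (h0 : 0 ≤ s) (hs : s ≤ b) :
    Law (M.effStep s) (rX M s) (BB d c₀) := by
  have hsb := ofReal_lt_of_le M hs hb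
  have c1 := one_le_chi M h0 hsb
  have cne := chi_ne M h0 hsb
  have c0 : M.chi s ≠ 0 := (lt_of_lt_of_le one_pos c1).ne'
  have r1 := rchi_one_le M h0 hsb
  have v0 := rV_pos M hc h0 hsb
  have u0 := rU_pos M hc h0 hsb
  have q1 := (Q_F_lt M h0 hsb).ne
  have q2 := (Q2_F_lt M h0 hsb).ne
  have key : ∀ A : ℝ≥0∞, A ≠ ∞ → (M.chi s)⁻¹ * A = ENNReal.ofReal (A.toReal / rchi M s) := by
    intro A hA
    have : (M.chi s)⁻¹ * A ≠ ∞ := ENNReal.mul_ne_top (ENNReal.inv_ne_top.2 c0) hA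
    rw [← ENNReal.ofReal_toReal this, ENNReal.toReal_mul, ENNReal.toReal_inv, rchi, div_eq_inv_mul]
  refine ⟨?_, ?_, ?_, BB_gt hc, ?_, ?_⟩
  · intro π e x
    unfold Model.effStep
    rw [F_symm M s π e x]
  · rw [effStep_eq]; unfold mass
    rw [ENNReal.tsum_mul_left]
    have := mass_F M s
    unfold mass at this
    rw [this, ENNReal.inv_mul_cancel c0 cne]
  · unfold rX; positivity
  · rw [effStep_eq]; unfold Q
    simp only [mul_assoc]
    rw [ENNReal.tsum_mul_left]
    exact key _ q1
  · rw [effStep_eq]; unfold Q2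
    simp only [mul_assoc]
    rw [ENNReal.tsum_mul_left]
    refine (key _ q2).le.trans (ENNReal.ofReal_le_ofReal ?_)
    have f := S.fourth (BB_gt hc) (init4 M hc) h0 hs
    change rU M s / rchi M s ≤ _
    unfold rX
    rw [div_pow, ← mul_div_assoc, div_le_div_iff₀ (by positivity) (by positivity)]
    nlinarith

lemma op_F_eff (M : Model d c₀) {s : ℝ} (h0 : 0 ≤ s) (hs : ENNReal.ofReal s < M.βc) (u) (z) :
    op (M.F s) u z = M.chi s * op (M.effStep s) u z := by
  have c1 := one_le_chi M h0 hs
  have cne := chi_ne M h0 hs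
  have c0 : M.chi s ≠ 0 := (lt_of_lt_of_le one_pos c1).ne'
  rw [effStep_eq, op_smul, ← mul_assoc, ENNReal.mul_inv_cancel c0 cne, one_mul]

lemma iter_le_one {p : (Fin d → ℤ) → ℝ≥0∞} (hp : mass p = 1) {u : (Fin d → ℤ) → ℝ≥0∞} (hu : ∀ x, u x ≤ 1)
    (k : ℕ) (x) : (op p)^[k] u x ≤ 1 := by
  induction k generalizing x with
  | zero => exact hu x
  | succ k ih =>
    rw [Function.iterate_succ_apply']
    refine (op_mono (fun _ => le_rfl) ih x).trans ?_
    rw [op_const, hp, one_mul]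

lemma iterate_upper (M : Model d c₀) {s t : ℝ} (h0 : 0 ≤ s) (h : s ≤ t) (ht : ENNReal.ofReal t < M.βc)
    (hp : mass (M.effStep s) = 1)
    {Y : ℝ≥0∞} (hY1 : 1 ≤ Y) (hY : ENNReal.ofReal (t - s) * M.chi s ≤ Y)
    {u : (Fin d → ℤ) → ℝ≥0∞} (hu : ∀ x, u x ≤ 1) (m : ℕ) (z) :
    op (M.F t) u z ≤ m * Y ^ m * M.chi s + Y ^ m * op (M.F t) ((op (M.effStep s))^[m] u) z := by
  have hs := ofReal_lt_of_le M h ht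
  have step : ∀ v : (Fin d → ℤ) → ℝ≥0∞, (∀ x, op (M.effStep s) v x ≤ 1) →
      op (M.F t) v z ≤ M.chi s + Y * op (M.F t) (op (M.effStep s) v) z := by
    intro v hv
    refine (upper_F M h0 h ht v z).trans (add_le_add ?_ ?_)
    · rw [op_F_eff M h0 hs]
      exact (mul_le_mul' le_rfl (hv z)).trans (by rw [mul_one])
    · rw [op_F_eff M h0 hs, ← mul_assoc, op_comm]
      exact mul_le_mul' hY le_rfl
  induction m with
  | zero => simp
  | succ m ih =>
    have s1 := step ((op (M.effStep s))^[m] u) (fun x => by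
      have := iter_le_one hp hu (m + 1) x
      rwa [Function.iterate_succ_apply'] at this)
    rw [Function.iterate_succ_apply']
    refine ih.trans ((add_le_add le_rfl (mul_le_mul' le_rfl s1)).trans ?_)
    have hpow : Y ^ m ≤ Y ^ (m + 1) := pow_le_pow_right₀ hY1 (Nat.le_succ m)
    calc m * Y ^ m * M.chi s + Y ^ m * (M.chi s + Y * op (M.F t) (op (M.effStep s) ((op (M.effStep s))^[m] u)) z)
        = (m + 1) * Y ^ m * M.chi s + Y ^ (m + 1) * op (M.F t) (op (M.effStep s) ((op (M.effStep s))^[m] u)) z := by ring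
      _ ≤ (m + 1) * Y ^ (m + 1) * M.chi s + Y ^ (m + 1) * op (M.F t) (op (M.effStep s) ((op (M.effStep s))^[m] u)) z := by
          gcongr
      _ = _ := by push_cast; rfl

/-- pairing -/
def pr (M : Model d c₀) (t s : ℝ) : ℝ := (op (M.F t) (wE (rX M s)) 0).toReal

lemma op_w_le (M : Model d c₀) (t X : ℝ) : op (M.F t) (wE X) 0 ≤ M.chi t := by
  refine (op_mono (fun _ => le_rfl) (wE_le_one X) 0).trans ?_
  rw [op_const, mul_one, mass_F]

lemma main_ind (M : Model d c₀) (hc : 0 < c₀) {b : ℝ} {T : ℕ} (hT : 1 ≤ T) {η : ℝ} (hη : 0 ≤ η)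
    (hηT : η * T ≤ 1 / 8)
    (hcon : ∀ (p : (Fin d → ℤ) → ℝ≥0∞) (X : ℝ), Law p X (BB d c₀) →
        ∀ x, (op p)^[T] (wE X) x ≤ ENNReal.ofReal η * wE (T * X) x)
    (hb : ENNReal.ofReal b < M.βc)
    (S : Sys (rchi M) (rV M) (rU M) b (1 / (10 * T))) {t : ℝ} (ht : t ≤ b) (m : ℕ) :
    ∀ s, 0 ≤ s → s ≤ t → rchi M t ≤ (2 * T) ^ (m + 1) * rchi M s → pr M t s ≤ 4 * T * rchi M s := by
  have hT' : (1 : ℝ) ≤ T := by exact_mod_cast hT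
  have htb := ofReal_lt_of_le M ht hb
  have pr_le : ∀ s, 0 ≤ s → s ≤ t → pr M t s ≤ rchi M t := fun s h0 h =>
    ENNReal.toReal_mono (chi_ne M (h0.trans h) htb) (op_w_le M t _)
  have small : ∀ s, 0 ≤ s → s ≤ t → rchi M t ≤ 2 * T * rchi M s → pr M t s ≤ 4 * T * rchi M s := by
    intro s h0 h hh
    have := S.one s ⟨h0, h.trans ht⟩
    have := pr_le s h0 h
    nlinarith
  induction m with
  | zero => intro s h0 h hh; exact small s h0 h (by simpa using hh)
  | succ m ih =>
    intro s h0 h hh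
    by_cases hK : rchi M t ≤ 2 * T * rchi M s
    · exact small s h0 h hK
    push Not at hK
    have hsb := h.trans ht
    have c1 := S.one s ⟨h0, hsb⟩
    have v1 := S.vp s ⟨h0, hsb⟩
    obtain ⟨r, ⟨hr1, hr2⟩, hr⟩ := intermediate_value_Icc h
      (S.cχ.mono (Set.Icc_subset_Icc h0 ht)) (show 2 * T * rchi M s ∈ Set.Icc (rchi M s) (rchi M t) from
        ⟨by nlinarith, hK.le⟩)
    have r0 := h0.trans hr1
    have cr := S.one r ⟨r0, hr2.trans ht⟩
    have vr := S.vp r ⟨r0, hr2.trans ht⟩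
    have ihr := ih r r0 hr2 (by rw [hr]; refine hh.trans (le_of_eq ?_); ring)
    -- scale comparison
    have hX : T * rX M s ≤ rX M r := by
      have g := S.growth h0 hr1 (hr2.trans ht)
      have l1 : Real.log (rchi M r) = Real.log 2 + Real.log T + Real.log (rchi M s) := by
        rw [hr, Real.log_mul (by positivity) (by positivity), Real.log_mul (by norm_num) (by positivity)]
      have l2 : Real.log T ≤ T - 1 := Real.log_le_sub_one_of_pos (by positivity)
      have l3 : Real.log 2 ≤ 1 := by linarith [Real.log_two_lt_d9]
      have l4 := Real.log_two_gt_d9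
      have l5 : 2 * (1 / (10 * (T : ℝ))) * (Real.log 2 + Real.log T) ≤ 1 / 5 := by
        calc 2 * (1 / (10 * (T : ℝ))) * (Real.log 2 + Real.log T) ≤ 2 * (1 / (10 * (T : ℝ))) * T := by
              gcongr; linarith
          _ = 1 / 5 := by field_simp; norm_num
      unfold rX
      have v0 : 0 < rV M s / rchi M s := by positivity
      rw [← Real.log_le_log_iff (by positivity) (by positivity),
        Real.log_mul (by positivity) (by positivity), Real.log_div (by positivity) (by positivity),
        Real.log_div (by positivity) (by positivity)]
      rw [l1] at g ⊢
      nlinarith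
    -- contraction
    have L := model_law M hc hb S h0 hsb
    have X0 := L.X0
    set Y : ℝ := 1 / (1 - 1 / (10 * (T : ℝ))) with hY
    have dl : 1 / (10 * (T : ℝ)) ≤ 1 / 10 := by
      apply one_div_le_one_div_of_le (by norm_num); linarith
    have dp : 0 < 1 / (10 * (T : ℝ)) := by positivity
    have d1 : 0 < 1 - 1 / (10 * (T : ℝ)) := by linarith
    have Y1 : 1 ≤ Y := by rw [hY, le_div_iff₀ d1]; linarith
    have YT : Y ^ T ≤ 2 := by
      have := one_add_mul_le_pow (a := -(1 / (10 * (T : ℝ)))) (by linarith) T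
      have e : (T : ℝ) * -(1 / (10 * (T : ℝ))) = -(1 / 10) := by field_simp
      rw [e, ← sub_eq_add_neg 1 (1 / (10 * (T : ℝ)))] at this
      rw [hY, div_pow, one_pow, div_le_iff₀ (by positivity)]
      linarith
    have Z := S.Z_le h0 h ht
    have hZ : ENNReal.ofReal (t - s) * M.chi s ≤ ENNReal.ofReal Y := by
      rw [← ENNReal.ofReal_toReal (chi_ne M h0 (ofReal_lt_of_le M hsb hb)),
        ← ENNReal.ofReal_mul (by linarith)]
      apply ENNReal.ofReal_le_ofReal
      rw [hY, le_div_iff₀ d1]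
      change (t - s) * rchi M s * _ ≤ 1
      linarith
    have it := iterate_upper M h0 h htb L.mass1 (Y := ENNReal.ofReal Y) (by
      rw [← ENNReal.ofReal_one]; exact ENNReal.ofReal_le_ofReal Y1) hZ (wE_le_one (rX M s)) T 0
    have up : op (M.F t) (wE (rX M s)) 0 ≤
        ENNReal.ofReal (T * 2) * M.chi s + ENNReal.ofReal (2 * η) * op (M.F t) (wE (rX M r)) 0 := by
      have yp : ENNReal.ofReal Y ^ T ≤ 2 := by
        rw [← ENNReal.ofReal_pow (by linarith), show (2 : ℝ≥0∞) = ENNReal.ofReal 2 by simp]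
        exact ENNReal.ofReal_le_ofReal YT
      refine it.trans (add_le_add ?_ ?_)
      · rw [ENNReal.ofReal_mul (by positivity)]
        simp only [ENNReal.ofReal_natCast, ENNReal.ofReal_ofNat]
        gcongr
      · rw [ENNReal.ofReal_mul (by norm_num)]
        simp only [ENNReal.ofReal_ofNat]
        rw [mul_assoc, ← op_cmul (M.F t) (wE (rX M r)) (ENNReal.ofReal η) 0]
        refine mul_le_mul' yp (op_mono (fun _ => le_rfl) (fun x => ?_) 0)
        refine (hcon _ _ L x).trans (mul_le_mul' le_rfl ?_)
        exact ENNReal.ofReal_le_ofReal (wR_mono (by positivity) hX x)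
    have cs := chi_ne M h0 (ofReal_lt_of_le M hsb hb)
    have ct := chi_ne M (h0.trans h) htb
    have of : op (M.F t) (wE (rX M r)) 0 ≠ ∞ := ((op_w_le M t _).trans_lt ct.lt_top).ne
    have t1 : ENNReal.ofReal (T * 2) * M.chi s ≠ ∞ := ENNReal.mul_ne_top ENNReal.ofReal_ne_top cs
    have t2 := ENNReal.mul_ne_top (ENNReal.ofReal_ne_top (r := 2 * η)) of
    have fin := ENNReal.toReal_mono (ENNReal.add_ne_top.2 ⟨t1, t2⟩) up
    rw [ENNReal.toReal_add t1 t2, ENNReal.toReal_mul, ENNReal.toReal_mul,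
      ENNReal.toReal_ofReal (by positivity), ENNReal.toReal_ofReal (by positivity)] at fin
    change pr M t s ≤ T * 2 * rchi M s + 2 * η * pr M t r at fin
    rw [hr] at ihr
    have f2 : 2 * η * pr M t r ≤ 2 * η * (4 * T * (2 * T * rchi M s)) :=
      mul_le_mul_of_nonneg_left ihr (by positivity)
    have f3 : 2 * η * (4 * T * (2 * T * rchi M s)) = 16 * (η * T) * (T * rchi M s) := by ring
    have f4 : 16 * (η * T) * (T * rchi M s) ≤ 2 * (T * rchi M s) := by
      have : 0 ≤ T * rchi M s := by positivity
      nlinarith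
    linarith

lemma main_pr (M : Model d c₀) (hc : 0 < c₀) {b : ℝ} {T : ℕ} (hT : 1 ≤ T) {η : ℝ} (hη : 0 ≤ η)
    (hηT : η * T ≤ 1 / 8)
    (hcon : ∀ (p : (Fin d → ℤ) → ℝ≥0∞) (X : ℝ), Law p X (BB d c₀) →
        ∀ x, (op p)^[T] (wE X) x ≤ ENNReal.ofReal η * wE (T * X) x)
    (hb : ENNReal.ofReal b < M.βc)
    (S : Sys (rchi M) (rV M) (rU M) b (1 / (10 * T))) {s t : ℝ} (h0 : 0 ≤ s) (h : s ≤ t) (ht : t ≤ b) :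
    op (M.F t) (wE (rX M s)) 0 ≤ ENNReal.ofReal (4 * T) * M.chi s := by
  have hT' : (1 : ℝ) ≤ T := by exact_mod_cast hT
  have c1 := S.one s ⟨h0, h.trans ht⟩
  obtain ⟨m, hm⟩ := pow_unbounded_of_one_lt (rchi M t) (show (1 : ℝ) < 2 * T by linarith)
  have := main_ind M hc hT hη hηT hcon hb S ht m s h0 h (by
    have : (2 * (T : ℝ)) ^ m ≤ (2 * T) ^ (m + 1) := pow_le_pow_right₀ (by linarith) (Nat.le_succ m)
    have p0 : 0 < (2 * (T : ℝ)) ^ (m + 1) := by positivity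
    nlinarith)
  have ct := chi_ne M (h0.trans h) (ofReal_lt_of_le M ht hb)
  have cs := chi_ne M h0 (ofReal_lt_of_le M (h.trans ht) hb)
  have of : op (M.F t) (wE (rX M s)) 0 ≠ ∞ := ((op_w_le M t _).trans_lt ct.lt_top).ne
  rw [← ENNReal.ofReal_toReal of, ← ENNReal.ofReal_toReal cs, ← ENNReal.ofReal_mul (by positivity)]
  exact ENNReal.ofReal_le_ofReal this

lemma ind_le (M : Model d c₀) {s : ℝ} (hX : 0 < rX M s) {x : Fin d → ℤ} (hx : supNorm x ≤ M.xi s) :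
    1 ≤ (1 + (d : ℝ) ^ 2) * wR (rX M s) x := by
  have h1 : M.xi s ^ 2 = rX M s := by
    unfold Model.xi
    rw [xiSq_toReal]
    exact Real.sq_sqrt hX.le
  have h2 : sqNorm x ≤ d * rX M s := by
    refine (sqNorm_le x).trans ?_
    rw [← h1]
    have := supNorm_nonneg x
    gcongr
  have h3 : sqNorm x ^ 2 ≤ (d * rX M s) ^ 2 := pow_le_pow_left₀ (sqNorm_nonneg x) h2 2
  unfold wR
  rw [← mul_div_assoc, le_div_iff₀ (by positivity)]
  nlinarith

lemma main_sum (M : Model d c₀) {s t : ℝ} (hX : 0 < rX M s) {K : ℝ} (hK : 0 ≤ K)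
    (h : op (M.F t) (wE (rX M s)) 0 ≤ ENNReal.ofReal K * M.chi s) :
    (∑' x : {x : Fin d → ℤ // supNorm x ≤ M.xi s}, M.F t x.1) ≤
      ENNReal.ofReal ((1 + (d : ℝ) ^ 2) * K) * M.chi s := by
  have h1 : (∑' x : {x : Fin d → ℤ // supNorm x ≤ M.xi s}, M.F t x.1) ≤
      ENNReal.ofReal (1 + (d : ℝ) ^ 2) * op (M.F t) (wE (rX M s)) 0 := by
    refine le_trans (ENNReal.tsum_le_tsum (g := fun x : {x : Fin d → ℤ // supNorm x ≤ M.xi s} =>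
      ENNReal.ofReal (1 + (d : ℝ) ^ 2) * (M.F t x.1 * wE (rX M s) x.1)) fun x => ?_) ?_
    · have := ENNReal.ofReal_le_ofReal (ind_le M hX x.2)
      rw [ENNReal.ofReal_one, ENNReal.ofReal_mul (by positivity)] at this
      calc M.F t x.1 = M.F t x.1 * 1 := (mul_one _).symm
        _ ≤ M.F t x.1 * (ENNReal.ofReal (1 + (d : ℝ) ^ 2) * wE (rX M s) x.1) := mul_le_mul' le_rfl this
        _ = _ := by ring
    · rw [ENNReal.tsum_mul_left]
      refine mul_le_mul' le_rfl ?_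
      refine (ENNReal.tsum_comp_le_tsum_of_injective Subtype.val_injective
        (fun x => M.F t x * wE (rX M s) x)).trans ?_
      simp [op]
  refine h1.trans ((mul_le_mul' le_rfl h).trans ?_)
  rw [← mul_assoc, ← ENNReal.ofReal_mul (by positivity)]

lemma exists_b (M : Model d c₀) {δ β : ℝ} (h0 : 0 ≤ β) (h : β < M.betaOf δ) :
    ∃ b, β < b ∧ ENNReal.ofReal b < M.βc ∧ M.E b < ENNReal.ofReal δ := by
  unfold Model.betaOf at h
  rcases Set.eq_empty_or_nonempty
    {β : ℝ | 0 ≤ β ∧ ENNReal.ofReal β < M.βc ∧ M.E β < ENNReal.ofReal δ} with he | hne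
  · rw [he, Real.sSup_empty] at h; linarith
  · obtain ⟨b, hb, hlt⟩ := exists_lt_of_lt_csSup hne h
    exact ⟨b, hlt, hb.2.1, hb.2.2⟩

end Stab

/-- stability of the finite-volume susceptibility
(`Prop:Stability section 2`). -/
theorem statement12 (d : ℕ) (hd : 2 < d) (c₀ : ℝ) (hc₀ : c₀ ∈ Set.Ioc (0:ℝ) 1) :
    ∃ δstab : ℝ, δstab ∈ Set.Ioc (0:ℝ) (1/10) ∧ ∃ Cstab > (0:ℝ),
      ∀ M : Model d c₀, ∀ β β' : ℝ, 0 ≤ β' → β' ≤ β → β < M.betaOf δstab →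
        (∑' x : {x : Fin d → ℤ // supNorm x ≤ M.xi β'}, M.F β x.1) ≤
            ENNReal.ofReal Cstab * M.chi β' ∧
        (∑' x : {x : Fin d → ℤ // supNorm x ≤ M.xi β'}, M.effStep β x.1) ≤
            ENNReal.ofReal Cstab * (M.chi β' / M.chi β) := by
  have hc := hc₀.1
  obtain ⟨T, hT, η, hη, hηT, hcon⟩ := Stab.contraction (d := d) hd (Stab.BB_gt (d := d) hc)
  have hT' : (1 : ℝ) ≤ T := by exact_mod_cast hT
  have dp : 0 < 1 / (10 * (T : ℝ)) := by positivity
  have dl : 1 / (10 * (T : ℝ)) ≤ 1 / 10 := by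
    apply one_div_le_one_div_of_le (by norm_num); linarith
  refine ⟨1 / (10 * T), ⟨dp, dl⟩, (1 + (d : ℝ) ^ 2) * (4 * T), by positivity, ?_⟩
  intro M β β' h0 h hβ
  obtain ⟨b, hlt, hb, hE⟩ := Stab.exists_b M (h0.trans h) hβ
  have S := Stab.model_sys M hc dp dl ((h0.trans h).trans hlt.le) hb hE
  have main := Stab.main_pr M hc hT hη hηT hcon hb S h0 h hlt.le
  have X0 := (Stab.model_law M hc hb S h0 (h.trans hlt.le)).X0
  have A := Stab.main_sum M X0 (by positivity) main
  refine ⟨A, ?_⟩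
  simp only [Model.effStep, div_eq_mul_inv]
  rw [ENNReal.tsum_mul_right, ← mul_assoc]
  exact mul_le_mul' A le_rfl
end
end

section
/- Let d > 2 be an integer, J an admissible kernel on ℤ^d, and G ∈ 𝒢 with (J,G) satisfying Assumption G. Then for every 0 ≤ β' ≤ β < β_c: (i) (β−β')·(1−E(β)) ≤ 1/χ(β') − 1/χ(β) ≤ β−β'; (ii) if E(β) < 1, then (χ(β')/χ(β))^{(1+E(β))/(1−E(β))} ≤ (ξ(β')/ξ(β))² ≤ (χ(β')/χ(β))^{1−2E(β)}; and (iii) in particular, if E(β) ≤ 1/2 then ξ(β') ≤ ξ(β). -/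
open scoped ENNReal

noncomputable section

open Blackbox

namespace S13
open Filter Topology

theorem summable_pi (f : ℤ → ℝ) (hf0 : ∀ n, 0 ≤ f n) (hf : Summable f) (d : ℕ) :
    Summable (fun x : Fin d → ℤ => ∏ i, f (x i)) := by
  induction d with
  | zero => exact Summable.of_finite
  | succ n ih =>
    rw [← (Fin.consEquiv (fun _ : Fin (n+1) => ℤ)).summable_iff]
    have := hf.mul_of_nonneg ih hf0 (fun x => Finset.prod_nonneg fun i _ => hf0 _)
    refine this.congr fun p => ?_
    simp [Fin.consEquiv, Fin.prod_univ_succ]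

theorem summable_exp_int (c : ℝ) (hc : 0 < c) : Summable (fun n : ℤ => Real.exp (-c * |(n:ℝ)|)) := by
  have h : Summable (fun n : ℕ => Real.exp (-c * (n:ℝ))) := by
    have := Real.summable_exp_nat_mul_iff (a := -c) |>.2 (by linarith)
    refine this.congr fun n => by ring_nf
  rw [summable_int_iff_summable_nat_and_neg]
  constructor
  · simpa using h
  · simpa using h

theorem abs_le_supNorm {d : ℕ} (x : Fin d → ℤ) (i : Fin d) : |(x i : ℝ)| ≤ supNorm x := by
  have := Finset.le_sup (f := fun i => (x i).natAbs) (Finset.mem_univ i)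
  unfold supNorm
  rw [← Int.cast_abs, Int.abs_eq_natAbs, Int.cast_natCast]
  exact_mod_cast this

theorem supNorm_nonneg {d : ℕ} (x : Fin d → ℤ) : 0 ≤ supNorm x := Nat.cast_nonneg _

theorem sqNorm_nonneg {d : ℕ} (x : Fin d → ℤ) : 0 ≤ sqNorm x :=
  Finset.sum_nonneg fun _ _ => sq_nonneg _

theorem sqNorm_le {d : ℕ} (x : Fin d → ℤ) : sqNorm x ≤ d * supNorm x ^ 2 := by
  unfold sqNorm
  calc _ ≤ ∑ i : Fin d, supNorm x ^ 2 := by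
        refine Finset.sum_le_sum fun i _ => ?_
        rw [← sq_abs]
        exact pow_le_pow_left₀ (abs_nonneg _) (abs_le_supNorm x i) 2
    _ = _ := by simp

theorem abs_le_sqNorm {d : ℕ} (x : Fin d → ℤ) (i : Fin d) : |(x i : ℝ)| ≤ sqNorm x := by
  have h1 : (x i : ℝ)^2 ≤ sqNorm x := by
    unfold sqNorm
    exact Finset.single_le_sum (f := fun i => (x i : ℝ)^2) (fun _ _ => sq_nonneg _) (Finset.mem_univ i)
  refine le_trans ?_ h1
  have : |x i| ≤ (x i)^2 := by
    rw [← sq_abs]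
    rcases eq_or_lt_of_le (abs_nonneg (x i)) with h | h
    · rw [← h]; norm_num
    · nlinarith
  exact_mod_cast this

theorem summable_exp {d : ℕ} (c : ℝ) (hc : 0 < c) :
    Summable (fun x : Fin d → ℤ => Real.exp (-c * supNorm x)) := by
  rcases Nat.eq_zero_or_pos d with rfl | hd
  · exact Summable.of_finite
  have hd' : (0:ℝ) < d := by exact_mod_cast hd
  have := summable_pi _ (fun n => (Real.exp_pos _).le) (summable_exp_int (c/d) (by positivity)) d
  refine Summable.of_nonneg_of_le (fun x => (Real.exp_pos _).le) (fun x => ?_) this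
  rw [← Real.exp_sum, Real.exp_le_exp]
  calc -c * supNorm x = ∑ i : Fin d, -(c/d) * supNorm x := by simp; field_simp
    _ ≤ _ := by
      refine Finset.sum_le_sum fun i _ => ?_
      have := abs_le_supNorm x i
      have : (c/d) * |(x i:ℝ)| ≤ (c/d) * supNorm x := by gcongr
      linarith

theorem summable_sq_exp {d : ℕ} (c : ℝ) (hc : 0 < c) :
    Summable (fun x : Fin d → ℤ => sqNorm x * Real.exp (-c * supNorm x)) := by
  refine Summable.of_nonneg_of_le (fun x => mul_nonneg (sqNorm_nonneg x) (Real.exp_pos _).le) (fun x => ?_)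
    ((summable_exp (d := d) (c/2) (by positivity)).mul_left (d * (4/c)^2))
  have h1 := sqNorm_le x
  have h0 := supNorm_nonneg x
  have h2 : (c/4 * supNorm x) ≤ Real.exp (c/4*supNorm x) := by
    linarith [Real.add_one_le_exp (c/4*supNorm x)]
  have h3 : supNorm x ^ 2 ≤ (4/c)^2 * Real.exp (c/2 * supNorm x) := by
    have : (c/4 * supNorm x)^2 ≤ Real.exp (c/4*supNorm x)^2 :=
      pow_le_pow_left₀ (by positivity) h2 2
    rw [← Real.exp_nat_mul] at this
    have e : ((2:ℕ):ℝ) * (c/4*supNorm x) = c/2*supNorm x := by push_cast; ring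
    rw [e] at this
    calc supNorm x ^ 2 = (4/c)^2 * (c/4 * supNorm x)^2 := by field_simp
      _ ≤ _ := by gcongr
  calc sqNorm x * Real.exp (-c * supNorm x)
      ≤ (d * ((4/c)^2 * Real.exp (c/2 * supNorm x))) * Real.exp (-c * supNorm x) := by
        gcongr
        exact h1.trans (by gcongr)
    _ = d * (4/c)^2 * (Real.exp (c/2 * supNorm x) * Real.exp (-c * supNorm x)) := by ring
    _ = _ := by rw [← Real.exp_add]; ring_nf

/-- zeroth and second moments of an even function -/
structure Mom {d : ℕ} (f : (Fin d → ℤ) → ℝ) (a b : ℝ) : Prop where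
  even : ∀ x, f (-x) = f x
  h0 : HasSum f a
  h2 : HasSum (fun x => sqNorm x * f x) b

theorem Mom.of_exp {d : ℕ} (f : (Fin d → ℤ) → ℝ) (he : ∀ x, f (-x) = f x) (C c : ℝ) (hc : 0 < c)
    (hf0 : ∀ x, 0 ≤ f x) (hf : ∀ x, f x ≤ C * Real.exp (-c * supNorm x)) :
    Mom f (∑' x, f x) (∑' x, sqNorm x * f x) := by
  refine ⟨he, ?_, ?_⟩
  · refine Summable.hasSum (Summable.of_nonneg_of_le hf0 hf ((summable_exp c hc).mul_left C))
  · refine Summable.hasSum (Summable.of_nonneg_of_le (fun x => mul_nonneg (sqNorm_nonneg x) (hf0 x)) (fun x => ?_)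
      ((summable_sq_exp c hc).mul_left C))
    calc _ ≤ sqNorm x * (C * Real.exp (-c * supNorm x)) :=
          mul_le_mul_of_nonneg_left (hf x) (sqNorm_nonneg x)
      _ = _ := by ring

theorem Mom.sub {d : ℕ} {f g : (Fin d → ℤ) → ℝ} {a b a' b' : ℝ} (hf : Mom f a b) (hg : Mom g a' b') :
    Mom (fun x => f x - g x) (a - a') (b - b') := by
  refine ⟨fun x => by simp only [hf.even, hg.even], hf.h0.sub hg.h0, ?_⟩
  simpa only [mul_sub] using hf.h2.sub hg.h2

theorem Mom.first {d : ℕ} {f : (Fin d → ℤ) → ℝ} {a b : ℝ} (hf : Mom f a b) (i : Fin d) :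
    HasSum (fun x => (x i : ℝ) * f x) 0 := by
  have hs : Summable (fun x => (x i : ℝ) * f x) := by
    refine Summable.of_norm_bounded hf.h2.summable.norm fun x => ?_
    rw [norm_mul, norm_mul, Real.norm_eq_abs, Real.norm_eq_abs (sqNorm x), abs_of_nonneg (sqNorm_nonneg x)]
    exact mul_le_mul_of_nonneg_right (abs_le_sqNorm x i) (norm_nonneg _)
  have h1 := hs.hasSum
  have h2 := (Equiv.neg (Fin d → ℤ)).hasSum_iff.2 h1
  have h3 := h2.neg
  have h4 : (fun x : Fin d → ℤ => -((fun x => (x i : ℝ) * f x) ∘ (Equiv.neg (Fin d → ℤ))) x) = fun x => (x i : ℝ) * f x := by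
    funext x
    simp [hf.even]
  rw [h4] at h3
  have := h3.unique h1
  have h0 : (∑' x, (x i : ℝ) * f x) = 0 := by linarith
  rwa [h0] at h1

theorem hasSum_mul {X Y : Type*} {f : X → ℝ} {g : Y → ℝ} {a b : ℝ} (hf : HasSum f a) (hg : HasSum g b) :
    HasSum (fun p : X × Y => f p.1 * g p.2) (a * b) :=
  hf.mul hg (summable_mul_of_summable_norm hf.summable.norm hg.summable.norm)

theorem sqNorm_add {d : ℕ} (y z : Fin d → ℤ) :
    sqNorm (y + z) = sqNorm y + sqNorm z + 2 * ∑ i, (y i : ℝ) * (z i : ℝ) := by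
  unfold sqNorm
  rw [Finset.mul_sum, ← Finset.sum_add_distrib, ← Finset.sum_add_distrib]
  refine Finset.sum_congr rfl fun i _ => ?_
  simp; ring

theorem Mom.prod2 {d : ℕ} {f g : (Fin d → ℤ) → ℝ} {a b a' b' : ℝ} (hf : Mom f a b) (hg : Mom g a' b') :
    HasSum (fun p : (Fin d → ℤ) × (Fin d → ℤ) => sqNorm (p.1 + p.2) * (f p.1 * g p.2)) (b * a' + a * b') := by
  have h1 := hasSum_mul hf.h2 hg.h0
  have h2 := hasSum_mul hf.h0 hg.h2
  have h3 := hasSum_sum (s := Finset.univ) fun (i : Fin d) _ => hasSum_mul (hf.first i) (hg.first i)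
  have h4 := (h1.add h2).add (h3.mul_left 2)
  convert h4 using 1
  · funext p
    rw [sqNorm_add, add_mul, add_mul, mul_assoc 2, Finset.sum_mul]
    congr 1
    · ring
    · congr 1
      exact Finset.sum_congr rfl fun i _ => by ring
  · simp

theorem Mom.prod2_first {d : ℕ} {f g : (Fin d → ℤ) → ℝ} {a b a' b' : ℝ} (hf : Mom f a b) (hg : Mom g a' b')
    (i : Fin d) :
    HasSum (fun p : (Fin d → ℤ) × (Fin d → ℤ) => ((p.1 i : ℝ) + p.2 i) * (f p.1 * g p.2)) 0 := by
  have h1 := (hasSum_mul (hf.first i) hg.h0).add (hasSum_mul hf.h0 (hg.first i))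
  convert h1 using 1
  · funext p; ring
  · simp

theorem Mom.prod3 {d : ℕ} {f k g : (Fin d → ℤ) → ℝ} {a b a' b' a'' b'' : ℝ} (hf : Mom f a b)
    (hk : Mom k a' b') (hg : Mom g a'' b'') :
    HasSum (fun p : ((Fin d → ℤ) × (Fin d → ℤ)) × (Fin d → ℤ) =>
      sqNorm (p.1.1 + p.1.2 + p.2) * (f p.1.1 * k p.1.2 * g p.2)) ((b * a' + a * b') * a'' + a * a' * b'') := by
  have h1 := hasSum_mul (hf.prod2 hk) hg.h0
  have h2 := hasSum_mul (hasSum_mul hf.h0 hk.h0) hg.h2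
  have h3 := hasSum_sum (s := Finset.univ) fun (i : Fin d) _ => hasSum_mul (hf.prod2_first hk i) (hg.first i)
  have h4 := (h1.add h2).add (h3.mul_left 2)
  convert h4 using 1
  · funext p
    rw [sqNorm_add, add_mul, add_mul, mul_assoc 2, Finset.sum_mul]
    congr 1
    · ring
    · congr 1
      exact Finset.sum_congr rfl fun i _ => by simp; ring
  · simp

/-- reindexing -/
def eq3 (d : ℕ) : (Fin d → ℤ) × ((Fin d → ℤ) × (Fin d → ℤ)) ≃ ((Fin d → ℤ) × (Fin d → ℤ)) × (Fin d → ℤ) where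
  toFun q := (q.2, q.1 - q.2.1 - q.2.2)
  invFun p := (p.1.1 + p.1.2 + p.2, p.1)
  left_inv q := by ext <;> simp
  right_inv q := by ext <;> simp; ring

def eq2 (d : ℕ) : (Fin d → ℤ) × (Fin d → ℤ) ≃ (Fin d → ℤ) × (Fin d → ℤ) where
  toFun q := (q.2, q.1 - q.2)
  invFun p := (p.1 + p.2, p.1)
  left_inv q := by ext <;> simp
  right_inv q := by ext <;> simp

/-- triple convolution -/
def conv3 {d : ℕ} (f k g : (Fin d → ℤ) → ℝ) (x : Fin d → ℤ) : ℝ :=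
  ∑' p : (Fin d → ℤ) × (Fin d → ℤ), f p.1 * k p.2 * g (x - p.1 - p.2)

section
variable {d : ℕ} {f k g : (Fin d → ℤ) → ℝ} {a b a' b' a'' b'' : ℝ}

theorem conv3_all (hf : Mom f a b) (hk : Mom k a' b') (hg : Mom g a'' b'') :
    HasSum (fun q : (Fin d → ℤ) × ((Fin d → ℤ) × (Fin d → ℤ)) =>
      f q.2.1 * k q.2.2 * g (q.1 - q.2.1 - q.2.2)) (a * a' * a'') :=
  (eq3 d).hasSum_iff.2 (hasSum_mul (hasSum_mul hf.h0 hk.h0) hg.h0)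

theorem conv3_fiber (hf : Mom f a b) (hk : Mom k a' b') (hg : Mom g a'' b'') (x : Fin d → ℤ) :
    Summable (fun p : (Fin d → ℤ) × (Fin d → ℤ) => f p.1 * k p.2 * g (x - p.1 - p.2)) :=
  (conv3_all hf hk hg).summable.prod_factor x

theorem conv3_h0 (hf : Mom f a b) (hk : Mom k a' b') (hg : Mom g a'' b'') :
    HasSum (conv3 f k g) (a * a' * a'') :=
  (conv3_all hf hk hg).prod_fiberwise fun x => (conv3_fiber hf hk hg x).hasSum

theorem conv3_h2 (hf : Mom f a b) (hk : Mom k a' b') (hg : Mom g a'' b'') :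
    HasSum (fun x => sqNorm x * conv3 f k g x) ((b * a' + a * b') * a'' + a * a' * b'') := by
  have h := (eq3 d).hasSum_iff.2 (hf.prod3 hk hg)
  refine h.prod_fiberwise fun x => ?_
  have := ((conv3_fiber hf hk hg x).hasSum).mul_left (sqNorm x)
  refine Eq.mp (congrArg (fun F => HasSum F _) (funext fun p => ?_)) this
  simp [eq3]

def conv2 {d : ℕ} (f g : (Fin d → ℤ) → ℝ) (x : Fin d → ℤ) : ℝ :=
  ∑' p : Fin d → ℤ, f p * g (x - p)

theorem conv2_fiber (hf : Mom f a b) (hg : Mom g a' b') (x : Fin d → ℤ) :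
    Summable (fun p : (Fin d → ℤ) => f p * g (x - p)) :=
  ((eq2 d).hasSum_iff.2 (hasSum_mul hf.h0 hg.h0)).summable.prod_factor x

theorem conv2_h2 (hf : Mom f a b) (hg : Mom g a' b') :
    HasSum (fun x => sqNorm x * conv2 f g x) (b * a' + a * b') := by
  have h := (eq2 d).hasSum_iff.2 (hf.prod2 hg)
  refine h.prod_fiberwise fun x => ?_
  have := ((conv2_fiber hf hg x).hasSum).mul_left (sqNorm x)
  refine Eq.mp (congrArg (fun F => HasSum F _) (funext fun p => ?_)) this
  simp [eq2]
end

theorem deriv_le_of {f φ : ℝ → ℝ} {f' L t b : ℝ} (htb : t < b) (hf : HasDerivAt f f' t)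
    (h : ∀ s, t < s → s < b → f s - f t ≤ (s - t) * φ s) (hφ : Tendsto φ (𝓝[>] t) (𝓝 L)) : f' ≤ L := by
  have h1 : Tendsto (slope f t) (𝓝[>] t) (𝓝 f') := 
    (hasDerivAt_iff_tendsto_slope.1 hf).mono_left (nhdsWithin_mono _ fun x hx => ne_of_gt hx)
  refine le_of_tendsto_of_tendsto h1 hφ ?_
  filter_upwards [Ioo_mem_nhdsGT htb] with s hs
  have := h s hs.1 hs.2
  rw [slope_def_field, div_le_iff₀ (by linarith [hs.1])]
  linarith

end S13
namespace S13
open Filter Topology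
section
variable {d : ℕ} {c₀ : ℝ} (M : Model d c₀)

def gr (t : ℝ) (x : Fin d → ℤ) : ℝ := (M.G t x).toReal
def X (t : ℝ) : ℝ := ∑' x, gr M t x
def V (t : ℝ) : ℝ := ∑' x, sqNorm x * gr M t x
def S : ℝ := ∑' x, sqNorm x * M.K.J x

/-- admissible parameters -/
def Ok (t : ℝ) : Prop := 0 ≤ t ∧ ENNReal.ofReal t < M.βc

variable {M}

theorem Ok.of_le {s t : ℝ} (h : Ok M t) (h0 : 0 ≤ s) (hst : s ≤ t) : Ok M s :=
  ⟨h0, (ENNReal.ofReal_le_ofReal hst).trans_lt h.2⟩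

theorem gr_nonneg (t : ℝ) (x : Fin d → ℤ) : 0 ≤ gr M t x := ENNReal.toReal_nonneg

theorem G_ne_top {t : ℝ} (h : Ok M t) (x) : M.G t x ≠ ⊤ := by
  obtain ⟨C, _, c, _, hb⟩ := M.expDecay h.1 h.2
  exact ((hb x).trans_lt ENNReal.ofReal_lt_top).ne

theorem G_eq {t : ℝ} (h : Ok M t) (x) : M.G t x = ENNReal.ofReal (gr M t x) :=
  (ENNReal.ofReal_toReal (G_ne_top h x)).symm

theorem even_of_symm {α : Type*} {f : (Fin d → ℤ) → α} (h : IsSymmFun f) (x) : f (-x) = f x := by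
  have := h 1 (fun _ => true) x
  rw [← this]
  congr 1
  funext i
  simp

theorem momG {t : ℝ} (h : Ok M t) : Mom (gr M t) (X M t) (V M t) := by
  obtain ⟨C, hC, c, hc, hb⟩ := M.expDecay h.1 h.2
  refine Mom.of_exp _ (fun x => ?_) C c hc (gr_nonneg t) fun x => ?_
  · unfold gr; rw [even_of_symm (M.symm t)]
  · exact ENNReal.toReal_le_of_le_ofReal (by positivity) (hb x)

theorem momJ : Mom M.K.J 1 (S M) :=
  ⟨even_of_symm M.K.symm, M.K.norm_one ▸ M.K.summable.hasSum, M.K.summable_sq.hasSum⟩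

theorem momH {t : ℝ} (h : Ok M t) : Mom (M.H t) (∑' x, M.H t x) (∑' x, sqNorm x * M.H t x) := by
  obtain ⟨C, hC, c, hc, hb⟩ := M.H_expDecay h.1 h.2
  exact Mom.of_exp _ (M.H_symm t) C c hc (M.H_nonneg t) hb

theorem chi_eq {t : ℝ} (h : Ok M t) : M.chi t = ENNReal.ofReal (X M t) := by
  unfold X Model.chi
  rw [ENNReal.ofReal_tsum_of_nonneg (gr_nonneg t) (momG h).h0.summable]
  exact tsum_congr (G_eq h)

theorem gr_mono {s t : ℝ} (h : Ok M t) (h0 : 0 ≤ s) (hst : s ≤ t) (x) : gr M s x ≤ gr M t x :=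
  ENNReal.toReal_mono (G_ne_top h x) (M.mono x h0 hst h.2.le)

theorem X_mono {s t : ℝ} (h : Ok M t) (h0 : 0 ≤ s) (hst : s ≤ t) : X M s ≤ X M t :=
  hasSum_le (gr_mono h h0 hst) (momG (h.of_le h0 hst)).h0 (momG h).h0

theorem X_ge_one {t : ℝ} (h : Ok M t) : 1 ≤ X M t := by
  have h1 : gr M t 0 ≤ X M t := (momG h).h0.summable.le_tsum 0 (fun x _ => gr_nonneg t x)
  have h2 := gr_mono h le_rfl h.1 (0 : Fin d → ℤ)
  have h3 : gr M 0 0 = 1 := by simp [gr, M.init]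
  linarith

theorem V_nonneg (t : ℝ) : 0 ≤ V M t := tsum_nonneg fun x => mul_nonneg (sqNorm_nonneg x) (gr_nonneg t x)

theorem F_eq {t : ℝ} (h : Ok M t) (x) : M.F t x = ENNReal.ofReal (conv2 M.K.J (gr M t) x) := by
  unfold conv2 Model.F
  rw [ENNReal.ofReal_tsum_of_nonneg (fun y => mul_nonneg (M.K.nonneg y) (gr_nonneg _ _)) (conv2_fiber momJ (momG h) x)]
  refine tsum_congr fun y => ?_
  rw [G_eq h, ENNReal.ofReal_mul (M.K.nonneg y)]

theorem conv2_nonneg (t : ℝ) (x) : 0 ≤ conv2 M.K.J (gr M t) x :=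
  tsum_nonneg fun y => mul_nonneg (M.K.nonneg y) (gr_nonneg _ _)

theorem xiSq_eq {t : ℝ} (h : Ok M t) : M.xiSq t = ENNReal.ofReal ((S M * X M t + V M t) / X M t) := by
  have hs := conv2_h2 (momJ (M := M)) (momG h)
  unfold Model.xiSq
  rw [ENNReal.ofReal_div_of_pos (by linarith [X_ge_one h]), chi_eq h]
  congr 1
  rw [one_mul] at hs
  rw [← hs.tsum_eq, ENNReal.ofReal_tsum_of_nonneg (fun x => mul_nonneg (sqNorm_nonneg x) (conv2_nonneg t x)) hs.summable]
  refine tsum_congr fun x => ?_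
  rw [F_eq h, ENNReal.ofReal_mul (sqNorm_nonneg x)]

theorem S_pos (hc : 0 < c₀) : 0 < S M := by
  have h := M.K.sigma_lower
  have h1 : 0 < c₀ * M.K.R := mul_pos hc (by linarith [M.K.R_ge_one])
  exact Real.sqrt_pos.1 (h1.trans_le h)

theorem I1r {s t : ℝ} (h : Ok M t) (h0 : 0 ≤ s) (hst : s ≤ t) (x) :
    gr M t x ≤ gr M s x + (t - s) * conv3 (gr M s) M.K.J (gr M t) x := by
  have hs := h.of_le h0 hst
  have hn : ∀ p : (Fin d → ℤ) × (Fin d → ℤ), 0 ≤ gr M s p.1 * M.K.J p.2 * gr M t (x - p.1 - p.2) := fun p =>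
    mul_nonneg (mul_nonneg (gr_nonneg _ _) (M.K.nonneg _)) (gr_nonneg _ _)
  have h1 := M.I1 h0 hst h.2 x
  have h2 : (∑' p : (Fin d → ℤ) × (Fin d → ℤ),
        M.G s p.1 * ENNReal.ofReal (M.K.J p.2) * M.G t (x - p.1 - p.2)) =
        ENNReal.ofReal (conv3 (gr M s) M.K.J (gr M t) x) := by
    unfold conv3
    rw [ENNReal.ofReal_tsum_of_nonneg hn (conv3_fiber (momG hs) momJ (momG h) x)]
    refine tsum_congr fun p => ?_
    rw [G_eq h, G_eq hs, ENNReal.ofReal_mul (mul_nonneg (gr_nonneg _ _) (M.K.nonneg _)),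
      ENNReal.ofReal_mul (gr_nonneg _ _)]
  have h3 : 0 ≤ conv3 (gr M s) M.K.J (gr M t) x := tsum_nonneg hn
  rw [h2, G_eq h, G_eq hs, ← ENNReal.ofReal_mul (by linarith), ← ENNReal.ofReal_add (gr_nonneg _ _)
    (mul_nonneg (by linarith) h3)] at h1
  exact (ENNReal.ofReal_le_ofReal_iff (add_nonneg (gr_nonneg _ _)
    (mul_nonneg (by linarith) h3))).1 h1

theorem X_ineq {s t : ℝ} (h : Ok M t) (h0 : 0 ≤ s) (hst : s ≤ t) :
    X M t ≤ X M s + (t - s) * (X M s * X M t) := by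
  have hs := h.of_le h0 hst
  have := hasSum_le (I1r h h0 hst) (momG h).h0
    ((momG hs).h0.add ((conv3_h0 (momG hs) momJ (momG h)).mul_left (t - s)))
  simpa using this

theorem V_ineq {s t : ℝ} (h : Ok M t) (h0 : 0 ≤ s) (hst : s ≤ t) :
    V M t ≤ V M s + (t - s) * ((V M s + X M s * S M) * X M t + X M s * V M t) := by
  have hs := h.of_le h0 hst
  have h1 : ∀ x, sqNorm x * gr M t x ≤ sqNorm x * gr M s x +
      (t - s) * (sqNorm x * conv3 (gr M s) M.K.J (gr M t) x) := fun x => by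
    have := mul_le_mul_of_nonneg_left (I1r h h0 hst x) (sqNorm_nonneg x)
    linarith
  have := hasSum_le h1 (momG h).h2
    ((momG hs).h2.add ((conv3_h2 (momG hs) momJ (momG h)).mul_left (t - s)))
  simpa using this

/-- uniform bound -/
def T (M : Model d c₀) (b : ℝ) (x : Fin d → ℤ) : ℝ := conv3 (gr M b) M.K.J (gr M b) x

theorem incr_le {s t b : ℝ} (h : Ok M b) (h0 : 0 ≤ s) (hst : s ≤ t) (htb : t ≤ b) (x) :
    gr M t x - gr M s x ≤ (t - s) * T M b x := by
  have ht := h.of_le (h0.trans hst) htb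
  have hs := ht.of_le h0 hst
  have h1 := I1r ht h0 hst x
  have h2 : conv3 (gr M s) M.K.J (gr M t) x ≤ T M b x := by
    refine Summable.tsum_le_tsum (fun p => ?_) (conv3_fiber (momG hs) momJ (momG ht) x)
      (conv3_fiber (momG h) momJ (momG h) x)
    have a1 := gr_mono h h0 (hst.trans htb) p.1
    have a2 := gr_mono h (h0.trans hst) htb (x - p.1 - p.2)
    have a3 := M.K.nonneg p.2
    have a4 := gr_nonneg (M := M) s p.1
    have a5 := gr_nonneg (M := M) t (x - p.1 - p.2)
    gcongr
    exact mul_nonneg (a4.trans a1) a3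
  have h3 : (t - s) * conv3 (gr M s) M.K.J (gr M t) x ≤ (t - s) * T M b x :=
    mul_le_mul_of_nonneg_left h2 (by linarith)
  linarith

theorem gr_hasDerivAt {t : ℝ} (h : Ok M t) (h0 : 0 < t) (x) :
    HasDerivAt (fun s => gr M s x) (M.G' t x) t :=
  (M.deriv x h.1 h.2).hasDerivAt (Ici_mem_nhds h0)

theorem G'_le {t b : ℝ} (h : Ok M b) (h0 : 0 < t) (htb : t < b) (x) : M.G' t x ≤ T M b x :=
  deriv_le_of htb (gr_hasDerivAt (h.of_le h0.le htb.le) h0 x)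
    (fun _ hs hsb => incr_le h h0.le hs.le hsb.le x) tendsto_const_nhds

theorem G'_nonneg {t b : ℝ} (h : Ok M b) (h0 : 0 < t) (htb : t < b) (x) : 0 ≤ M.G' t x := by
  have h1 := gr_hasDerivAt (h.of_le h0.le htb.le) h0 x
  have := deriv_le_of (φ := fun _ => 0) (L := 0) htb h1.neg (fun s hs hsb => by
    have := gr_mono (h.of_le (h0.le.trans hs.le) hsb.le) h0.le hs.le x
    simp; linarith) tendsto_const_nhds
  linarith

theorem X_hasDerivAt {t b : ℝ} (h : Ok M b) (h0 : 0 < t) (htb : t < b) :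
    HasDerivAt (X M) (∑' x, M.G' t x) t := by
  refine hasDerivAt_tsum_of_isPreconnected (u := T M b) (t := Set.Ioo 0 b) (y₀ := t) (g := fun x s => gr M s x)
    (g' := fun x s => M.G' s x)
    (conv3_h0 (momG h) momJ (momG h)).summable isOpen_Ioo isPreconnected_Ioo
    (fun x y hy => gr_hasDerivAt (h.of_le hy.1.le hy.2.le) hy.1 x)
    (fun x y hy => ?_) ⟨h0, htb⟩ (momG (h.of_le h0.le htb.le)).h0.summable ⟨h0, htb⟩
  rw [Real.norm_of_nonneg (G'_nonneg h hy.1 hy.2 x)]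
  exact G'_le h hy.1 hy.2 x

theorem V_hasDerivAt {t b : ℝ} (h : Ok M b) (h0 : 0 < t) (htb : t < b) :
    HasDerivAt (V M) (∑' x, sqNorm x * M.G' t x) t := by
  refine hasDerivAt_tsum_of_isPreconnected (u := fun x => sqNorm x * T M b x) (t := Set.Ioo 0 b) (y₀ := t)
    (g := fun x s => sqNorm x * gr M s x) (g' := fun x s => sqNorm x * M.G' s x)
    (conv3_h2 (momG h) momJ (momG h)).summable isOpen_Ioo isPreconnected_Ioo
    (fun x y hy => (gr_hasDerivAt (h.of_le hy.1.le hy.2.le) hy.1 x).const_mul _)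
    (fun x y hy => ?_) ⟨h0, htb⟩ (momG (h.of_le h0.le htb.le)).h2.summable ⟨h0, htb⟩
  rw [Real.norm_of_nonneg (mul_nonneg (sqNorm_nonneg x) (G'_nonneg h hy.1 hy.2 x))]
  exact mul_le_mul_of_nonneg_left (G'_le h hy.1 hy.2 x) (sqNorm_nonneg x)

theorem gr_cont {b : ℝ} (h : Ok M b) (x) : ContinuousOn (fun s => gr M s x) (Set.Icc 0 b) := fun t ht =>
  ((M.deriv x ht.1 (h.of_le ht.1 ht.2).2).continuousWithinAt).mono Set.Icc_subset_Ici_self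

theorem X_cont {b : ℝ} (h : Ok M b) : ContinuousOn (X M) (Set.Icc 0 b) := by
  refine continuousOn_tsum (gr_cont h) (momG h).h0.summable fun x t ht => ?_
  rw [Real.norm_of_nonneg (gr_nonneg _ _)]
  exact gr_mono h ht.1 ht.2 x

theorem V_cont {b : ℝ} (h : Ok M b) : ContinuousOn (V M) (Set.Icc 0 b) := by
  refine continuousOn_tsum (fun x => continuousOn_const.mul (gr_cont h x)) (momG h).h2.summable fun x _ ht => ?_
  rw [Real.norm_of_nonneg (mul_nonneg (sqNorm_nonneg x) (gr_nonneg _ _))]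
  exact mul_le_mul_of_nonneg_left (gr_mono h ht.1 ht.2 x) (sqNorm_nonneg x)

theorem X'_le {t b : ℝ} (h : Ok M b) (h0 : 0 < t) (htb : t < b) :
    (∑' x, M.G' t x) ≤ X M t ^ 2 := by
  have hd := X_hasDerivAt h h0 htb
  have hc : Tendsto (X M) (𝓝[>] t) (𝓝 (X M t)) := hd.continuousAt.continuousWithinAt
  have := deriv_le_of htb hd (φ := fun s => X M t * X M s) (L := X M t * X M t) (fun s hs hsb => by
    have := X_ineq (h.of_le (h0.le.trans hs.le) hsb.le) h0.le hs.le
    linarith) (tendsto_const_nhds.mul hc)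
  linarith

theorem V'_le {t b : ℝ} (h : Ok M b) (h0 : 0 < t) (htb : t < b) :
    (∑' x, sqNorm x * M.G' t x) ≤ S M * X M t ^ 2 + 2 * X M t * V M t := by
  have hc : Tendsto (X M) (𝓝[>] t) (𝓝 (X M t)) := (X_hasDerivAt h h0 htb).continuousAt.continuousWithinAt
  have hd := V_hasDerivAt h h0 htb
  have hc' : Tendsto (V M) (𝓝[>] t) (𝓝 (V M t)) := hd.continuousAt.continuousWithinAt
  have := deriv_le_of htb hd (φ := fun s => (V M t + X M t * S M) * X M s + X M t * V M s)
    (fun s hs hsb => by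
    have := V_ineq (h.of_le (h0.le.trans hs.le) hsb.le) h0.le hs.le
    linarith) ((tendsto_const_nhds.mul hc).add (tendsto_const_nhds.mul hc'))
  linarith

theorem X'_ge {t b : ℝ} (h : Ok M b) (h0 : 0 < t) (htb : t < b) :
    X M t ^ 2 * (1 - ∑' x, M.H t x) ≤ (∑' x, M.G' t x) := by
  have ht := h.of_le h0.le htb.le
  have hs : Summable (M.G' t) := Summable.of_nonneg_of_le (G'_nonneg h h0 htb) (G'_le h h0 htb)
    (conv3_h0 (momG h) momJ (momG h)).summable
  have hI : ∀ x, conv3 (gr M t) (fun y => M.K.J y - M.H t y) (gr M t) x ≤ M.G' t x := fun x => by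
    unfold conv3 gr
    exact M.I2 ht.1 ht.2 x
  have hm := (momJ (M := M)).sub (momH ht)
  have := hasSum_le hI (conv3_h0 (momG ht) hm (momG ht)) hs.hasSum
  linarith

theorem V'_ge {t b : ℝ} (h : Ok M b) (h0 : 0 < t) (htb : t < b) :
    (S M - ∑' x, sqNorm x * M.H t x) * X M t ^ 2 + 2 * X M t * V M t * (1 - ∑' x, M.H t x) ≤
      (∑' x, sqNorm x * M.G' t x) := by
  have ht := h.of_le h0.le htb.le
  have hs : Summable (fun x => sqNorm x * M.G' t x) := Summable.of_nonneg_of_le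
    (fun x => mul_nonneg (sqNorm_nonneg x) (G'_nonneg h h0 htb x))
    (fun x => mul_le_mul_of_nonneg_left (G'_le h h0 htb x) (sqNorm_nonneg x))
    (conv3_h2 (momG h) momJ (momG h)).summable
  have hI : ∀ x, conv3 (gr M t) (fun y => M.K.J y - M.H t y) (gr M t) x ≤ M.G' t x := fun x => by
    unfold conv3 gr
    exact M.I2 ht.1 ht.2 x
  have hm := (momJ (M := M)).sub (momH ht)
  have := hasSum_le (fun x => mul_le_mul_of_nonneg_left (hI x) (sqNorm_nonneg x))
    (conv3_h2 (momG ht) hm (momG ht)) hs.hasSum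
  linarith

end
end S13
namespace S13
open Filter Topology

theorem anti_of {f : ℝ → ℝ} {f' : ℝ → ℝ} {a b : ℝ} (hab : a ≤ b) (hc : ContinuousOn f (Set.Icc a b))
    (hd : ∀ t ∈ Set.Ioo a b, HasDerivAt f (f' t) t) (hn : ∀ t ∈ Set.Ioo a b, f' t ≤ 0) : f b ≤ f a := by
  have : AntitoneOn f (Set.Icc a b) := by
    refine antitoneOn_of_deriv_nonpos (convex_Icc a b) hc ?_ ?_
    · rw [interior_Icc]
      exact fun t ht => (hd t ht).differentiableAt.differentiableWithinAt
    · rw [interior_Icc]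
      intro t ht
      rw [(hd t ht).deriv]
      exact hn t ht
  exact this ⟨le_rfl, hab⟩ ⟨hab, le_rfl⟩ hab

theorem analysis {x v x' v' h s : ℝ → ℝ} {a b σ e : ℝ} (hab : a ≤ b) (hσ : 0 < σ) (he : e < 1)
    (hx : ∀ t ∈ Set.Icc a b, 0 < x t) (hv : ∀ t, 0 ≤ v t)
    (hxc : ContinuousOn x (Set.Icc a b)) (hvc : ContinuousOn v (Set.Icc a b))
    (hxd : ∀ t ∈ Set.Ioo a b, HasDerivAt x (x' t) t) (hvd : ∀ t ∈ Set.Ioo a b, HasDerivAt v (v' t) t)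
    (hh : ∀ t, 0 ≤ h t) (hs : ∀ t, 0 ≤ s t)
    (hE : ∀ t ∈ Set.Icc a b, h t + s t / ((σ * x t + v t) / x t) ≤ e)
    (hx1 : ∀ t ∈ Set.Ioo a b, x' t ≤ x t ^ 2) (hx2 : ∀ t ∈ Set.Ioo a b, x t ^ 2 * (1 - h t) ≤ x' t)
    (hv1 : ∀ t ∈ Set.Ioo a b, v' t ≤ σ * x t ^ 2 + 2 * x t * v t)
    (hv2 : ∀ t ∈ Set.Ioo a b, (σ - s t) * x t ^ 2 + 2 * x t * v t * (1 - h t) ≤ v' t) :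
    (b - a) * (1 - e) ≤ (x a)⁻¹ - (x b)⁻¹ ∧
    Real.log (σ * x b + v b) - 2 / (1 - e) * Real.log (x b) ≤
      Real.log (σ * x a + v a) - 2 / (1 - e) * Real.log (x a) ∧
    (2 - 2 * e) * Real.log (x b) - Real.log (σ * x b + v b) ≤
      (2 - 2 * e) * Real.log (x a) - Real.log (σ * x a + v a) := by
  have hB : ∀ t ∈ Set.Icc a b, 0 < σ * x t + v t := fun t ht =>
    add_pos_of_pos_of_nonneg (mul_pos hσ (hx t ht)) (hv t)
  have hBc : ContinuousOn (fun t => σ * x t + v t) (Set.Icc a b) := (continuousOn_const.mul hxc).add hvc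
  have hlx : ContinuousOn (fun t => Real.log (x t)) (Set.Icc a b) := hxc.log fun t ht => (hx t ht).ne'
  have hlB : ContinuousOn (fun t => Real.log (σ * x t + v t)) (Set.Icc a b) :=
    hBc.log fun t ht => (hB t ht).ne'
  have hsub : ∀ t ∈ Set.Ioo a b, t ∈ Set.Icc a b := fun t ht => Set.Ioo_subset_Icc_self ht
  have hdx : ∀ t ∈ Set.Ioo a b, HasDerivAt (fun t => Real.log (x t)) (x' t / x t) t := fun t ht =>
    (hxd t ht).log (hx t (hsub t ht)).ne'
  have hdB : ∀ t ∈ Set.Ioo a b, HasDerivAt (fun t => Real.log (σ * x t + v t))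
      ((σ * x' t + v' t) / (σ * x t + v t)) t := fun t ht =>
    (((hxd t ht).const_mul σ).add (hvd t ht)).log (hB t (hsub t ht)).ne'
  have he1 : 0 < 1 - e := by linarith
  have hlow : ∀ t ∈ Set.Ioo a b, x t ^ 2 * (1 - e) ≤ x' t := fun t ht => by
    have ht' := hsub t ht
    have h1 := hE t ht'
    have h2 : 0 ≤ s t / ((σ * x t + v t) / x t) := div_nonneg (hs t) (div_nonneg (hB t ht').le (hx t ht').le)
    refine le_trans ?_ (hx2 t ht)
    exact mul_le_mul_of_nonneg_left (by linarith) (sq_nonneg _)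
  refine ⟨?_, ?_, ?_⟩
  · have := anti_of (f := fun t => (x t)⁻¹ + (1 - e) * t) (f' := fun t => -x' t / x t ^ 2 + (1 - e) * 1) hab
      ((hxc.inv₀ fun t ht => (hx t ht).ne').add (continuousOn_const.mul continuousOn_id))
      (fun t ht => ((hxd t ht).inv (hx t (hsub t ht)).ne').add ((hasDerivAt_id t).const_mul _))
      (fun t ht => by
        have hp := hx t (hsub t ht)
        have : (1 - e) ≤ x' t / x t ^ 2 := by
          rw [le_div_iff₀ (by positivity)]; linarith [hlow t ht]
        rw [neg_div]; linarith)
    linarith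
  · exact anti_of (f := fun t => Real.log (σ * x t + v t) - 2 / (1 - e) * Real.log (x t)) hab
      (hlB.sub (continuousOn_const.mul hlx))
      (fun t ht => (hdB t ht).sub ((hdx t ht).const_mul _))
      (fun t ht => by
        have hp := hx t (hsub t ht)
        have hBp := hB t (hsub t ht)
        have h1 : (σ * x' t + v' t) / (σ * x t + v t) ≤ 2 * x t := by
          rw [div_le_iff₀ hBp]
          have := hv1 t ht
          have := mul_le_mul_of_nonneg_left (hx1 t ht) hσ.le
          linarith
        have h2 : x t * (1 - e) ≤ x' t / x t := by
          rw [le_div_iff₀ hp]; linarith [hlow t ht]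
        have h3 : 2 / (1 - e) * (x t * (1 - e)) ≤ 2 / (1 - e) * (x' t / x t) :=
          mul_le_mul_of_nonneg_left h2 (by positivity)
        have h4 : 2 / (1 - e) * (x t * (1 - e)) = 2 * x t := by field_simp
        linarith)
  · exact anti_of (f := fun t => (2 - 2 * e) * Real.log (x t) - Real.log (σ * x t + v t)) hab
      ((continuousOn_const.mul hlx).sub hlB)
      (fun t ht => ((hdx t ht).const_mul _).sub (hdB t ht))
      (fun t ht => by
        have hp := hx t (hsub t ht)
        have hBp := hB t (hsub t ht)
        have h1 : x' t / x t ≤ x t := by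
          rw [div_le_iff₀ hp]; linarith [hx1 t ht]
        have h2 : (2 - 2 * e) * (x' t / x t) ≤ (2 - 2 * e) * x t :=
          mul_le_mul_of_nonneg_left h1 (by linarith)
        have h3 : (2 - 2 * e) * x t ≤ (σ * x' t + v' t) / (σ * x t + v t) := by
          rw [le_div_iff₀ hBp]
          have e1 := hE t (hsub t ht)
          have e0 : 0 ≤ s t / ((σ * x t + v t) / x t) :=
            div_nonneg (hs t) (div_nonneg hBp.le hp.le)
          have e2 : s t / ((σ * x t + v t) / x t) * ((σ * x t + v t) * x t) = s t * x t ^ 2 := by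
            field_simp
          set r := s t / ((σ * x t + v t) / x t)
          have e3 := hv2 t ht
          have e4 := mul_le_mul_of_nonneg_left (hx2 t ht) hσ.le
          have e5 : 0 ≤ (2 * e - 2 * h t - r) * ((σ * x t + v t) * x t) :=
            mul_nonneg (by linarith) (mul_pos hBp hp).le
          have e6 : 0 ≤ h t * (σ * x t ^ 2) := mul_nonneg (hh t) (by positivity)
          nlinarith
        linarith)
end S13
namespace S13
open Filter Topology
section
variable {d : ℕ} {c₀ : ℝ} {M : Model d c₀}

theorem E_le {β t : ℝ} (h : Ok M β) (hc : 0 < c₀) (hE : M.E β < 1) (h0 : 0 ≤ t) (ht : t ≤ β) :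
    (∑' x, M.H t x) + (∑' x, sqNorm x * M.H t x) / ((S M * X M t + V M t) / X M t) ≤ (M.E β).toReal := by
  have hok := h.of_le h0 ht
  have h1 : ENNReal.ofReal (∑' x, M.H t x) +
      ENNReal.ofReal (∑' x, sqNorm x * M.H t x) / M.xiSq t ≤ M.E β :=
    le_iSup₂ (f := fun t (_ : t ∈ Set.Icc (0 : ℝ) β) => ENNReal.ofReal (∑' x, M.H t x) +
      ENNReal.ofReal (∑' x, sqNorm x * M.H t x) / M.xiSq t) t ⟨h0, ht⟩
  have hX := X_ge_one hok
  have hp : 0 < (S M * X M t + V M t) / X M t :=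
    div_pos (add_pos_of_pos_of_nonneg (mul_pos (S_pos hc) (by linarith)) (V_nonneg t)) (by linarith)
  have hh : 0 ≤ ∑' x, M.H t x := tsum_nonneg (M.H_nonneg t)
  have hs : 0 ≤ ∑' x, sqNorm x * M.H t x := tsum_nonneg fun x => mul_nonneg (sqNorm_nonneg x) (M.H_nonneg t x)
  rw [xiSq_eq hok, ← ENNReal.ofReal_div_of_pos hp, ← ENNReal.ofReal_add hh (div_nonneg hs hp.le)] at h1
  exact (ENNReal.ofReal_le_iff_le_toReal (hE.trans ENNReal.one_lt_top).ne).1 h1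

theorem main (hc : 0 < c₀) {β' β : ℝ} (hβ'0 : 0 ≤ β') (hβ'β : β' ≤ β) (h : Ok M β) (hE : M.E β < 1) :
    (β - β') * (1 - (M.E β).toReal) ≤ (X M β')⁻¹ - (X M β)⁻¹ ∧
    (X M β' / X M β) ^ ((1 + (M.E β).toReal) / (1 - (M.E β).toReal)) ≤ (M.xi β' / M.xi β) ^ 2 ∧
    (M.xi β' / M.xi β) ^ 2 ≤ (X M β' / X M β) ^ ((1:ℝ) - 2 * (M.E β).toReal) ∧
    0 < M.xi β := by
  have h' := h.of_le hβ'0 hβ'β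
  have he : (M.E β).toReal < 1 := by
    have := (ENNReal.toReal_lt_toReal (hE.trans ENNReal.one_lt_top).ne ENNReal.one_ne_top).2 hE
    simpa using this
  have hsub : Set.Icc β' β ⊆ Set.Icc 0 β := Set.Icc_subset_Icc_left hβ'0
  have hEl := fun t (ht : t ∈ Set.Icc β' β) => E_le h hc hE (hsub ht).1 (hsub ht).2
  generalize (M.E β).toReal = e at he hEl ⊢
  have hpos : ∀ t ∈ Set.Icc β' β, 0 < X M t := fun t ht => by
    linarith [X_ge_one (h.of_le (hsub ht).1 (hsub ht).2)]
  have hio : ∀ t ∈ Set.Ioo β' β, 0 < t := fun t ht => hβ'0.trans_lt ht.1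
  obtain ⟨A1, A2, A3⟩ := analysis (x := X M) (v := V M) (x' := fun t => ∑' x, M.G' t x)
    (v' := fun t => ∑' x, sqNorm x * M.G' t x) (h := fun t => ∑' x, M.H t x)
    (s := fun t => ∑' x, sqNorm x * M.H t x) (σ := S M) hβ'β (S_pos hc) he
    hpos V_nonneg ((X_cont h).mono hsub) ((V_cont h).mono hsub)
    (fun t ht => X_hasDerivAt h (hio t ht) ht.2) (fun t ht => V_hasDerivAt h (hio t ht) ht.2)
    (fun t => tsum_nonneg (M.H_nonneg t))
    (fun t => tsum_nonneg fun x => mul_nonneg (sqNorm_nonneg x) (M.H_nonneg t x)) hEl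
    (fun t ht => X'_le h (hio t ht) ht.2) (fun t ht => X'_ge h (hio t ht) ht.2)
    (fun t ht => V'_le h (hio t ht) ht.2) (fun t ht => V'_ge h (hio t ht) ht.2)
  have x1 := hpos β' ⟨le_rfl, hβ'β⟩
  have x2 := hpos β ⟨hβ'β, le_rfl⟩
  have b1 : 0 < S M * X M β' + V M β' := add_pos_of_pos_of_nonneg (mul_pos (S_pos hc) x1) (V_nonneg _)
  have b2 : 0 < S M * X M β + V M β := add_pos_of_pos_of_nonneg (mul_pos (S_pos hc) x2) (V_nonneg _)
  have hxi : ∀ t, Ok M t → 0 < S M * X M t + V M t → 0 < X M t →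
      M.xi t = Real.sqrt ((S M * X M t + V M t) / X M t) := fun t ht hb hx => by
    unfold Model.xi
    rw [xiSq_eq ht, ENNReal.toReal_ofReal (div_pos hb hx).le]
  have r1 := hxi _ h' b1 x1
  have r2 := hxi _ h b2 x2
  have hR : (M.xi β' / M.xi β) ^ 2 = ((S M * X M β' + V M β') / X M β') / ((S M * X M β + V M β) / X M β) := by
    rw [r1, r2, div_pow, Real.sq_sqrt (div_pos b1 x1).le, Real.sq_sqrt (div_pos b2 x2).le]
  have hR0 : 0 < (M.xi β' / M.xi β) ^ 2 := by
    rw [hR]; exact div_pos (div_pos b1 x1) (div_pos b2 x2)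
  have hlR : Real.log ((M.xi β' / M.xi β) ^ 2) = Real.log (S M * X M β' + V M β') - Real.log (X M β') -
      (Real.log (S M * X M β + V M β) - Real.log (X M β)) := by
    rw [hR, Real.log_div (div_pos b1 x1).ne' (div_pos b2 x2).ne', Real.log_div b1.ne' x1.ne',
      Real.log_div b2.ne' x2.ne']
  have hQ : 0 < X M β' / X M β := div_pos x1 x2
  have hlQ : Real.log (X M β' / X M β) = Real.log (X M β') - Real.log (X M β) := Real.log_div x1.ne' x2.ne'
  refine ⟨A1, ?_, ?_, ?_⟩
  · rw [← Real.log_le_log_iff (Real.rpow_pos_of_pos hQ _) hR0, Real.log_rpow hQ, hlR, hlQ]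
    have : (1 + e) / (1 - e) = 2 / (1 - e) - 1 := by
      have : 1 - e ≠ 0 := by linarith
      field_simp; ring
    rw [this]
    linarith
  · rw [← Real.log_le_log_iff hR0 (Real.rpow_pos_of_pos hQ _), Real.log_rpow hQ, hlR, hlQ]
    linarith
  · rw [r2]; exact Real.sqrt_pos.2 (div_pos b2 x2)
end
end S13

/-- integrated differential inequalities (`prop: rough bounds chi xi`). -/
theorem statement13 (d : ℕ) (hd : 2 < d) (c₀ : ℝ) (hc₀ : c₀ ∈ Set.Ioc (0:ℝ) 1)
    (M : Model d c₀) (β' β : ℝ) (hβ'0 : 0 ≤ β') (hβ'β : β' ≤ β)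
    (hβ : ENNReal.ofReal β < M.βc) :
    (ENNReal.ofReal (β - β') * (1 - M.E β) ≤ (M.chi β')⁻¹ - (M.chi β)⁻¹ ∧
      (M.chi β')⁻¹ - (M.chi β)⁻¹ ≤ ENNReal.ofReal (β - β')) ∧
    (M.E β < 1 →
      (M.chi β' / M.chi β) ^ ((1 + (M.E β).toReal) / (1 - (M.E β).toReal)) ≤
          ENNReal.ofReal ((M.xi β' / M.xi β) ^ 2) ∧
        ENNReal.ofReal ((M.xi β' / M.xi β) ^ 2) ≤
          (M.chi β' / M.chi β) ^ ((1:ℝ) - 2 * (M.E β).toReal)) ∧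
    (M.E β ≤ 1/2 → M.xi β' ≤ M.xi β) := by
  have h : S13.Ok M β := ⟨hβ'0.trans hβ'β, hβ⟩
  have h' := h.of_le hβ'0 hβ'β
  have hx := S13.X_ge_one h
  have hx' := S13.X_ge_one h'
  have hmono := S13.X_mono h hβ'0 hβ'β
  have p : 0 < S13.X M β := by linarith
  have p' : 0 < S13.X M β' := by linarith
  have hQ : 0 < S13.X M β' / S13.X M β := div_pos p' p
  have hdiff : (M.chi β')⁻¹ - (M.chi β)⁻¹ = ENNReal.ofReal ((S13.X M β')⁻¹ - (S13.X M β)⁻¹) := by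
    rw [S13.chi_eq h, S13.chi_eq h', ← ENNReal.ofReal_inv_of_pos p, ← ENNReal.ofReal_inv_of_pos p',
      ENNReal.ofReal_sub _ (inv_nonneg.2 p.le)]
  have hquot : M.chi β' / M.chi β = ENNReal.ofReal (S13.X M β' / S13.X M β) := by
    rw [S13.chi_eq h, S13.chi_eq h', ENNReal.ofReal_div_of_pos p]
  refine ⟨⟨?_, ?_⟩, ?_, ?_⟩
  · rcases lt_or_ge (M.E β) 1 with hE | hE
    · obtain ⟨A, -⟩ := S13.main hc₀.1 hβ'0 hβ'β h hE
      have hne := (hE.trans ENNReal.one_lt_top).ne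
      rw [hdiff]
      have e1 : 1 - M.E β = ENNReal.ofReal (1 - (M.E β).toReal) := by
        rw [ENNReal.ofReal_sub _ ENNReal.toReal_nonneg, ENNReal.ofReal_toReal hne, ENNReal.ofReal_one]
      rw [e1, ← ENNReal.ofReal_mul (by linarith)]
      exact ENNReal.ofReal_le_ofReal A
    · rw [tsub_eq_zero_of_le hE, mul_zero]
      exact zero_le
  · rw [hdiff]
    refine ENNReal.ofReal_le_ofReal ?_
    have := S13.X_ineq h hβ'0 hβ'β
    rw [inv_sub_inv p'.ne' p.ne', div_le_iff₀ (mul_pos p' p)]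
    linarith
  · intro hE
    obtain ⟨-, A, B, -⟩ := S13.main hc₀.1 hβ'0 hβ'β h hE
    rw [hquot, ENNReal.ofReal_rpow_of_pos hQ, ENNReal.ofReal_rpow_of_pos hQ]
    exact ⟨ENNReal.ofReal_le_ofReal A, ENNReal.ofReal_le_ofReal B⟩
  · intro hE
    have hE1 : M.E β < 1 := hE.trans_lt (by
      rw [one_div]; exact ENNReal.one_half_lt_one)
    obtain ⟨-, -, B, C⟩ := S13.main hc₀.1 hβ'0 hβ'β h hE1
    have he : (M.E β).toReal ≤ 1 / 2 := by
      have := ENNReal.toReal_mono (by simp) hE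
      simpa using this
    have h1 : (S13.X M β' / S13.X M β) ^ ((1:ℝ) - 2 * (M.E β).toReal) ≤ 1 :=
      Real.rpow_le_one hQ.le ((div_le_one p).2 hmono) (by linarith)
    have h2 : M.xi β' / M.xi β ≤ 1 := by
      have := B.trans h1
      nlinarith
    exact (div_le_one C).1 h2
end
end
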